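/- Let d ≥ 1 and α > 0. Let θ = e^{-V} dx be a probability measure on ℝ^d where V is a smooth function with Hess V ≥ α Id everywhere (θ is uniformly log-concave), and assume θ is symmetric, i.e. invariant under the map x ↦ −x. Then for every symmetric probability measure μ on ℝ^d and every probability measure ν on ℝ^d (with finite second moments), W₂(μ, ν)² ≤ (2/α)(Ent_θ(μ) + Ent_θ(ν)). -/

import Mathlib

open MeasureTheory ENNReal
open scoped RealInnerProductSpace

/-- The standard Gaussian measure on `ℝ^d`, with density
`(2π)^{-d/2} exp(-|x|²/2)` with respect to Lebesgue measure. -/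
noncomputable def stdGaussian (d : ℕ) : Measure (EuclideanSpace ℝ (Fin d)) :=
  volume.withDensity fun x =>
    ENNReal.ofReal ((2 * Real.pi) ^ (-(d : ℝ) / 2) * Real.exp (-‖x‖ ^ 2 / 2))

/-- `π` is a coupling of `μ` and `ν`: a measure on the product with the given marginals. -/
def IsCoupling {E : Type*} [MeasurableSpace E] (π : Measure (E × E)) (μ ν : Measure E) : Prop :=
  π.map Prod.fst = μ ∧ π.map Prod.snd = ν

/-- The squared `L²` Kantorovich-Wasserstein distance `W₂(μ,ν)²`: the infimum of
`∫ |x-y|² dπ` over all couplings `π` of `μ` and `ν`. -/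
noncomputable def W2sq {E : Type*} [MeasurableSpace E] [NormedAddCommGroup E]
    (μ ν : Measure E) : ℝ≥0∞ :=
  ⨅ (π : Measure (E × E)) (_ : IsCoupling π μ ν), ∫⁻ p, (‖p.1 - p.2‖₊ : ℝ≥0∞) ^ 2 ∂π

open Classical in
/-- The relative entropy (KL divergence) `Ent_γ(μ) = ∫ log(dμ/dγ) dμ` if `μ ≪ γ` (and the
integral makes sense), and `+∞` otherwise. -/
noncomputable def relEnt {E : Type*} [MeasurableSpace E] (μ γ : Measure E) : ℝ≥0∞ :=
  if μ ≪ γ ∧ Integrable (fun x => Real.log (μ.rnDeriv γ x).toReal) μ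
  then ENNReal.ofReal (∫ x, Real.log (μ.rnDeriv γ x).toReal ∂μ)
  else ∞

namespace SymTalagrand

open Set Filter Topology

/-- Continuous, strictly positive functions with exponential decay. -/
structure PosExpDecay {E : Type*} [NormedAddCommGroup E] (f : E → ℝ) : Prop where
  cont : Continuous f
  pos : ∀ x, 0 < f x
  decay : ∃ C c : ℝ, 0 < c ∧ ∀ x, f x ≤ C * Real.exp (-c * ‖x‖)

section Basic

variable {E : Type*} [NormedAddCommGroup E]

lemma exp_neg_le_rpow {c : ℝ} (hc : 0 < c) (k N : ℕ) :
    ∃ C : ℝ, ∀ r : ℝ, 0 ≤ r → r ^ k * Real.exp (-c * r) ≤ C * (1 + r) ^ (-(N : ℝ)) := by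
  refine ⟨(k + N).factorial / c ^ (k + N) * Real.exp c, fun r hr => ?_⟩
  have h1 : (c * (1 + r)) ^ (k + N) / (k + N).factorial ≤ Real.exp (c * (1 + r)) :=
    Real.pow_div_factorial_le_exp _ (by positivity) _
  have h2 : r ^ k ≤ (1 + r) ^ k := by gcongr; linarith
  have h3 : Real.exp (-c * r) = Real.exp c * (Real.exp (c * (1 + r)))⁻¹ := by
    rw [← Real.exp_neg, ← Real.exp_add]; ring_nf
  have hfac : (0 : ℝ) < (k + N).factorial := by positivity
  have h4 : (Real.exp (c * (1 + r)))⁻¹ ≤ (k + N).factorial / (c * (1 + r)) ^ (k + N) := by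
    rw [← inv_div]
    gcongr
  rw [Real.rpow_neg (by positivity), Real.rpow_natCast, h3]
  calc r ^ k * (Real.exp c * (Real.exp (c * (1 + r)))⁻¹)
      ≤ (1 + r) ^ k * (Real.exp c * ((k + N).factorial / (c * (1 + r)) ^ (k + N))) := by gcongr
    _ = _ := by
      have : (1 + r) ≠ 0 := by positivity
      field_simp
      rw [mul_pow, pow_add (1 + r)]
      ring

variable [NormedSpace ℝ E] [FiniteDimensional ℝ E] [MeasurableSpace E] [BorelSpace E]

lemma integrable_pow_mul_exp_neg (μ : Measure E) [μ.IsAddHaarMeasure] {c : ℝ} (hc : 0 < c)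
    (k : ℕ) : Integrable (fun x : E => ‖x‖ ^ k * Real.exp (-c * ‖x‖)) μ := by
  obtain ⟨C, hC⟩ := exp_neg_le_rpow hc k (Module.finrank ℝ E + 1)
  refine Integrable.mono' ((integrable_one_add_norm (μ := μ)
    (r := ((Module.finrank ℝ E + 1 : ℕ) : ℝ)) (by push_cast; linarith)).const_mul C)
    (by fun_prop) (ae_of_all _ fun x => ?_)
  rw [Real.norm_of_nonneg (by positivity)]
  exact hC _ (norm_nonneg x)

lemma integrable_exp_neg_norm (μ : Measure E) [μ.IsAddHaarMeasure] {c : ℝ} (hc : 0 < c) :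
    Integrable (fun x : E => Real.exp (-c * ‖x‖)) μ := by
  simpa using integrable_pow_mul_exp_neg μ hc 0

end Basic

namespace PosExpDecay

variable {E : Type*} [NormedAddCommGroup E] {f : E → ℝ}

lemma exists_bound (hf : PosExpDecay f) :
    ∃ C c : ℝ, 0 < C ∧ 0 < c ∧ ∀ x, f x ≤ C * Real.exp (-c * ‖x‖) := by
  obtain ⟨C, c, hc, h⟩ := hf.decay
  refine ⟨C, c, ?_, hc, h⟩
  have := (hf.pos 0).trans_le (h 0)
  exact pos_of_mul_pos_left this (Real.exp_nonneg _)

lemma comp {F : Type*} [NormedAddCommGroup F] (hf : PosExpDecay f) {φ : F → E}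
    (hφ : Continuous φ) {K K' : ℝ} (hK : 0 < K) (h : ∀ z, ‖z‖ ≤ K * ‖φ z‖ + K') :
    PosExpDecay (fun z => f (φ z)) := by
  obtain ⟨C, c, hC, hc, hb⟩ := hf.exists_bound
  refine ⟨hf.cont.comp hφ, fun z => hf.pos _, C * Real.exp (c * K' / K), c / K, by positivity,
    fun z => (hb _).trans ?_⟩
  rw [mul_assoc, ← Real.exp_add]
  gcongr
  have h1 := h z
  have : c * K' / K + -(c / K) * ‖z‖ = c / K * (K' - ‖z‖) := by ring
  rw [this]
  have h2 : c / K * (K' - ‖z‖) ≥ c / K * (-(K * ‖φ z‖)) := by gcongr; linarith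
  have h3 : c / K * (-(K * ‖φ z‖)) = -c * ‖φ z‖ := by field_simp
  linarith

variable [NormedSpace ℝ E] [FiniteDimensional ℝ E] [MeasurableSpace E] [BorelSpace E]

lemma integrable_pow_mul (hf : PosExpDecay f) (μ : Measure E) [μ.IsAddHaarMeasure] (k : ℕ) :
    Integrable (fun x => ‖x‖ ^ k * f x) μ := by
  obtain ⟨C, c, hC, hc, hb⟩ := hf.exists_bound
  have hm := hf.cont.measurable
  refine Integrable.mono' ((integrable_pow_mul_exp_neg μ hc k).const_mul C)
    (by fun_prop) (ae_of_all _ fun x => ?_)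
  rw [Real.norm_of_nonneg (mul_nonneg (by positivity) (hf.pos x).le)]
  calc ‖x‖ ^ k * f x ≤ ‖x‖ ^ k * (C * Real.exp (-c * ‖x‖)) := by gcongr; exact hb x
    _ = _ := by ring

lemma integrable (hf : PosExpDecay f) (μ : Measure E) [μ.IsAddHaarMeasure] :
    Integrable f μ := by
  simpa using hf.integrable_pow_mul μ 0

lemma integrable_mul_of_le (hf : PosExpDecay f) (μ : Measure E) [μ.IsAddHaarMeasure]
    {u : E → ℝ} (hu : Measurable u) {C : ℝ} (h : ∀ x, |u x| ≤ C * (1 + ‖x‖ ^ 2)) :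
    Integrable (fun x => u x * f x) μ := by
  have hm := hf.cont.measurable
  refine Integrable.mono' (((hf.integrable μ).add (hf.integrable_pow_mul μ 2)).const_mul C)
    (by fun_prop) (ae_of_all _ fun x => ?_)
  rw [norm_mul, Real.norm_eq_abs, Real.norm_of_nonneg (hf.pos x).le]
  have := mul_le_mul_of_nonneg_right (h x) (hf.pos x).le
  simp only [Pi.add_apply]
  linarith

lemma integrable_mul_log (hf : PosExpDecay f) (μ : Measure E) [μ.IsAddHaarMeasure] :
    Integrable (fun x => f x * Real.log (f x)) μ := by
  obtain ⟨C, c, hC, hc, hb⟩ := hf.exists_bound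
  have hm := hf.cont.measurable
  have h1 := (integrable_exp_neg_norm μ (c := c / 2) (by positivity)).const_mul (2 * √C)
  refine Integrable.mono' (h1.add ((hf.integrable μ).const_mul C))
    (by fun_prop) (ae_of_all _ fun x => ?_)
  have hx := hf.pos x
  have hC1 : f x ≤ C := (hb x).trans (by
    have : Real.exp (-c * ‖x‖) ≤ 1 := Real.exp_le_one_iff.2 (by nlinarith [norm_nonneg x])
    nlinarith)
  have hs : √(f x) ≤ √C * Real.exp (-(c / 2) * ‖x‖) := by
    rw [Real.sqrt_le_left (by positivity), mul_pow, Real.sq_sqrt hC.le, ← Real.exp_nat_mul]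
    convert hb x using 3
    push_cast; ring
  have hl1 : Real.log (f x) ≤ f x - 1 := Real.log_le_sub_one_of_pos hx
  have hsp : 0 < √(f x) := Real.sqrt_pos.2 hx
  have hl2 : -Real.log (f x) ≤ 2 * ((√(f x))⁻¹ - 1) := by
    have := Real.log_le_sub_one_of_pos (inv_pos.2 hsp)
    rw [Real.log_inv, Real.log_sqrt hx.le] at this
    linarith
  have hl3 : f x * -Real.log (f x) ≤ 2 * √(f x) := by
    have h5 : f x * (√(f x))⁻¹ = √(f x) := by
      nth_rewrite 1 [← Real.mul_self_sqrt hx.le]; field_simp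
    have := mul_le_mul_of_nonneg_left hl2 hx.le
    nlinarith
  simp only [Pi.add_apply]
  rw [Real.norm_eq_abs, abs_le]
  have hne : 0 < Real.exp (-(c / 2) * ‖x‖) := Real.exp_pos _
  constructor
  · nlinarith
  · have := mul_le_mul_of_nonneg_left hl1 hx.le
    have h0 : 0 ≤ √C := Real.sqrt_nonneg _
    nlinarith [mul_nonneg h0 hne.le]

lemma integral_pos (hf : PosExpDecay f) (μ : Measure E) [μ.IsAddHaarMeasure] {S : Set E}
    (hS0 : μ S ≠ 0) : 0 < ∫ x in S, f x ∂μ := by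
  refine (setIntegral_pos_iff_support_of_nonneg_ae (ae_of_all _ fun x => (hf.pos x).le)
    (hf.integrable μ).integrableOn).2 ?_
  have : Function.support f = univ := by
    ext x; simp [(hf.pos x).ne']
  rw [this, univ_inter]
  exact pos_iff_ne_zero.2 hS0

end PosExpDecay

/-- Marginals of positive exponentially decaying functions are of the same kind. -/
lemma PosExpDecay.marginal {E F : Type*} [NormedAddCommGroup E] [NormedAddCommGroup F]
    [NormedSpace ℝ F] [FiniteDimensional ℝ F] [MeasurableSpace F] [BorelSpace F]
    {f : F × E → ℝ} (hf : PosExpDecay f) (μ : Measure F) [μ.IsAddHaarMeasure]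
    {S : Set F} (hS0 : μ S ≠ 0) :
    PosExpDecay (fun x => ∫ t in S, f (t, x) ∂μ) := by
  obtain ⟨C, c, hC, hc, hb⟩ := hf.exists_bound
  have hfib : ∀ x, PosExpDecay (fun t => f (t, x)) := fun x =>
    hf.comp (φ := fun t => (t, x)) (by fun_prop) one_pos (K' := 0) (fun z => by
      simp [Prod.norm_def])
  have hle : ∀ t x, f (t, x) ≤ C * (Real.exp (-(c / 2) * ‖t‖) * Real.exp (-(c / 2) * ‖x‖)) := by
    intro t x
    refine (hb _).trans ?_
    rw [← Real.exp_add]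
    gcongr
    have h1 : ‖t‖ ≤ ‖(t, x)‖ := norm_fst_le (t, x)
    have h2 : ‖x‖ ≤ ‖(t, x)‖ := norm_snd_le (t, x)
    nlinarith
  have hintg := (integrable_exp_neg_norm μ (c := c / 2) (by positivity)).integrableOn (s := S)
  refine ⟨?_, fun x => (hfib x).integral_pos μ hS0,
    C * ∫ t in S, Real.exp (-(c / 2) * ‖t‖) ∂μ, c / 2, by positivity, fun x => ?_⟩
  · refine continuous_of_dominated (bound := fun t => C * Real.exp (-(c / 2) * ‖t‖))
      (fun x => ((hfib x).cont.measurable).aestronglyMeasurable) (fun x => ae_of_all _ fun t => ?_)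
      (hintg.const_mul C) (ae_of_all _ fun t => hf.cont.comp (by fun_prop))
    rw [Real.norm_of_nonneg (hf.pos _).le]
    refine (hle t x).trans ?_
    gcongr
    have : Real.exp (-(c / 2) * ‖x‖) ≤ 1 := Real.exp_le_one_iff.2 (by nlinarith [norm_nonneg x])
    nlinarith [Real.exp_pos (-(c / 2) * ‖t‖)]
  · have := setIntegral_mono (s := S) ((hfib x).integrable μ).integrableOn
      ((hintg.mul_const (Real.exp (-(c / 2) * ‖x‖))).const_mul C) (fun t => hle t x)
    refine this.trans_eq ?_
    rw [integral_const_mul, integral_mul_const, mul_assoc]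

section Transport

variable {I : Set ℝ} {φ χ : ℝ → ℝ}

lemma setIntegral_inter_Iic_eq (hI : IsOpen I) (hφi : Integrable φ) (t : ℝ) :
    ∫ s in I ∩ Iic t, φ s
      = (∫ s in Iic 0, I.indicator φ s) + ∫ s in (0 : ℝ)..t, I.indicator φ s := by
  have hintg := hφi.indicator hI.measurableSet
  rw [← intervalIntegral.integral_Iic_sub_Iic hintg.integrableOn hintg.integrableOn,
    add_sub_cancel, setIntegral_indicator hI.measurableSet, inter_comm]

lemma continuous_setIntegral_inter_Iic (hI : IsOpen I) (hφi : Integrable φ) :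
    Continuous fun t => ∫ s in I ∩ Iic t, φ s := by
  simp_rw [setIntegral_inter_Iic_eq hI hφi]
  exact continuous_const.add ((hφi.indicator hI.measurableSet).continuous_primitive 0)

lemma hasDerivAt_setIntegral_inter_Iic (hI : IsOpen I) (hφ : Continuous φ) (hφi : Integrable φ)
    {t : ℝ} (ht : t ∈ I) : HasDerivAt (fun t => ∫ s in I ∩ Iic t, φ s) (φ t) t := by
  simp_rw [setIntegral_inter_Iic_eq hI hφi]
  have hintg := hφi.indicator hI.measurableSet
  have hev : I.indicator φ =ᶠ[𝓝 t] φ := by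
    filter_upwards [hI.mem_nhds ht] with s hs using indicator_of_mem hs φ
  have := (intervalIntegral.integral_hasDerivAt_right (a := 0) (b := t)
    hintg.intervalIntegrable (hintg.aestronglyMeasurable.stronglyMeasurableAtFilter)
    (hφ.continuousAt.congr hev.symm)).const_add (∫ s in Iic 0, I.indicator φ s)
  rwa [indicator_of_mem ht] at this

lemma strictMonoOn_setIntegral_inter_Iic (hI : IsOpen I) (hφ : ∀ s, 0 < φ s)
    (hφi : Integrable φ) : StrictMonoOn (fun t => ∫ s in I ∩ Iic t, φ s) I := by
  intro a ha b hb hab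
  simp only
  have hsub : I ∩ Iic a ⊆ I ∩ Iic b := inter_subset_inter_right _ (Iic_subset_Iic.2 hab.le)
  have hdiff : 0 < ∫ s in (I ∩ Iic b) \ (I ∩ Iic a), φ s := by
    refine (setIntegral_pos_iff_support_of_nonneg_ae (ae_of_all _ fun x => (hφ x).le)
      hφi.integrableOn).2 ?_
    have : Function.support φ = univ := by
      ext x; simp [(hφ x).ne']
    rw [this, univ_inter]
    have hU : IsOpen (I ∩ Ioo a b) := hI.inter isOpen_Ioo
    have hne : (I ∩ Ioo a b).Nonempty := by
      have h1 : I ∈ 𝓝[<] b := mem_nhdsWithin_of_mem_nhds (hI.mem_nhds hb)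
      have h2 : Ioo a b ∈ 𝓝[<] b := Ioo_mem_nhdsLT hab
      exact Filter.nonempty_of_mem (inter_mem h1 h2)
    refine (hU.measure_pos volume hne).trans_le (measure_mono ?_)
    rintro x ⟨hx, hxa, hxb⟩
    exact ⟨⟨hx, hxb.le⟩, fun h => absurd h.2 (not_le.2 hxa)⟩
  rw [setIntegral_sdiff (hI.measurableSet.inter measurableSet_Iic) hφi.integrableOn hsub] at hdiff
  linarith

lemma exists_setIntegral_inter_Iic_eq (hI : IsOpen I) (hIc : I.OrdConnected)
    (hφi : Integrable φ) {u : ℝ} (hu0 : 0 < u) (hu1 : u < ∫ s in I, φ s) :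
    ∃ t ∈ I, ∫ s in I ∩ Iic t, φ s = u := by
  have hintg := hφi.indicator hI.measurableSet
  have heq : ∀ t, ∫ s in I ∩ Iic t, φ s = ∫ s in Iic t, I.indicator φ s := fun t => by
    rw [setIntegral_indicator hI.measurableSet, inter_comm]
  have hbot : Tendsto (fun t => ∫ s in I ∩ Iic t, φ s) atBot (𝓝 0) := by
    simp_rw [heq]
    exact tendsto_integral_Iic_zero tendsto_id
  have htop : Tendsto (fun t => ∫ s in I ∩ Iic t, φ s) atTop (𝓝 (∫ s in I, φ s)) := by
    simp_rw [heq, ← integral_indicator hI.measurableSet]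
    exact (aecover_Iic tendsto_id).integral_tendsto_of_countably_generated hintg
  obtain ⟨a, ha⟩ := (hbot.eventually_lt_const hu0).exists
  obtain ⟨b, hb⟩ := (htop.eventually_const_lt hu1).exists
  obtain ⟨t, -, ht⟩ := isPreconnected_univ.intermediate_value (mem_univ a) (mem_univ b)
    (continuous_setIntegral_inter_Iic hI hφi).continuousOn ⟨ha.le, hb.le⟩
  refine ⟨t, ?_, ht⟩
  by_contra htI
  by_cases hl : ∃ s ∈ I, s < t
  · obtain ⟨s, hs, hst⟩ := hl
    have : I ∩ Iic t = I := by
      refine inter_eq_left.2 fun r hr => ?_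
      by_contra hrt
      exact htI (hIc.out hs hr ⟨hst.le, (not_le.1 hrt).le⟩)
    simp only [this] at ht
    exact hu1.ne ht.symm
  · push Not at hl
    have : I ∩ Iic t = ∅ := by
      refine eq_empty_of_forall_notMem fun r hr => ?_
      have := le_antisymm hr.2 (hl r hr.1)
      exact htI (this ▸ hr.1)
    simp only [this, setIntegral_empty] at ht
    exact hu0.ne ht

lemma setIntegral_inter_Iic_mem_Ioo (hI : IsOpen I) (hφ : ∀ s, 0 < φ s)
    (hφi : Integrable φ) {t : ℝ} (ht : t ∈ I) :
    (∫ s in I ∩ Iic t, φ s) ∈ Ioo 0 (∫ s in I, φ s) := by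
  obtain ⟨ε, hε, hball⟩ := Metric.isOpen_iff.1 hI t ht
  have h1 : t - ε / 2 ∈ I := hball (by simp [abs_of_pos hε, hε])
  have h2 : t + ε / 2 ∈ I := hball (by simp [abs_of_pos hε, hε])
  have m1 := strictMonoOn_setIntegral_inter_Iic hI hφ hφi h1 ht (by linarith)
  have m2 := strictMonoOn_setIntegral_inter_Iic hI hφ hφi ht h2 (by linarith)
  refine ⟨lt_of_le_of_lt ?_ m1, m2.trans_le ?_⟩
  · exact integral_nonneg fun s => (hφ s).le
  · exact setIntegral_mono_set hφi.integrableOn (ae_of_all _ fun s => (hφ s).le)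
      (ae_of_all _ fun s hs => hs.1)

/-- Monotone transport on an open interval between two positive continuous densities of the
same mass. -/
lemma exists_monotone_transport (hI : IsOpen I) (hIc : I.OrdConnected)
    (hφ : Continuous φ) (hφ0 : ∀ s, 0 < φ s) (hφi : Integrable φ)
    (hχ : Continuous χ) (hχ0 : ∀ s, 0 < χ s) (hχi : Integrable χ)
    (hmass : ∫ s in I, φ s = ∫ s in I, χ s) :
    ∃ T : ℝ → ℝ, (∀ t ∈ I, T t ∈ I) ∧ SurjOn T I I ∧ StrictMonoOn T I ∧
      (∀ t ∈ I, HasDerivAt T (φ t / χ (T t)) t) ∧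
      ∀ t ∈ I, ∀ r ∈ I, T t ≤ r ↔ ∫ s in I ∩ Iic t, φ s ≤ ∫ s in I ∩ Iic r, χ s := by
  set m := ∫ s in I, χ s with hm
  set F := fun t => ∫ s in I ∩ Iic t, φ s with hF
  set G := fun t => ∫ s in I ∩ Iic t, χ s with hG
  have hGm : StrictMonoOn G I := strictMonoOn_setIntegral_inter_Iic hI hχ0 hχi
  have hFm : StrictMonoOn F I := strictMonoOn_setIntegral_inter_Iic hI hφ0 hφi
  have hFI : ∀ t ∈ I, F t ∈ Ioo 0 m := fun t ht => by
    have := setIntegral_inter_Iic_mem_Ioo hI hφ0 hφi ht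
    rwa [hmass] at this
  have hGI : ∀ t ∈ I, G t ∈ Ioo 0 m := fun t ht => setIntegral_inter_Iic_mem_Ioo hI hχ0 hχi ht
  have hex : ∀ u, ∃ t, u ∈ Ioo 0 m → t ∈ I ∧ G t = u := fun u => by
    by_cases hu : u ∈ Ioo 0 m
    · obtain ⟨t, ht, h⟩ := exists_setIntegral_inter_Iic_eq hI hIc hχi hu.1 hu.2
      exact ⟨t, fun _ => ⟨ht, h⟩⟩
    · exact ⟨0, fun h => absurd h hu⟩
  choose Q hQ using hex
  have hQI : ∀ u ∈ Ioo 0 m, Q u ∈ I := fun u hu => (hQ u hu).1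
  have hGQ : ∀ u ∈ Ioo 0 m, G (Q u) = u := fun u hu => (hQ u hu).2
  have hQG : ∀ t ∈ I, Q (G t) = t := fun t ht =>
    hGm.injOn (hQI _ (hGI t ht)) ht (hGQ _ (hGI t ht))
  have hQm : StrictMonoOn Q (Ioo 0 m) := by
    intro u hu v hv huv
    rw [← hGm.lt_iff_lt (hQI u hu) (hQI v hv), hGQ u hu, hGQ v hv]
    exact huv
  have hQimg : Q '' Ioo 0 m = I := by
    ext t
    constructor
    · rintro ⟨u, hu, rfl⟩
      exact hQI u hu
    · intro ht
      exact ⟨G t, hGI t ht, hQG t ht⟩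
  have hQc : ∀ u ∈ Ioo 0 m, ContinuousAt Q u := fun u hu =>
    hQm.continuousAt_of_image_mem_nhds (Ioo_mem_nhds hu.1 hu.2)
      (by rw [hQimg]; exact hI.mem_nhds (hQI u hu))
  have hQd : ∀ u ∈ Ioo 0 m, HasDerivAt Q (χ (Q u))⁻¹ u := fun u hu =>
    HasDerivAt.of_local_left_inverse (hQc u hu)
      (hasDerivAt_setIntegral_inter_Iic hI hχ hχi (hQI u hu)) (hχ0 _).ne'
      (by filter_upwards [Ioo_mem_nhds hu.1 hu.2] with v hv using hGQ v hv)
  refine ⟨fun t => Q (F t), fun t ht => hQI _ (hFI t ht), ?_, ?_, ?_, ?_⟩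
  · intro r hr
    have hr' : G r ∈ Ioo 0 (∫ s in I, φ s) := by rw [hmass]; exact hGI r hr
    obtain ⟨t, ht, h⟩ := exists_setIntegral_inter_Iic_eq hI hIc hφi hr'.1 hr'.2
    exact ⟨t, ht, by simp only [hF, h, hQG r hr]⟩
  · intro a ha b hb hab
    exact hQm (hFI a ha) (hFI b hb) (hFm ha hb hab)
  · intro t ht
    have := (hQd _ (hFI t ht)).comp t (hasDerivAt_setIntegral_inter_Iic hI hφ hφi ht)
    rw [div_eq_inv_mul]
    exact this
  · intro t ht r hr
    rw [← hGm.le_iff_le (hQI _ (hFI t ht)) hr, hGQ _ (hFI t ht)]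

end Transport

section PrekopaLeindler

lemma prekopa_leindler_real {u v w : ℝ → ℝ} (hu : PosExpDecay u) (hv : PosExpDecay v)
    (hw : PosExpDecay w) {a b : ℝ} (ha : 0 < a) (hb : 0 < b) (hab : a + b = 1)
    (h : ∀ x y, u x ^ a * v y ^ b ≤ w (a * x + b * y)) :
    (∫ x, u x) ^ a * (∫ x, v x) ^ b ≤ ∫ x, w x := by
  have hu1 := hu.integrable volume
  have hv1 := hv.integrable volume
  have hw1 := hw.integrable volume
  have hU : 0 < ∫ x, u x := by simpa using hu.integral_pos volume (S := univ) (by simp)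
  have hV : 0 < ∫ x, v x := by simpa using hv.integral_pos volume (S := univ) (by simp)
  set U := ∫ x, u x with hUdef
  set V := ∫ x, v x with hVdef
  obtain ⟨T, -, -, hTm, hTd, -⟩ := exists_monotone_transport (I := univ)
    (φ := fun x => u x / U) (χ := fun x => v x / V) isOpen_univ ordConnected_univ
    (hu.cont.div_const _) (fun s => div_pos (hu.pos s) hU) (hu1.div_const _)
    (hv.cont.div_const _) (fun s => div_pos (hv.pos s) hV) (hv1.div_const _)
    (by simp only [Measure.restrict_univ, integral_div, ← hUdef, ← hVdef,
          div_self hU.ne', div_self hV.ne'])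
  set T' := fun t => (u t / U) / (v (T t) / V) with hT'
  have hT'pos : ∀ t, 0 < T' t := fun t =>
    div_pos (div_pos (hu.pos t) hU) (div_pos (hv.pos _) hV)
  have hSd : ∀ t ∈ univ, HasDerivWithinAt (fun x => a * x + b * T x) (a + b * T' t) univ t := by
    intro t ht
    have h1 := ((hasDerivAt_id' t).const_mul a).fun_add ((hTd t ht).const_mul b)
    rw [mul_one] at h1
    exact h1.hasDerivWithinAt
  have hSinj : InjOn (fun x => a * x + b * T x) univ := by
    refine StrictMonoOn.injOn fun x hx y hy hxy => ?_
    have := hTm hx hy hxy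
    change a * x + b * T x < a * y + b * T y
    gcongr
  have himg := integral_image_eq_integral_abs_deriv_smul MeasurableSet.univ hSd hSinj w
  have hInt := (integrableOn_image_iff_integrableOn_abs_deriv_smul MeasurableSet.univ hSd
    hSinj w).1 hw1.integrableOn
  have hle : (∫ x in (fun x => a * x + b * T x) '' univ, w x) ≤ ∫ x, w x :=
    setIntegral_le_integral hw1 (ae_of_all _ fun x => (hw.pos x).le)
  refine le_trans ?_ hle
  rw [himg]
  have hpt : ∀ x, u x * (V / U) ^ b ≤ |a + b * T' x| • w (a * x + b * T x) := by
    intro x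
    have hux := hu.pos x
    have hvx := hv.pos (T x)
    have htx := hT'pos x
    have h1 : T' x ^ b ≤ a + b * T' x := by
      have := Real.geom_mean_le_arith_mean2_weighted ha.le hb.le zero_le_one htx.le hab
      simpa using this
    have h2 := h x (T x)
    have h3 : u x * (V / U) ^ b = T' x ^ b * (u x ^ a * v (T x) ^ b) := by
      have e1 : T' x * v (T x) = u x * (V / U) := by
        simp only [hT']; field_simp
      calc u x * (V / U) ^ b = u x ^ (a + b) * (V / U) ^ b := by rw [hab, Real.rpow_one]
        _ = u x ^ a * (u x * (V / U)) ^ b := by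
          rw [Real.rpow_add hux, Real.mul_rpow hux.le (by positivity)]; ring
        _ = _ := by rw [← e1, Real.mul_rpow htx.le hvx.le]; ring
    rw [h3, abs_of_pos (by positivity), smul_eq_mul]
    have := Real.rpow_nonneg hux.le a
    have := Real.rpow_nonneg hvx.le b
    gcongr
  have hfin : U ^ a * V ^ b = ∫ x in univ, u x * (V / U) ^ b := by
    rw [Measure.restrict_univ, integral_mul_const, ← hUdef, Real.div_rpow hV.le hU.le]
    have : U = U ^ a * U ^ b := by rw [← Real.rpow_add hU, hab, Real.rpow_one]
    have hb' : U ^ b ≠ 0 := (Real.rpow_pos_of_pos hU b).ne'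
    field_simp
    rw [← this]
  rw [hfin]
  exact setIntegral_mono (hu1.mul_const _).integrableOn hInt hpt

/-- Splitting off the first coordinate preserves Lebesgue measure. -/
lemma measurePreserving_finCons (n : ℕ) :
    MeasurePreserving (fun p : ℝ × (Fin n → ℝ) => (Fin.cons p.1 p.2 : Fin (n + 1) → ℝ)) := by
  have := (volume_preserving_piFinSuccAbove (fun _ : Fin (n + 1) => ℝ) 0).symm
  convert this using 1
  ext p i
  simp [MeasurableEquiv.piFinSuccAbove, Fin.insertNthEquiv]

lemma measurableEmbedding_finCons (n : ℕ) :
    MeasurableEmbedding (fun p : ℝ × (Fin n → ℝ) => (Fin.cons p.1 p.2 : Fin (n + 1) → ℝ)) := by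
  have := (MeasurableEquiv.piFinSuccAbove (fun _ : Fin (n + 1) => ℝ) 0).symm.measurableEmbedding
  convert this using 1
  ext p i
  simp [MeasurableEquiv.piFinSuccAbove, Fin.insertNthEquiv]

lemma PosExpDecay.finCons {n : ℕ} {f : (Fin (n + 1) → ℝ) → ℝ} (hf : PosExpDecay f) :
    PosExpDecay (fun p : ℝ × (Fin n → ℝ) => f (Fin.cons p.1 p.2)) := by
  refine hf.comp (φ := fun p : ℝ × (Fin n → ℝ) => (Fin.cons p.1 p.2 : Fin (n + 1) → ℝ))
    (by fun_prop) one_pos (K' := 0) fun p => ?_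
  rw [one_mul, add_zero, Prod.norm_def, max_le_iff]
  refine ⟨?_, (pi_norm_le_iff_of_nonneg (norm_nonneg _)).2 fun i => ?_⟩
  · simpa using norm_le_pi_norm (Fin.cons p.1 p.2 : Fin (n + 1) → ℝ) 0
  · simpa using norm_le_pi_norm (Fin.cons p.1 p.2 : Fin (n + 1) → ℝ) i.succ

instance (n : ℕ) : (volume : Measure (ℝ × (Fin n → ℝ))).IsAddHaarMeasure := by
  rw [Measure.volume_eq_prod]; infer_instance

lemma PosExpDecay.integral_finCons {n : ℕ} {f : (Fin (n + 1) → ℝ) → ℝ} (hf : PosExpDecay f) :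
    ∫ z, f z = ∫ x : Fin n → ℝ, ∫ t : ℝ, f (Fin.cons t x) := by
  rw [← (measurePreserving_finCons n).integral_comp (measurableEmbedding_finCons n) f]
  rw [Measure.volume_eq_prod, integral_prod_symm]
  rw [← Measure.volume_eq_prod]
  exact hf.finCons.integrable volume

theorem prekopa_leindler {n : ℕ} {u v w : (Fin n → ℝ) → ℝ} (hu : PosExpDecay u)
    (hv : PosExpDecay v) (hw : PosExpDecay w) {a b : ℝ} (ha : 0 < a) (hb : 0 < b)
    (hab : a + b = 1) (h : ∀ x y, u x ^ a * v y ^ b ≤ w (a • x + b • y)) :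
    (∫ x, u x) ^ a * (∫ x, v x) ^ b ≤ ∫ x, w x := by
  induction n with
  | zero =>
    rw [integral_unique, integral_unique, integral_unique]
    have h1 := h (@default _ Unique.instInhabited) (@default _ Unique.instInhabited)
    rw [Subsingleton.elim (a • _ + b • _) (@default _ Unique.instInhabited)] at h1
    have hvol : (volume : Measure (Fin 0 → ℝ)).real univ = 1 := by simp [Measure.real, volume_pi]
    simpa only [hvol, one_smul] using h1
  | succ n ih =>
    rw [hu.integral_finCons, hv.integral_finCons, hw.integral_finCons]
    have hu' := hu.finCons.marginal volume (S := univ) (by simp)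
    have hv' := hv.finCons.marginal volume (S := univ) (by simp)
    have hw' := hw.finCons.marginal volume (S := univ) (by simp)
    simp only [Measure.restrict_univ] at hu' hv' hw'
    refine ih hu' hv' hw' fun x y => ?_
    have hfib : ∀ {f : (Fin (n + 1) → ℝ) → ℝ}, PosExpDecay f → ∀ x : Fin n → ℝ,
        PosExpDecay (fun t : ℝ => f (Fin.cons t x)) := fun hf x =>
      hf.finCons.comp (φ := fun t : ℝ => (t, x)) (by fun_prop) one_pos (K' := 0) (fun z => by
        simp [Prod.norm_def])
    refine prekopa_leindler_real (hfib hu x) (hfib hv y) (hfib hw _) ha hb hab fun s t => ?_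
    refine (h _ _).trans_eq (congrArg w ?_)
    ext i
    refine Fin.cases ?_ (fun j => ?_) i <;> simp

end PrekopaLeindler

section HalfLine

lemma lintegral_Ioi_half_gaussian :
    ∫⁻ z in Ioi (0 : ℝ), ENNReal.ofReal (√(2 / Real.pi) * Real.exp (-z ^ 2 / 2)) = 1 := by
  have h1 : ∀ z : ℝ, Real.exp (-z ^ 2 / 2) = Real.exp (-(1 / 2) * z ^ 2) := fun z => by ring_nf
  simp_rw [h1]
  rw [← ofReal_integral_eq_lintegral_ofReal
    ((integrable_exp_neg_mul_sq (by norm_num)).const_mul _).integrableOn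
    (ae_of_all _ fun z => by positivity), integral_const_mul, integral_gaussian_Ioi]
  rw [ENNReal.ofReal_eq_one]
  have : Real.pi / (1 / 2) = 2 * Real.pi := by ring
  rw [this, mul_div_assoc', div_eq_one_iff_eq (by norm_num), ← Real.sqrt_mul (by positivity)]
  have : 2 / Real.pi * (2 * Real.pi) = 2 ^ 2 := by field_simp
  rw [this, Real.sqrt_sq (by norm_num)]

variable {φ χ T : ℝ → ℝ}

lemma lintegral_comp_transport (hTI : ∀ t ∈ Ioi (0 : ℝ), T t ∈ Ioi (0 : ℝ))
    (hTs : SurjOn T (Ioi 0) (Ioi 0)) (hTm : StrictMonoOn T (Ioi 0))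
    (hTd : ∀ t ∈ Ioi (0 : ℝ), HasDerivAt T (φ t / χ (T t)) t)
    (hφ : ∀ t, 0 < φ t) (hχ : ∀ t, 0 < χ t) (h : ℝ → ℝ≥0∞) :
    ∫⁻ t in Ioi 0, h (T t) * ENNReal.ofReal (φ t)
      = ∫⁻ r in Ioi 0, h r * ENNReal.ofReal (χ r) := by
  have himg : T '' Ioi 0 = Ioi 0 := (MapsTo.image_subset hTI).antisymm hTs
  have := lintegral_image_eq_lintegral_abs_deriv_mul measurableSet_Ioi
    (fun t ht => (hTd t ht).hasDerivWithinAt) hTm.injOn (fun r => h r * ENNReal.ofReal (χ r))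
  rw [himg] at this
  rw [this]
  refine lintegral_congr fun t => ?_
  rw [abs_of_pos (div_pos (hφ t) (hχ _)), mul_left_comm, ← ENNReal.ofReal_mul
    (div_pos (hφ t) (hχ _)).le, div_mul_cancel₀ _ (hχ _).ne']

lemma lintegral_transport_le_one (hTI : ∀ t ∈ Ioi (0 : ℝ), T t ∈ Ioi (0 : ℝ))
    (hTm : StrictMonoOn T (Ioi 0))
    (hTd : ∀ t ∈ Ioi (0 : ℝ), HasDerivAt T (φ t / χ (T t)) t)
    (hφ : ∀ t, 0 < φ t) (hχ : ∀ t, 0 < χ t) :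
    ∫⁻ t in Ioi 0, ENNReal.ofReal (φ t * (√(φ t * χ (T t)))⁻¹ *
      (√(2 / Real.pi) * Real.exp (-(t * T t) / 2))) ≤ 1 := by
  set Z := fun t => √(t * T t) with hZ
  have hpos : ∀ t ∈ Ioi (0 : ℝ), 0 < t * T t := fun t ht => mul_pos ht (hTI t ht)
  set Z' := fun t => (1 * T t + t * (φ t / χ (T t))) / (2 * √(t * T t)) with hZ'
  have hZd : ∀ t ∈ Ioi (0 : ℝ), HasDerivWithinAt Z (Z' t) (Ioi 0) t := fun t ht =>
    (((hasDerivAt_id' t).mul (hTd t ht)).sqrt (hpos t ht).ne').hasDerivWithinAt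
  have hZm : StrictMonoOn Z (Ioi 0) := fun a ha b hb hab => by
    refine Real.sqrt_lt_sqrt (hpos a ha).le ?_
    exact mul_lt_mul'' hab (hTm ha hb hab) (le_of_lt ha) (hTI a ha).le
  have himg : Z '' Ioi 0 ⊆ Ioi 0 := by
    rintro _ ⟨t, ht, rfl⟩
    exact Real.sqrt_pos.2 (hpos t ht)
  rw [← lintegral_Ioi_half_gaussian]
  refine le_trans ?_ (lintegral_mono_set himg)
  rw [lintegral_image_eq_lintegral_abs_deriv_mul measurableSet_Ioi hZd hZm.injOn]
  refine setLIntegral_mono' measurableSet_Ioi fun t ht => ?_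
  rw [← ENNReal.ofReal_mul (abs_nonneg _)]
  refine ENNReal.ofReal_le_ofReal ?_
  have hT0 : 0 < T t := hTI t ht
  have ht0 : 0 < t := ht
  have e1 : Z t ^ 2 = t * T t := Real.sq_sqrt (hpos t ht).le
  have hq : 0 < φ t / χ (T t) := div_pos (hφ t) (hχ _)
  have hφt := hφ t
  have hχt := hχ (T t)
  rw [neg_div, neg_div, e1]
  gcongr
  refine le_trans ?_ (le_abs_self _)
  have e2 : φ t * (√(φ t * χ (T t)))⁻¹ = √(φ t / χ (T t)) := by
    rw [← div_eq_mul_inv, div_eq_iff (by positivity), ← Real.sqrt_mul hq.le]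
    rw [show φ t / χ (T t) * (φ t * χ (T t)) = φ t ^ 2 by field_simp, Real.sqrt_sq hφt.le]
  rw [e2, hZ', le_div_iff₀ (by positivity)]
  have e3 : √(φ t / χ (T t)) * √(t * T t) = √(T t) * √(t * (φ t / χ (T t))) := by
    rw [← Real.sqrt_mul hq.le, ← Real.sqrt_mul hT0.le]; ring_nf
  have e4 := Real.sq_sqrt hT0.le
  have e5 := Real.sq_sqrt (show 0 ≤ t * (φ t / χ (T t)) by positivity)
  have e6 := two_mul_le_add_sq (√(T t)) (√(t * (φ t / χ (T t))))
  rw [e4, e5] at e6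
  linarith

end HalfLine

section FiberCoupling

variable {n : ℕ} {f g : ℝ × (Fin n → ℝ) → ℝ}

lemma PosExpDecay.fiber {E : Type*} [NormedAddCommGroup E] {f : ℝ × E → ℝ} (hf : PosExpDecay f)
    (x : E) : PosExpDecay (fun t : ℝ => f (t, x)) :=
  hf.comp (φ := fun t : ℝ => (t, x)) (by fun_prop) one_pos (K' := 0) (fun z => by
    simp [Prod.norm_def])

/-- The marginal on the last coordinates of the restriction of `f` to positive first
coordinates. -/
noncomputable def halfMarginal {E : Type*} (f : ℝ × E → ℝ) (x : E) : ℝ :=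
  ∫ t in Ioi (0 : ℝ), f (t, x)

lemma PosExpDecay.halfMarginal {E : Type*} [NormedAddCommGroup E] {f : ℝ × E → ℝ}
    (hf : PosExpDecay f) : PosExpDecay (halfMarginal f) :=
  hf.marginal volume (by simp)

/-- The restriction of the density `f` to positive first coordinates. -/
noncomputable def halfMeasure (f : ℝ × (Fin n → ℝ) → ℝ) : Measure (ℝ × (Fin n → ℝ)) :=
  ((volume.restrict (Ioi (0 : ℝ))).prod volume).withDensity fun p => ENNReal.ofReal (f p)

lemma lintegral_halfMeasure (hf : PosExpDecay f) {h : ℝ × (Fin n → ℝ) → ℝ≥0∞}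
    (hh : Measurable h) :
    ∫⁻ p, h p ∂(halfMeasure f)
      = ∫⁻ x, ∫⁻ t in Ioi 0, h (t, x) * ENNReal.ofReal (f (t, x)) := by
  have hm := hf.cont.measurable
  rw [halfMeasure, lintegral_withDensity_eq_lintegral_mul _ (by fun_prop) hh,
    lintegral_prod_symm _ (by fun_prop)]
  refine lintegral_congr fun x => lintegral_congr fun t => ?_
  rw [Pi.mul_apply, mul_comm]

lemma exists_measurable_transport (hf : PosExpDecay f) (hg : PosExpDecay g) :
    ∃ T : ((Fin n → ℝ) × (Fin n → ℝ)) × ℝ → ℝ, Measurable T ∧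
      ∀ z, (∀ t ∈ Ioi (0 : ℝ), T (z, t) ∈ Ioi (0 : ℝ)) ∧
        SurjOn (fun t => T (z, t)) (Ioi 0) (Ioi 0) ∧
        StrictMonoOn (fun t => T (z, t)) (Ioi 0) ∧
        ∀ t ∈ Ioi (0 : ℝ), HasDerivAt (fun t => T (z, t)) ((f (t, z.1) / halfMarginal f z.1) /
          (g (T (z, t), z.2) / halfMarginal g z.2)) t := by
  have hex : ∀ z : (Fin n → ℝ) × (Fin n → ℝ), _ := fun z =>
    exists_monotone_transport (I := Ioi 0) (φ := fun t => f (t, z.1) / halfMarginal f z.1)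
      (χ := fun t => g (t, z.2) / halfMarginal g z.2) isOpen_Ioi ordConnected_Ioi
      ((hf.fiber _).cont.div_const _) (fun s => div_pos (hf.pos _) (hf.halfMarginal.pos _))
      (((hf.fiber _).integrable volume).div_const _)
      ((hg.fiber _).cont.div_const _) (fun s => div_pos (hg.pos _) (hg.halfMarginal.pos _))
      (((hg.fiber _).integrable volume).div_const _)
      (by rw [integral_div, integral_div]
          exact (div_self (hf.halfMarginal.pos _).ne').trans
            (div_self (hg.halfMarginal.pos _).ne').symm)
  choose S hSI hSs hSm hSd hSle using hex
  set T : ((Fin n → ℝ) × (Fin n → ℝ)) × ℝ → ℝ := fun w => if 0 < w.2 then S w.1 w.2 else 1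
    with hT
  have hTS : ∀ z, ∀ t ∈ Ioi (0 : ℝ), T (z, t) = S z t := fun z t ht => if_pos ht
  refine ⟨T, ?_, fun z => ⟨fun t ht => ?_, fun r hr => ?_, fun s hs t ht hst => ?_,
    fun t ht => ?_⟩⟩
  · have hmF : ∀ {k : ℝ × (Fin n → ℝ) → ℝ}, PosExpDecay k →
        Measurable (fun p : (Fin n → ℝ) × ℝ =>
          ∫ s in Ioi 0 ∩ Iic p.2, k (s, p.1) / halfMarginal k p.1) := by
      intro k hk
      have hm := hk.cont.measurable
      have hm' := hk.halfMarginal.cont.measurable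
      have : (fun p : (Fin n → ℝ) × ℝ => ∫ s in Ioi 0 ∩ Iic p.2, k (s, p.1) / halfMarginal k p.1)
          = fun p => ∫ s, {q : ((Fin n → ℝ) × ℝ) × ℝ | 0 < q.2 ∧ q.2 ≤ q.1.2}.indicator
            (fun q => k (q.2, q.1.1) / halfMarginal k q.1.1) (p, s) := by
        ext p
        rw [← integral_indicator (measurableSet_Ioi.inter measurableSet_Iic)]
        rfl
      rw [this]
      refine (StronglyMeasurable.integral_prod_right ?_).measurable
      refine (Measurable.indicator (by fun_prop) ?_).stronglyMeasurable
      exact (measurableSet_lt measurable_const measurable_snd).inter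
        (measurableSet_le measurable_snd (measurable_snd.comp measurable_fst))
    have hmf : Measurable (fun w : ((Fin n → ℝ) × (Fin n → ℝ)) × ℝ =>
        ∫ s in Ioi 0 ∩ Iic w.2, f (s, w.1.1) / halfMarginal f w.1.1) :=
      (hmF hf).comp (show Measurable fun w : ((Fin n → ℝ) × (Fin n → ℝ)) × ℝ => (w.1.1, w.2) by
        fun_prop)
    refine measurable_of_Iic fun r => ?_
    by_cases hr : 0 < r
    · have hmg : Measurable (fun w : ((Fin n → ℝ) × (Fin n → ℝ)) × ℝ =>
          ∫ s in Ioi 0 ∩ Iic r, g (s, w.1.2) / halfMarginal g w.1.2) :=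
        (hmF hg).comp (show Measurable fun w : ((Fin n → ℝ) × (Fin n → ℝ)) × ℝ => (w.1.2, r) by
          fun_prop)
      have : T ⁻¹' Iic r = ({w | 0 < w.2} ∩
          {w | ∫ s in Ioi 0 ∩ Iic w.2, f (s, w.1.1) / halfMarginal f w.1.1 ≤
            ∫ s in Ioi 0 ∩ Iic r, g (s, w.1.2) / halfMarginal g w.1.2}) ∪
          ({w | ¬ 0 < w.2} ∩ {w | 1 ≤ r}) := by
        ext w
        by_cases hw : 0 < w.2
        · simp only [hT, mem_preimage, mem_Iic, hw, if_true, mem_union, mem_inter_iff,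
            mem_ofPred_eq, true_and, not_true_eq_false, false_and, or_false]
          exact hSle w.1 w.2 hw r hr
        · simpa [hT, hw] using fun _ => not_lt.1 hw
      rw [this]
      have h0 : MeasurableSet {w : ((Fin n → ℝ) × (Fin n → ℝ)) × ℝ | 0 < w.2} :=
        measurableSet_lt (by fun_prop) (by fun_prop)
      exact (h0.inter (measurableSet_le hmf hmg)).union (h0.compl.inter (MeasurableSet.const _))
    · have : T ⁻¹' Iic r = ∅ := by
        refine eq_empty_of_forall_notMem fun w hw => hr ?_
        refine lt_of_lt_of_le ?_ (show T w ≤ r from hw)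
        by_cases hw : 0 < w.2
        · simp only [hT, hw, if_true]
          exact hSI _ _ hw
        · simp [hT, hw]
      rw [this]
      exact MeasurableSet.empty
  · rw [hTS z t ht]
    exact hSI z t ht
  · obtain ⟨t, ht, h⟩ := hSs z hr
    exact ⟨t, ht, (hTS z t ht).trans h⟩
  · simp only [hTS z s hs, hTS z t ht]
    exact hSm z hs ht hst
  · rw [hTS z t ht]
    refine (hSd z t ht).congr_of_eventuallyEq ?_
    filter_upwards [isOpen_Ioi.mem_nhds ht] with s hs using hTS z s hs

/-- Conditional monotone rearrangement of the first coordinate on top of a coupling of the last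
coordinates. -/
lemma exists_fiber_coupling (hf : PosExpDecay f) (hg : PosExpDecay g)
    (π : Measure ((Fin n → ℝ) × (Fin n → ℝ))) [SFinite π]
    (hπ1 : π.map Prod.fst = volume.withDensity fun x => ENNReal.ofReal (halfMarginal f x))
    (hπ2 : π.map Prod.snd = volume.withDensity fun x => ENNReal.ofReal (halfMarginal g x)) :
    ∃ ρ : Measure ((ℝ × (Fin n → ℝ)) × (ℝ × (Fin n → ℝ))),
      ρ.map Prod.fst = halfMeasure f ∧ ρ.map Prod.snd = halfMeasure g ∧
      ρ.map (fun w => (w.1.2, w.2.2)) = π ∧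
      ∫⁻ w, ENNReal.ofReal ((√((f w.1 / halfMarginal f w.1.2) *
        (g w.2 / halfMarginal g w.2.2)))⁻¹ *
        (√(2 / Real.pi) * Real.exp (-(w.1.1 * w.2.1) / 2))) ∂ρ ≤ π univ := by
  obtain ⟨T, hT, hTz⟩ := exists_measurable_transport hf hg
  have hmf := hf.cont.measurable
  have hmf' := hf.halfMarginal.cont.measurable
  have hmg := hg.cont.measurable
  have hmg' := hg.halfMarginal.cont.measurable
  have hφ0 : ∀ t x, 0 < f (t, x) / halfMarginal f x := fun t x =>
    div_pos (hf.pos _) (hf.halfMarginal.pos _)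
  have hχ0 : ∀ t x, 0 < g (t, x) / halfMarginal g x := fun t x =>
    div_pos (hg.pos _) (hg.halfMarginal.pos _)
  have hone : ∀ {k : ℝ × (Fin n → ℝ) → ℝ}, PosExpDecay k → ∀ x,
      ∫⁻ t in Ioi 0, ENNReal.ofReal (k (t, x) / halfMarginal k x) = 1 := by
    intro k hk x
    rw [← ofReal_integral_eq_lintegral_ofReal
      (((hk.fiber x).integrable volume).div_const _).integrableOn
      (ae_of_all _ fun t => (div_pos (hk.pos _) (hk.halfMarginal.pos _)).le), integral_div,
      ENNReal.ofReal_eq_one]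
    exact div_self (hk.halfMarginal.pos x).ne'
  set lam : Measure (((Fin n → ℝ) × (Fin n → ℝ)) × ℝ) :=
    (π.prod (volume.restrict (Ioi 0))).withDensity
      (fun w => ENNReal.ofReal (f (w.2, w.1.1) / halfMarginal f w.1.1)) with hlam
  have hlam_int : ∀ h : ((Fin n → ℝ) × (Fin n → ℝ)) × ℝ → ℝ≥0∞, Measurable h →
      ∫⁻ w, h w ∂lam = ∫⁻ z, (∫⁻ t in Ioi 0, h (z, t) *
        ENNReal.ofReal (f (t, z.1) / halfMarginal f z.1)) ∂π := by
    intro h hh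
    rw [hlam, lintegral_withDensity_eq_lintegral_mul _ (by fun_prop) hh,
      lintegral_prod _ (by fun_prop)]
    refine lintegral_congr fun x => lintegral_congr fun t => ?_
    rw [Pi.mul_apply, mul_comm]
  have hcomb : ∀ {k : ℝ × (Fin n → ℝ) → ℝ}, PosExpDecay k → ∀ h : ℝ × (Fin n → ℝ) → ℝ≥0∞,
      Measurable h → ∫⁻ x, (∫⁻ t in Ioi 0, h (t, x) *
        ENNReal.ofReal (k (t, x) / halfMarginal k x)) ∂(volume.withDensity fun x =>
          ENNReal.ofReal (halfMarginal k x)) = ∫⁻ p, h p ∂(halfMeasure k) := by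
    intro k hk h hh
    have hm := hk.cont.measurable
    have hm' := hk.halfMarginal.cont.measurable
    rw [lintegral_halfMeasure hk hh, lintegral_withDensity_eq_lintegral_mul _ (by fun_prop)
      (Measurable.lintegral_prod_right' (f := fun q : (Fin n → ℝ) × ℝ => h (q.2, q.1) *
        ENNReal.ofReal (k (q.2, q.1) / halfMarginal k q.1)) (by fun_prop))]
    refine lintegral_congr fun x => ?_
    rw [Pi.mul_apply, ← lintegral_const_mul _ (by fun_prop)]
    refine lintegral_congr fun t => ?_
    rw [mul_left_comm, ← ENNReal.ofReal_mul (hk.halfMarginal.pos x).le,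
      mul_div_cancel₀ _ (hk.halfMarginal.pos x).ne']
  have hΨ : Measurable (fun w : ((Fin n → ℝ) × (Fin n → ℝ)) × ℝ =>
    ((w.2, w.1.1), (T w, w.1.2))) := by fun_prop
  refine ⟨lam.map fun w => ((w.2, w.1.1), (T w, w.1.2)), ?_, ?_, ?_, ?_⟩
  · refine Measure.ext_of_lintegral _ fun h hh => ?_
    rw [Measure.map_map (by fun_prop) hΨ, lintegral_map hh (by fun_prop),
      hlam_int _ (by fun_prop), ← hcomb hf h hh, ← hπ1, lintegral_map ?_ (by fun_prop)]
    · rfl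
    · exact Measurable.lintegral_prod_right' (f := fun q : (Fin n → ℝ) × ℝ => h (q.2, q.1) *
        ENNReal.ofReal (f (q.2, q.1) / halfMarginal f q.1)) (by fun_prop)
  · refine Measure.ext_of_lintegral _ fun h hh => ?_
    rw [Measure.map_map (by fun_prop) hΨ, lintegral_map hh (by fun_prop),
      hlam_int _ (by fun_prop), ← hcomb hg h hh, ← hπ2, lintegral_map ?_ (by fun_prop)]
    · refine lintegral_congr fun z => ?_
      obtain ⟨h1, h2, h3, h4⟩ := hTz z
      exact lintegral_comp_transport (φ := fun t => f (t, z.1) / halfMarginal f z.1)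
        (χ := fun t => g (t, z.2) / halfMarginal g z.2) h1 h2 h3 h4 (fun t => hφ0 _ _)
        (fun t => hχ0 _ _) (fun t => h (t, z.2))
    · exact Measurable.lintegral_prod_right' (f := fun q : (Fin n → ℝ) × ℝ => h (q.2, q.1) *
        ENNReal.ofReal (g (q.2, q.1) / halfMarginal g q.1)) (by fun_prop)
  · refine Measure.ext_of_lintegral _ fun h hh => ?_
    rw [Measure.map_map (by fun_prop) hΨ, lintegral_map hh (by fun_prop),
      hlam_int _ (by fun_prop)]
    refine lintegral_congr fun z => ?_
    simp only [Function.comp_def, Prod.mk.eta]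
    rw [lintegral_const_mul _ (by fun_prop), hone hf, mul_one]
  · rw [lintegral_map (by fun_prop) hΨ, hlam_int _ (by fun_prop), ← setLIntegral_one,
      setLIntegral_univ]
    refine lintegral_mono fun z => ?_
    obtain ⟨h1, h2, h3, h4⟩ := hTz z
    refine le_trans (lintegral_mono fun t => ?_) (lintegral_transport_le_one
      (φ := fun t => f (t, z.1) / halfMarginal f z.1)
      (χ := fun t => g (t, z.2) / halfMarginal g z.2) h1 h3 h4 (fun t => hφ0 _ _)
      (fun t => hχ0 _ _))
    rw [← ENNReal.ofReal_mul (by positivity), mul_comm, mul_assoc]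

end FiberCoupling

section DensityMeasure

/-- The measure with Lebesgue density `f`. -/
noncomputable def densityMeasure {E : Type*} [MeasureSpace E] (f : E → ℝ) : Measure E :=
  volume.withDensity fun x => ENNReal.ofReal (f x)

namespace PosExpDecay

variable {E : Type*} [NormedAddCommGroup E] [MeasureSpace E] [BorelSpace E] {f : E → ℝ}

lemma integrable_densityMeasure_iff (hf : PosExpDecay f) {u : E → ℝ} :
    Integrable u (densityMeasure f) ↔ Integrable (fun x => u x * f x) := by
  have hm := hf.cont.measurable
  rw [densityMeasure, integrable_withDensity_iff (by fun_prop) (ae_of_all _ fun x => by simp)]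
  simp only [ENNReal.toReal_ofReal (hf.pos _).le]

lemma integral_densityMeasure (hf : PosExpDecay f) (u : E → ℝ) :
    ∫ x, u x ∂densityMeasure f = ∫ x, f x * u x := by
  have hm := hf.cont.measurable
  rw [densityMeasure, integral_withDensity_eq_integral_toReal_smul (by fun_prop)
    (ae_of_all _ fun x => by simp)]
  simp only [ENNReal.toReal_ofReal (hf.pos _).le, smul_eq_mul]

variable [NormedSpace ℝ E] [FiniteDimensional ℝ E] [(volume : Measure E).IsAddHaarMeasure]

lemma isFiniteMeasure_densityMeasure (hf : PosExpDecay f) :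
    IsFiniteMeasure (densityMeasure f) :=
  isFiniteMeasure_withDensity_ofReal (hf.integrable volume).2

lemma integrable_log_densityMeasure (hf : PosExpDecay f) :
    Integrable (fun x => Real.log (f x)) (densityMeasure f) := by
  rw [hf.integrable_densityMeasure_iff]
  simpa only [mul_comm] using hf.integrable_mul_log volume

lemma integrable_densityMeasure_of_le (hf : PosExpDecay f) {u : E → ℝ} (hu : Measurable u)
    {C : ℝ} (h : ∀ x, |u x| ≤ C * (1 + ‖x‖ ^ 2)) : Integrable u (densityMeasure f) :=
  hf.integrable_densityMeasure_iff.2 (hf.integrable_mul_of_le volume hu h)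

lemma integrable_norm_sq_densityMeasure (hf : PosExpDecay f) :
    Integrable (fun x => ‖x‖ ^ 2) (densityMeasure f) :=
  hf.integrable_densityMeasure_of_le (C := 1) (by fun_prop) fun x => by
    rw [abs_of_nonneg (by positivity)]; linarith

lemma integrable_densityMeasure_of_le_norm (hf : PosExpDecay f) {u : E → ℝ} (hu : Measurable u)
    {C : ℝ} (h : ∀ x, |u x| ≤ C * ‖x‖) : Integrable u (densityMeasure f) := by
  refine hf.integrable_densityMeasure_of_le (C := |C|) hu fun x => (h x).trans ?_
  have h1 := norm_nonneg x
  calc C * ‖x‖ ≤ |C| * ‖x‖ := by gcongr; exact le_abs_self C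
    _ ≤ |C| * (1 + ‖x‖ ^ 2) := by gcongr; nlinarith

end PosExpDecay

end DensityMeasure

section HalfMeasure

variable {n : ℕ} {f g : ℝ × (Fin n → ℝ) → ℝ}

lemma halfMeasure_eq_restrict (f : ℝ × (Fin n → ℝ) → ℝ) :
    halfMeasure f = (densityMeasure f).restrict (Ioi 0 ×ˢ univ) := by
  rw [densityMeasure, restrict_withDensity (measurableSet_Ioi.prod MeasurableSet.univ),
    Measure.volume_eq_prod, ← Measure.prod_restrict, Measure.restrict_univ]
  rfl

lemma halfMeasure_le (f : ℝ × (Fin n → ℝ) → ℝ) : halfMeasure f ≤ densityMeasure f := by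
  rw [halfMeasure_eq_restrict]; exact Measure.restrict_le_self

lemma map_snd_halfMeasure (hf : PosExpDecay f) :
    (halfMeasure f).map Prod.snd = densityMeasure (halfMarginal f) := by
  have hm := hf.cont.measurable
  refine Measure.ext_of_lintegral _ fun h hh => ?_
  have hm' := hf.halfMarginal.cont.measurable
  rw [lintegral_map hh (by fun_prop), lintegral_halfMeasure hf (by fun_prop), densityMeasure,
    lintegral_withDensity_eq_lintegral_mul _ (by fun_prop) hh]
  refine lintegral_congr fun x => ?_
  dsimp only
  rw [lintegral_const_mul _ (by fun_prop), ← ofReal_integral_eq_lintegral_ofReal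
    ((hf.fiber x).integrable volume).integrableOn (ae_of_all _ fun t => (hf.pos _).le), mul_comm]
  rfl

/-- Existence of couplings certifying the Gaussian entropic inequality in dimension `n`. -/
def EntropicCoupling (n : ℕ) : Prop :=
  ∀ f g : (Fin n → ℝ) → ℝ, PosExpDecay f → PosExpDecay g → ∀ m : ℝ, 0 < m →
    densityMeasure f univ = ENNReal.ofReal m → densityMeasure g univ = ENNReal.ofReal m →
    (∀ i, ∫ x, x i ∂densityMeasure f = 0) →
    ∃ π : Measure ((Fin n → ℝ) × (Fin n → ℝ)),
      π.map Prod.fst = densityMeasure f ∧ π.map Prod.snd = densityMeasure g ∧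
      - ∫ x, Real.log (f x) ∂densityMeasure f - ∫ x, Real.log (g x) ∂densityMeasure g ≤
        m * (n * Real.log (2 * Real.pi) - 2 * Real.log m) + ∫ p, ∑ i, p.1 i * p.2 i ∂π

lemma integrable_of_map_sq {E F : Type*} [NormedAddCommGroup E] [MeasurableSpace E]
    [NormedAddCommGroup F] [MeasurableSpace F] [OpensMeasurableSpace E] [OpensMeasurableSpace F]
    {ρ : Measure (E × F)} {u : E × F → ℝ} (hu : Measurable u)
    (h1 : Integrable (fun x => ‖x‖ ^ 2) (ρ.map Prod.fst))
    (h2 : Integrable (fun x => ‖x‖ ^ 2) (ρ.map Prod.snd)) {C : ℝ}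
    (h : ∀ w, |u w| ≤ C * (‖w.1‖ ^ 2 + ‖w.2‖ ^ 2)) : Integrable u ρ := by
  refine Integrable.mono' (((h1.comp_measurable measurable_fst).add
    (h2.comp_measurable measurable_snd)).const_mul C) hu.aestronglyMeasurable
    (ae_of_all _ fun w => h w)

lemma abs_mul_le_sq_add_sq {a b A B : ℝ} (ha : |a| ≤ A) (hb : |b| ≤ B) :
    |a * b| ≤ 1 * (A ^ 2 + B ^ 2) := by
  rw [abs_mul]
  have := mul_le_mul ha hb (abs_nonneg b) ((abs_nonneg a).trans ha)
  nlinarith [sq_nonneg (A - B), sq_nonneg A, sq_nonneg B]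

set_option maxHeartbeats 600000 in
lemma exists_half_coupling (ih : EntropicCoupling n) (hf : PosExpDecay f) (hg : PosExpDecay g)
    {m : ℝ} (hm : 0 < m) (hmf : halfMeasure f univ = ENNReal.ofReal m)
    (hmg : halfMeasure g univ = ENNReal.ofReal m)
    (hc : ∀ i, ∫ z, z.2 i ∂halfMeasure f = 0) :
    ∃ ρ : Measure ((ℝ × (Fin n → ℝ)) × (ℝ × (Fin n → ℝ))),
      ρ.map Prod.fst = halfMeasure f ∧ ρ.map Prod.snd = halfMeasure g ∧
      - ∫ x, Real.log (f x) ∂halfMeasure f - ∫ x, Real.log (g x) ∂halfMeasure g ≤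
        m * ((n + 1) * Real.log (2 * Real.pi) - 2 * Real.log 2 - 2 * Real.log m) +
          ∫ w, (w.1.1 * w.2.1 + ∑ i, w.1.2 i * w.2.2 i) ∂ρ := by
  have hf1 := hf.halfMarginal
  have hg1 := hg.halfMarginal
  have hmf0 := hf.cont.measurable
  have hmg0 := hg.cont.measurable
  have hmf1 := hf1.cont.measurable
  have hmg1 := hg1.cont.measurable
  have hsf := map_snd_halfMeasure hf
  have hsg := map_snd_halfMeasure hg
  obtain ⟨π, hπ1, hπ2, hπ⟩ := ih (halfMarginal f) (halfMarginal g) hf1 hg1 m hm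
    (by rw [← hsf, Measure.map_apply measurable_snd MeasurableSet.univ, preimage_univ, hmf])
    (by rw [← hsg, Measure.map_apply measurable_snd MeasurableSet.univ, preimage_univ, hmg])
    (fun i => by
      rw [← hsf, integral_map (by fun_prop) (show Measurable fun x : Fin n → ℝ => x i from
        measurable_pi_apply i).aestronglyMeasurable]
      exact hc i)
  have hπu : π univ = ENNReal.ofReal m := by
    have h1 := congrArg (fun κ => κ univ) (hsf.trans hπ1.symm)
    simp only [Measure.map_apply measurable_snd MeasurableSet.univ,
      Measure.map_apply measurable_fst MeasurableSet.univ, preimage_univ] at h1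
    rw [← h1, hmf]
  have : IsFiniteMeasure π := ⟨by rw [hπu]; exact ENNReal.ofReal_lt_top⟩
  obtain ⟨ρ, hρ1, hρ2, hρπ, hρ⟩ := exists_fiber_coupling hf hg π hπ1 hπ2
  refine ⟨ρ, hρ1, hρ2, ?_⟩
  rw [hπu] at hρ
  have hρu : ρ univ = ENNReal.ofReal m := by
    rw [← hmf, ← hρ1, Measure.map_apply measurable_fst MeasurableSet.univ, preimage_univ]
  have : IsFiniteMeasure ρ := ⟨by rw [hρu]; exact ENNReal.ofReal_lt_top⟩
  have iF2 : Integrable (fun x => ‖x‖ ^ 2) (ρ.map Prod.fst) := by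
    rw [hρ1]; exact hf.integrable_norm_sq_densityMeasure.mono_measure (halfMeasure_le f)
  have iG2 : Integrable (fun x => ‖x‖ ^ 2) (ρ.map Prod.snd) := by
    rw [hρ2]; exact hg.integrable_norm_sq_densityMeasure.mono_measure (halfMeasure_le g)
  have iF : Integrable (fun w => Real.log (f w)) (ρ.map Prod.fst) := by
    rw [hρ1]; exact hf.integrable_log_densityMeasure.mono_measure (halfMeasure_le f)
  have iG : Integrable (fun w => Real.log (g w)) (ρ.map Prod.snd) := by
    rw [hρ2]; exact hg.integrable_log_densityMeasure.mono_measure (halfMeasure_le g)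
  have e1 : ∫ x, Real.log (f x) ∂halfMeasure f = ∫ w, Real.log (f w.1) ∂ρ := by
    rw [← hρ1, integral_map (by fun_prop) iF.aestronglyMeasurable]
  have e2 : ∫ x, Real.log (g x) ∂halfMeasure g = ∫ w, Real.log (g w.2) ∂ρ := by
    rw [← hρ2, integral_map (by fun_prop) iG.aestronglyMeasurable]
  have hmq1 : ρ.map (fun w => w.1.2) = densityMeasure (halfMarginal f) := by
    rw [← hsf, ← hρ1, Measure.map_map measurable_snd measurable_fst]; rfl
  have hmq2 : ρ.map (fun w => w.2.2) = densityMeasure (halfMarginal g) := by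
    rw [← hsg, ← hρ2, Measure.map_map measurable_snd measurable_snd]; rfl
  have iF1 : Integrable (fun w => Real.log (halfMarginal f w)) (ρ.map (fun w => w.1.2)) := by
    rw [hmq1]; exact hf1.integrable_log_densityMeasure
  have iG1 : Integrable (fun w => Real.log (halfMarginal g w)) (ρ.map (fun w => w.2.2)) := by
    rw [hmq2]; exact hg1.integrable_log_densityMeasure
  have e3 : ∫ x, Real.log (halfMarginal f x) ∂densityMeasure (halfMarginal f)
      = ∫ w, Real.log (halfMarginal f w.1.2) ∂ρ := by
    rw [← hmq1, integral_map (by fun_prop) iF1.aestronglyMeasurable]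
  have e4 : ∫ x, Real.log (halfMarginal g x) ∂densityMeasure (halfMarginal g)
      = ∫ w, Real.log (halfMarginal g w.2.2) ∂ρ := by
    rw [← hmq2, integral_map (by fun_prop) iG1.aestronglyMeasurable]
  have e5 : ∫ p, ∑ i, p.1 i * p.2 i ∂π = ∫ w, ∑ i, w.1.2 i * w.2.2 i ∂ρ := by
    rw [← hρπ, integral_map (by fun_prop) (by fun_prop)]
  have jF : Integrable (fun w => Real.log (f w.1)) ρ := iF.comp_measurable measurable_fst
  have jG : Integrable (fun w => Real.log (g w.2)) ρ := iG.comp_measurable measurable_snd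
  have jF1 : Integrable (fun w => Real.log (halfMarginal f w.1.2)) ρ :=
    iF1.comp_measurable (measurable_snd.comp measurable_fst)
  have jG1 : Integrable (fun w => Real.log (halfMarginal g w.2.2)) ρ :=
    iG1.comp_measurable (measurable_snd.comp measurable_snd)
  have jt : Integrable (fun w : (ℝ × (Fin n → ℝ)) × (ℝ × (Fin n → ℝ)) => w.1.1 * w.2.1) ρ :=
    integrable_of_map_sq (by fun_prop) iF2 iG2 fun w =>
      abs_mul_le_sq_add_sq (norm_fst_le w.1) (norm_fst_le w.2)
  have js : Integrable (fun w : (ℝ × (Fin n → ℝ)) × (ℝ × (Fin n → ℝ)) =>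
      ∑ i, w.1.2 i * w.2.2 i) ρ := by
    refine integrable_finsetSum _ fun i _ => integrable_of_map_sq (by fun_prop) iF2 iG2 fun w =>
      abs_mul_le_sq_add_sq ((norm_le_pi_norm w.1.2 i).trans (norm_snd_le w.1))
        ((norm_le_pi_norm w.2.2 i).trans (norm_snd_le w.2))
  set R : (ℝ × (Fin n → ℝ)) × (ℝ × (Fin n → ℝ)) → ℝ := fun w =>
    (√((f w.1 / halfMarginal f w.1.2) * (g w.2 / halfMarginal g w.2.2)))⁻¹ *
        (√(2 / Real.pi) * Real.exp (-(w.1.1 * w.2.1) / 2)) with hR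
  have hRm : Measurable R := by fun_prop
  have hR0 : ∀ w, 0 ≤ R w := fun w => by positivity
  have jR : Integrable R ρ := ⟨hRm.aestronglyMeasurable, by
    rw [hasFiniteIntegral_iff_ofReal (ae_of_all _ hR0)]
    exact hρ.trans_lt ENNReal.ofReal_lt_top⟩
  have hRint : ∫ w, R w ∂ρ ≤ m := by
    rw [integral_eq_lintegral_of_nonneg_ae (ae_of_all _ hR0) hRm.aestronglyMeasurable]
    exact ENNReal.toReal_le_of_le_ofReal hm.le hρ
  have hpt : ∀ w, (-Real.log (f w.1) - Real.log (g w.2) + Real.log (halfMarginal f w.1.2)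
      + Real.log (halfMarginal g w.2.2) - w.1.1 * w.2.1) ≤
        2 * (R w - 1) + Real.log (Real.pi / 2) := by
    intro w
    have a1 := hf.pos w.1
    have a2 := hg.pos w.2
    have a3 := hf1.pos w.1.2
    have a4 := hg1.pos w.2.2
    have hRpos : 0 < R w := by positivity
    have h1 := Real.log_le_sub_one_of_pos hRpos
    have h2 : Real.log (R w) = -((Real.log (f w.1) - Real.log (halfMarginal f w.1.2) +
        (Real.log (g w.2) - Real.log (halfMarginal g w.2.2))) / 2) +
        (-Real.log (Real.pi / 2) / 2 + -(w.1.1 * w.2.1) / 2) := by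
      rw [hR, Real.log_mul (by positivity) (by positivity), Real.log_inv, Real.log_sqrt
        (by positivity), Real.log_mul (by positivity) (by positivity), Real.log_div a1.ne' a3.ne',
        Real.log_div a2.ne' a4.ne', Real.log_mul (by positivity) (by positivity), Real.log_exp,
        Real.log_sqrt (by positivity), ← inv_div Real.pi 2, Real.log_inv]
    linarith
  have k2 : Integrable (fun w => -Real.log (f w.1) - Real.log (g w.2)) ρ := jF.neg.sub jG
  have k3 : Integrable (fun w => -Real.log (f w.1) - Real.log (g w.2)
      + Real.log (halfMarginal f w.1.2)) ρ := k2.add jF1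
  have k4 : Integrable (fun w => -Real.log (f w.1) - Real.log (g w.2)
      + Real.log (halfMarginal f w.1.2) + Real.log (halfMarginal g w.2.2)) ρ := k3.add jG1
  have kR : Integrable (fun w => 2 * (R w - 1)) ρ := (jR.sub (integrable_const 1)).const_mul 2
  have hI := integral_mono (k4.sub jt) (kR.add (integrable_const (Real.log (Real.pi / 2)))) hpt
  have hc1 : ∫ _w, (1 : ℝ) ∂ρ = m := by
    simp [Measure.real, hρu, hm.le]
  have hc2 : ∫ _w, Real.log (Real.pi / 2) ∂ρ = m * Real.log (Real.pi / 2) := by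
    simp [Measure.real, hρu, hm.le]
  have hL : ∫ w, (-Real.log (f w.1) - Real.log (g w.2) + Real.log (halfMarginal f w.1.2)
      + Real.log (halfMarginal g w.2.2) - w.1.1 * w.2.1) ∂ρ =
      -∫ w, Real.log (f w.1) ∂ρ - ∫ w, Real.log (g w.2) ∂ρ
      + ∫ w, Real.log (halfMarginal f w.1.2) ∂ρ + ∫ w, Real.log (halfMarginal g w.2.2) ∂ρ
      - ∫ w, w.1.1 * w.2.1 ∂ρ := by
    rw [integral_sub k4 jt, integral_add k3 jG1, integral_add k2 jF1, integral_sub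
      (show Integrable (fun w => -Real.log (f w.1)) ρ from jF.neg) jG, integral_neg]
  have hRr : ∫ w, (2 * (R w - 1) + Real.log (Real.pi / 2)) ∂ρ =
      2 * (∫ w, R w ∂ρ - m) + m * Real.log (Real.pi / 2) := by
    rw [integral_add kR (integrable_const _),
      integral_const_mul, integral_sub jR (integrable_const 1), hc1, hc2]
  have hI' := (hL.symm.trans_le hI).trans_eq hRr
  rw [integral_add jt js, e1, e2]
  rw [e3, e4, e5] at hπ
  have hlog : Real.log (Real.pi / 2) = Real.log (2 * Real.pi) - 2 * Real.log 2 := by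
    rw [Real.log_div Real.pi_ne_zero two_ne_zero, Real.log_mul two_ne_zero Real.pi_ne_zero]; ring
  rw [hlog] at hI'
  linarith

end HalfMeasure

section Shear

variable {n : ℕ}

lemma lintegral_densityMeasure {E : Type*} [MeasureSpace E] {f : E → ℝ} (hf : Measurable f)
    {h : E → ℝ≥0∞} (hh : Measurable h) :
    ∫⁻ x, h x ∂densityMeasure f = ∫⁻ x, h x * ENNReal.ofReal (f x) := by
  rw [densityMeasure, lintegral_withDensity_eq_lintegral_mul _ (by fun_prop) hh]
  simp only [Pi.mul_apply, mul_comm]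

lemma map_densityMeasure_comp {E F : Type*} [MeasureSpace E] [MeasureSpace F] {f : F → ℝ}
    (hf : Measurable f) {A : E → F} (hA : MeasurePreserving A) :
    (densityMeasure fun x => f (A x)).map A = densityMeasure f := by
  have := hA.measurable
  refine Measure.ext_of_lintegral _ fun h hh => ?_
  rw [lintegral_map hh hA.measurable, lintegral_densityMeasure (by fun_prop) (by fun_prop),
    lintegral_densityMeasure hf hh]
  exact hA.lintegral_comp (f := fun x => h x * ENNReal.ofReal (f x)) (by fun_prop)

lemma PosExpDecay.densityMeasure_univ {E : Type*} [NormedAddCommGroup E] [NormedSpace ℝ E]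
    [FiniteDimensional ℝ E] [MeasureSpace E] [BorelSpace E]
    [(volume : Measure E).IsAddHaarMeasure] {f : E → ℝ} (hf : PosExpDecay f) :
    densityMeasure f univ = ENNReal.ofReal (∫ x, f x) := by
  rw [densityMeasure, withDensity_apply _ MeasurableSet.univ, setLIntegral_univ,
    ofReal_integral_eq_lintegral_ofReal (hf.integrable volume) (ae_of_all _ fun x => (hf.pos x).le)]

lemma PosExpDecay.halfMeasure_univ {f : ℝ × (Fin n → ℝ) → ℝ} (hf : PosExpDecay f) :
    halfMeasure f univ = ENNReal.ofReal (∫ x, SymTalagrand.halfMarginal f x) := by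
  rw [← hf.halfMarginal.densityMeasure_univ, ← map_snd_halfMeasure hf,
    Measure.map_apply measurable_snd MeasurableSet.univ, preimage_univ]

/-- Reflection of the first coordinate. -/
def reflectFst (z : ℝ × (Fin n → ℝ)) : ℝ × (Fin n → ℝ) := (-z.1, z.2)

@[fun_prop]
lemma measurable_reflectFst : Measurable (reflectFst (n := n)) := by
  unfold reflectFst; fun_prop

lemma PosExpDecay.reflectFst {f : ℝ × (Fin n → ℝ) → ℝ} (hf : PosExpDecay f) :
    PosExpDecay (fun z => f (reflectFst z)) :=
  hf.comp (φ := SymTalagrand.reflectFst) (by unfold SymTalagrand.reflectFst; fun_prop) one_pos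
    (K' := 0) fun z => by simp [SymTalagrand.reflectFst, Prod.norm_def]

lemma densityMeasure_eq_half_add {f : ℝ × (Fin n → ℝ) → ℝ} (hf : PosExpDecay f) :
    densityMeasure f = halfMeasure f +
      (halfMeasure fun z => f (reflectFst z)).map reflectFst := by
  have hm := hf.cont.measurable
  refine Measure.ext_of_lintegral _ fun h hh => ?_
  rw [lintegral_add_measure, lintegral_map hh measurable_reflectFst,
    lintegral_halfMeasure hf hh, lintegral_halfMeasure hf.reflectFst (by fun_prop),
    lintegral_densityMeasure hm hh, Measure.volume_eq_prod, lintegral_prod_symm _ (by fun_prop),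
    ← lintegral_add_left (Measurable.lintegral_prod_right' (f := fun q : (Fin n → ℝ) × ℝ =>
      h (q.2, q.1) * ENNReal.ofReal (f (q.2, q.1))) (by fun_prop))]
  refine lintegral_congr fun x => ?_
  rw [← lintegral_add_compl _ (measurableSet_Ioi (a := (0 : ℝ))), compl_Ioi,
    ← setLIntegral_congr Iio_ae_eq_Iic]
  congr 1
  have h2 := (Measure.measurePreserving_neg (volume : Measure ℝ)).setLIntegral_comp_preimage
    (f := fun t => h (t, x) * ENNReal.ofReal (f (t, x))) (s := Iio 0) measurableSet_Iio
    (by fun_prop)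
  rw [← h2]
  simp [reflectFst]

lemma integral_densityMeasure_eq_half_add {f u : ℝ × (Fin n → ℝ) → ℝ} (hf : PosExpDecay f)
    (hu : Measurable u) (hi : Integrable u (densityMeasure f)) :
    ∫ z, u z ∂densityMeasure f = ∫ z, u z ∂halfMeasure f +
      ∫ z, u (reflectFst z) ∂halfMeasure (fun z => f (reflectFst z)) := by
  rw [densityMeasure_eq_half_add hf] at hi ⊢
  rw [integral_add_measure hi.left_of_add_measure hi.right_of_add_measure,
    integral_map (by fun_prop) hu.aestronglyMeasurable]

/-- The shear `(t, x) ↦ (t, x + t e)`. -/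
def shearSnd (e : Fin n → ℝ) (z : ℝ × (Fin n → ℝ)) : ℝ × (Fin n → ℝ) := (z.1, z.2 + z.1 • e)

/-- The shear `(r, y) ↦ (r + c - e ⬝ y, y)`. -/
def shearFst (e : Fin n → ℝ) (c : ℝ) (z : ℝ × (Fin n → ℝ)) : ℝ × (Fin n → ℝ) :=
  (z.1 + (c - ∑ i, e i * z.2 i), z.2)

@[fun_prop]
lemma measurable_shearSnd (e : Fin n → ℝ) : Measurable (shearSnd e) := by
  unfold shearSnd; fun_prop

@[fun_prop]
lemma measurable_shearFst (e : Fin n → ℝ) (c : ℝ) : Measurable (shearFst e c) := by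
  unfold shearFst; fun_prop

lemma measurePreserving_shearSnd (e : Fin n → ℝ) : MeasurePreserving (shearSnd e) := by
  rw [Measure.volume_eq_prod]
  refine MeasurePreserving.skew_product (g := fun t x => x + t • e) (MeasurePreserving.id _)
    (by fun_prop) (ae_of_all _ fun t => ?_)
  exact (measurePreserving_add_right volume (t • e)).map_eq

lemma measurePreserving_shearFst (e : Fin n → ℝ) (c : ℝ) :
    MeasurePreserving (shearFst e c) := by
  rw [Measure.volume_eq_prod]
  have h : MeasurePreserving (fun p : (Fin n → ℝ) × ℝ => (p.1, p.2 + (c - ∑ i, e i * p.1 i)))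
      ((volume : Measure (Fin n → ℝ)).prod (volume : Measure ℝ))
      ((volume : Measure (Fin n → ℝ)).prod (volume : Measure ℝ)) :=
    MeasurePreserving.skew_product (g := fun (y : Fin n → ℝ) (r : ℝ) => r + (c - ∑ i, e i * y i))
      (MeasurePreserving.id _) (by fun_prop) (ae_of_all _ fun y : Fin n → ℝ =>
        (measurePreserving_add_right volume (c - ∑ i, e i * y i)).map_eq)
  exact (Measure.measurePreserving_swap.comp h).comp Measure.measurePreserving_swap

lemma PosExpDecay.shearSnd {f : ℝ × (Fin n → ℝ) → ℝ} (hf : PosExpDecay f) (e : Fin n → ℝ) :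
    PosExpDecay (fun z => f (shearSnd e z)) := by
  refine hf.comp (φ := SymTalagrand.shearSnd e) (by unfold SymTalagrand.shearSnd; fun_prop)
    (K := 1 + ‖e‖) (by positivity) (K' := 0) fun z => ?_
  have h1 : |z.1| ≤ ‖SymTalagrand.shearSnd e z‖ := norm_fst_le (SymTalagrand.shearSnd e z)
  have h2 : ‖z.2 + z.1 • e‖ ≤ ‖SymTalagrand.shearSnd e z‖ :=
    norm_snd_le (SymTalagrand.shearSnd e z)
  have h3 : ‖z.2‖ ≤ ‖z.2 + z.1 • e‖ + |z.1| * ‖e‖ := by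
    have := norm_sub_le (z.2 + z.1 • e) (z.1 • e)
    rwa [add_sub_cancel_right, norm_smul, Real.norm_eq_abs] at this
  have h4 := norm_nonneg e
  have h5 := norm_nonneg (SymTalagrand.shearSnd e z)
  rw [add_zero, Prod.norm_def, max_le_iff, Real.norm_eq_abs]
  constructor <;> nlinarith

lemma PosExpDecay.shearFst {f : ℝ × (Fin n → ℝ) → ℝ} (hf : PosExpDecay f) (e : Fin n → ℝ)
    (c : ℝ) : PosExpDecay (fun z => f (shearFst e c z)) := by
  have h0 : 0 ≤ ∑ i, |e i| := Finset.sum_nonneg fun i _ => abs_nonneg _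
  refine hf.comp (φ := SymTalagrand.shearFst e c) (by unfold SymTalagrand.shearFst; fun_prop)
    (K := 1 + ∑ i, |e i|) (by positivity) (K' := |c|) fun z => ?_
  have h1 : |z.1 + (c - ∑ i, e i * z.2 i)| ≤ ‖SymTalagrand.shearFst e c z‖ :=
    norm_fst_le (SymTalagrand.shearFst e c z)
  have h2 : ‖z.2‖ ≤ ‖SymTalagrand.shearFst e c z‖ := norm_snd_le (SymTalagrand.shearFst e c z)
  have h3 : |∑ i, e i * z.2 i| ≤ (∑ i, |e i|) * ‖z.2‖ := by
    refine (Finset.abs_sum_le_sum_abs _ _).trans ?_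
    rw [Finset.sum_mul]
    refine Finset.sum_le_sum fun i _ => ?_
    rw [abs_mul]
    exact mul_le_mul_of_nonneg_left (norm_le_pi_norm z.2 i) (abs_nonneg _)
  have h5 := norm_nonneg (SymTalagrand.shearFst e c z)
  have h6 : |z.1| ≤ |z.1 + (c - ∑ i, e i * z.2 i)| + |c| + |∑ i, e i * z.2 i| := by
    have := abs_add_three (z.1 + (c - ∑ i, e i * z.2 i)) (-c) (∑ i, e i * z.2 i)
    rw [abs_neg] at this
    refine le_trans (le_of_eq ?_) this
    ring_nf
  have h7 := abs_nonneg c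
  have h8 : (∑ i, |e i|) * ‖z.2‖ ≤ (∑ i, |e i|) * ‖SymTalagrand.shearFst e c z‖ := by gcongr
  rw [Prod.norm_def, max_le_iff, Real.norm_eq_abs]
  constructor <;> nlinarith

lemma map_halfMeasure_shearSnd {f : ℝ × (Fin n → ℝ) → ℝ} (hf : PosExpDecay f)
    (e : Fin n → ℝ) :
    (halfMeasure fun z => f (shearSnd e z)).map (shearSnd e) = halfMeasure f := by
  rw [halfMeasure_eq_restrict, halfMeasure_eq_restrict,
    ← map_densityMeasure_comp hf.cont.measurable (measurePreserving_shearSnd e),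
    Measure.restrict_map (by fun_prop) (measurableSet_Ioi.prod MeasurableSet.univ)]
  congr 1

lemma exists_halfMeasure_shearFst_univ {f : ℝ × (Fin n → ℝ) → ℝ} (hf : PosExpDecay f)
    (e : Fin n → ℝ) {p m : ℝ} (hp : 0 < p) (hpm : p < m)
    (hm : densityMeasure f univ = ENNReal.ofReal m) :
    ∃ c, halfMeasure (fun z => f (shearFst e c z)) univ = ENNReal.ofReal p := by
  have hg := hf.shearFst e 0
  set g := fun z => f (shearFst e 0 z) with hgdef
  have hgu : densityMeasure g univ = ENNReal.ofReal m := by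
    rw [← hm, ← map_densityMeasure_comp hf.cont.measurable (measurePreserving_shearFst e 0),
      Measure.map_apply (by fun_prop) MeasurableSet.univ, preimage_univ]
  have hswap : PosExpDecay (fun q : (Fin n → ℝ) × ℝ => g (q.2, q.1)) :=
    hg.comp (φ := fun q : (Fin n → ℝ) × ℝ => (q.2, q.1)) (by fun_prop) one_pos (K' := 0)
      fun q => by simp [Prod.norm_def, max_comm]
  have hh := hswap.marginal volume (S := univ)
    (isOpen_univ.measure_pos volume univ_nonempty).ne'
  simp only [Measure.restrict_univ] at hh
  have hhu : ∫ r, ∫ y, g (r, y) = m := by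
    have h1 := hg.densityMeasure_univ
    rw [hgu, Measure.volume_eq_prod, integral_prod _ (by
      rw [← Measure.volume_eq_prod]; exact hg.integrable volume)] at h1
    exact ((ENNReal.ofReal_eq_ofReal_iff (hp.trans hpm).le
      (integral_nonneg fun r => (hh.pos r).le)).1 h1).symm
  obtain ⟨c, -, hc⟩ := exists_setIntegral_inter_Iic_eq isOpen_univ ordConnected_univ
    (hh.integrable volume) (u := m - p) (by linarith)
    (by rw [Measure.restrict_univ, hhu]; linarith)
  refine ⟨c, ?_⟩
  have hm1 := hg.cont.measurable
  have hcomp : ∀ z, f (shearFst e c z) = g (z.1 + c, z.2) := by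
    intro z
    simp only [hgdef, shearFst]
    ring_nf
  have hgc := hf.shearFst e c
  rw [← setLIntegral_one, setLIntegral_univ, lintegral_halfMeasure hgc (by fun_prop)]
  simp only [one_mul, hcomp]
  rw [lintegral_lintegral_swap (by fun_prop)]
  have h1 : ∀ r, ∫⁻ y, ENNReal.ofReal (g (r, y)) = ENNReal.ofReal (∫ y, g (r, y)) := fun r => by
    rw [ofReal_integral_eq_lintegral_ofReal _ (ae_of_all _ fun y => (hg.pos _).le)]
    refine (hg.comp (φ := fun y => (r, y)) (by fun_prop) one_pos (K' := 0) fun y => ?_).integrable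
      volume
    simp [Prod.norm_def]
  simp only [h1]
  have h2 := (measurePreserving_add_right volume c).setLIntegral_comp_preimage
    (f := fun r => ENNReal.ofReal (∫ y, g (r, y))) (s := Ioi c) measurableSet_Ioi
    (by have := hh.cont.measurable; fun_prop)
  have h3 : (fun r => r + c) ⁻¹' Ioi c = Ioi 0 := by ext r; simp
  rw [h3] at h2
  rw [h2, ← ofReal_integral_eq_lintegral_ofReal (hh.integrable volume).integrableOn
    (ae_of_all _ fun r => (hh.pos r).le)]
  congr 1
  have h4 := integral_add_compl (measurableSet_Iic (a := c)) (hh.integrable volume)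
  rw [compl_Iic, hhu] at h4
  rw [univ_inter] at hc
  linarith

end Shear

section Induction

variable {n : ℕ} {f g : ℝ × (Fin n → ℝ) → ℝ}

/-- The Euclidean pairing on `ℝ × ℝⁿ`. -/
def pairing (w : (ℝ × (Fin n → ℝ)) × (ℝ × (Fin n → ℝ))) : ℝ :=
  w.1.1 * w.2.1 + ∑ i, w.1.2 i * w.2.2 i

@[fun_prop]
lemma measurable_pairing : Measurable (pairing (n := n)) := by unfold pairing; fun_prop

lemma abs_pairing_le (w : (ℝ × (Fin n → ℝ)) × (ℝ × (Fin n → ℝ))) :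
    |pairing w| ≤ (n + 1) * (‖w.1‖ ^ 2 + ‖w.2‖ ^ 2) := by
  have h1 : |w.1.1 * w.2.1| ≤ 1 * (‖w.1‖ ^ 2 + ‖w.2‖ ^ 2) :=
    abs_mul_le_sq_add_sq (norm_fst_le w.1) (norm_fst_le w.2)
  have h2 : |∑ i, w.1.2 i * w.2.2 i| ≤ ∑ _i : Fin n, 1 * (‖w.1‖ ^ 2 + ‖w.2‖ ^ 2) :=
    (Finset.abs_sum_le_sum_abs _ _).trans (Finset.sum_le_sum fun i _ =>
      abs_mul_le_sq_add_sq ((norm_le_pi_norm w.1.2 i).trans (norm_snd_le w.1))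
        ((norm_le_pi_norm w.2.2 i).trans (norm_snd_le w.2)))
  rw [Finset.sum_const, Finset.card_univ, Fintype.card_fin, nsmul_eq_mul] at h2
  refine (abs_add_le _ _).trans ?_
  linarith

lemma integrable_pairing {ρ : Measure ((ℝ × (Fin n → ℝ)) × (ℝ × (Fin n → ℝ)))}
    (h1 : Integrable (fun x => ‖x‖ ^ 2) (ρ.map Prod.fst))
    (h2 : Integrable (fun x => ‖x‖ ^ 2) (ρ.map Prod.snd)) : Integrable pairing ρ :=
  integrable_of_map_sq measurable_pairing h1 h2 abs_pairing_le

lemma mul_log_add_mul_log_ge {p q : ℝ} (hp : 0 < p) (hq : 0 < q) :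
    (p + q) * (Real.log (p + q) - Real.log 2) ≤ p * Real.log p + q * Real.log q := by
  obtain ⟨-, hconv⟩ := Real.convexOn_mul_log
  have h := hconv (mem_Ici.2 hp.le) (mem_Ici.2 hq.le)
    (show (0 : ℝ) ≤ 1 / 2 by norm_num) (show (0 : ℝ) ≤ 1 / 2 by norm_num) (by norm_num)
  simp only [smul_eq_mul] at h
  rw [show 1 / 2 * p + 1 / 2 * q = (p + q) / 2 by ring,
    Real.log_div (by positivity) two_ne_zero] at h
  linarith

lemma exists_prod_coupling_of_half (ih : EntropicCoupling n) (hf : PosExpDecay f)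
    (hg : PosExpDecay g) {p q : ℝ} (hp : 0 < p) (hq : 0 < q)
    (hpf : halfMeasure f univ = ENNReal.ofReal p) (hpg : halfMeasure g univ = ENNReal.ofReal p)
    (hqf : halfMeasure (fun z => f (reflectFst z)) univ = ENNReal.ofReal q)
    (hqg : halfMeasure (fun z => g (reflectFst z)) univ = ENNReal.ofReal q)
    (hc1 : ∀ i, ∫ z, z.2 i ∂halfMeasure f = 0)
    (hc2 : ∀ i, ∫ z, z.2 i ∂halfMeasure (fun z => f (reflectFst z)) = 0) :
    ∃ ρ : Measure ((ℝ × (Fin n → ℝ)) × (ℝ × (Fin n → ℝ))),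
      ρ.map Prod.fst = densityMeasure f ∧ ρ.map Prod.snd = densityMeasure g ∧
      - ∫ x, Real.log (f x) ∂densityMeasure f - ∫ x, Real.log (g x) ∂densityMeasure g ≤
        (p + q) * ((n + 1) * Real.log (2 * Real.pi) - 2 * Real.log (p + q)) +
          ∫ w, pairing w ∂ρ := by
  obtain ⟨ρ₁, h11, h12, h1⟩ := exists_half_coupling ih hf hg hp hpf hpg hc1
  obtain ⟨ρ₂, h21, h22, h2⟩ := exists_half_coupling ih hf.reflectFst hg.reflectFst hq hqf hqg hc2
  have hN : Measurable (Prod.map (reflectFst (n := n)) (reflectFst (n := n))) := by fun_prop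
  have hmf := hf.cont.measurable
  have hmg := hg.cont.measurable
  have i1 : Integrable pairing ρ₁ := integrable_pairing
    (by rw [h11]; exact hf.integrable_norm_sq_densityMeasure.mono_measure (halfMeasure_le _))
    (by rw [h12]; exact hg.integrable_norm_sq_densityMeasure.mono_measure (halfMeasure_le _))
  have i2 : Integrable pairing ρ₂ := integrable_pairing
    (by
      rw [h21]
      exact hf.reflectFst.integrable_norm_sq_densityMeasure.mono_measure (halfMeasure_le _))
    (by
      rw [h22]
      exact hg.reflectFst.integrable_norm_sq_densityMeasure.mono_measure (halfMeasure_le _))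
  have hpN : ∀ w, pairing (Prod.map (reflectFst (n := n)) reflectFst w) = pairing w := fun w => by
    simp [pairing, reflectFst]
  have i3 : Integrable pairing (ρ₂.map (Prod.map (reflectFst (n := n)) reflectFst)) := by
    rw [integrable_map_measure measurable_pairing.aestronglyMeasurable hN.aemeasurable]
    exact i2.congr (ae_of_all _ fun w => (hpN w).symm)
  refine ⟨ρ₁ + ρ₂.map (Prod.map reflectFst reflectFst), ?_, ?_, ?_⟩
  · rw [Measure.map_add _ _ measurable_fst, h11, Measure.map_map measurable_fst hN,
      densityMeasure_eq_half_add hf, ← h21, Measure.map_map measurable_reflectFst measurable_fst]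
    rfl
  · rw [Measure.map_add _ _ measurable_snd, h12, Measure.map_map measurable_snd hN,
      densityMeasure_eq_half_add hg, ← h22, Measure.map_map measurable_reflectFst measurable_snd]
    rfl
  · rw [integral_add_measure i1 i3, integral_map hN.aemeasurable
        measurable_pairing.aestronglyMeasurable,
      integral_densityMeasure_eq_half_add hf (by fun_prop) hf.integrable_log_densityMeasure,
      integral_densityMeasure_eq_half_add hg (by fun_prop) hg.integrable_log_densityMeasure]
    simp only [hpN]
    have := mul_log_add_mul_log_ge hp hq
    change _ ≤ _ + ∫ w, pairing w ∂ρ₁ at h1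
    change _ ≤ _ + ∫ w, pairing w ∂ρ₂ at h2
    linarith

lemma integral_fst_halfMeasure_pos (hf : PosExpDecay f) : 0 < ∫ z, z.1 ∂halfMeasure f := by
  have hi : Integrable (fun z : ℝ × (Fin n → ℝ) => z.1) (halfMeasure f) :=
    (hf.integrable_densityMeasure_of_le_norm (C := 1) (by fun_prop) fun z => by
      rw [one_mul]; exact norm_fst_le z).mono_measure (halfMeasure_le f)
  have hpos : ∀ᵐ z ∂halfMeasure f, 0 < z.1 := by
    rw [halfMeasure_eq_restrict]
    filter_upwards [ae_restrict_mem (measurableSet_Ioi.prod MeasurableSet.univ)] with z hz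
    exact hz.1
  rw [integral_pos_iff_support_of_nonneg_ae (hpos.mono fun z hz => hz.le) hi]
  have h1 : halfMeasure f (Function.support fun z : ℝ × (Fin n → ℝ) => z.1)
      = halfMeasure f univ := by
    refine measure_congr ?_
    filter_upwards [hpos] with z hz
    exact propext ⟨fun _ => trivial, fun _ => hz.ne'⟩
  rw [h1, hf.halfMeasure_univ, ENNReal.ofReal_pos]
  have := hf.halfMarginal.integral_pos volume (S := univ)
    (isOpen_univ.measure_pos volume univ_nonempty).ne'
  rwa [Measure.restrict_univ] at this

lemma integrable_coord (hf : PosExpDecay f) (i : Fin n) :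
    Integrable (fun z : ℝ × (Fin n → ℝ) => z.2 i) (densityMeasure f) :=
  hf.integrable_densityMeasure_of_le_norm (C := 1) (by fun_prop) fun z => by
    rw [one_mul]; exact (norm_le_pi_norm z.2 i).trans (norm_snd_le z)

lemma integrable_fst (hf : PosExpDecay f) :
    Integrable (fun z : ℝ × (Fin n → ℝ) => z.1) (densityMeasure f) :=
  hf.integrable_densityMeasure_of_le_norm (C := 1) (by fun_prop) fun z => by
    rw [one_mul]; exact norm_fst_le z

set_option maxHeartbeats 600000 in
lemma exists_prod_coupling (ih : EntropicCoupling n) (hf : PosExpDecay f) (hg : PosExpDecay g)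
    {m : ℝ} (hm : 0 < m) (hmf : densityMeasure f univ = ENNReal.ofReal m)
    (hmg : densityMeasure g univ = ENNReal.ofReal m)
    (hc0 : ∫ z, z.1 ∂densityMeasure f = 0) (hc : ∀ i, ∫ z, z.2 i ∂densityMeasure f = 0) :
    ∃ ρ : Measure ((ℝ × (Fin n → ℝ)) × (ℝ × (Fin n → ℝ))),
      ρ.map Prod.fst = densityMeasure f ∧ ρ.map Prod.snd = densityMeasure g ∧
      - ∫ x, Real.log (f x) ∂densityMeasure f - ∫ x, Real.log (g x) ∂densityMeasure g ≤
        m * ((n + 1) * Real.log (2 * Real.pi) - 2 * Real.log m) + ∫ w, pairing w ∂ρ := by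
  have hT := integral_fst_halfMeasure_pos hf
  have hmf0 := hf.cont.measurable
  have hmg0 := hg.cont.measurable
  set e : Fin n → ℝ := fun i => (∫ z, z.2 i ∂halfMeasure f) / ∫ z, z.1 ∂halfMeasure f with he
  have hA := measurePreserving_shearSnd e
  have hf' := hf.shearSnd e
  set f' := fun z => f (shearSnd e z) with hf'def
  have hmapf : (densityMeasure f').map (shearSnd e) = densityMeasure f :=
    map_densityMeasure_comp hmf0 hA
  have hmaph : (halfMeasure f').map (shearSnd e) = halfMeasure f :=
    map_halfMeasure_shearSnd hf e
  have hcoord : ∀ i, ∀ z : ℝ × (Fin n → ℝ), z.2 i = (shearSnd e z).2 i - (shearSnd e z).1 * e i :=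
    fun i z => by simp [shearSnd]
  have hmc : ∀ i, Measurable fun z : ℝ × (Fin n → ℝ) => z.2 i - z.1 * e i := fun i => by fun_prop
  have hd1 : ∀ i, ∫ z, z.2 i ∂halfMeasure f' = 0 := fun i => by
    have h1 : ∫ z, z.2 i ∂halfMeasure f' = ∫ z, (z.2 i - z.1 * e i) ∂halfMeasure f := by
      rw [← hmaph, integral_map hA.measurable.aemeasurable (hmc i).aestronglyMeasurable]
      exact integral_congr_ae (ae_of_all _ fun z => hcoord i z)
    rw [h1, integral_sub ((integrable_coord hf i).mono_measure (halfMeasure_le f))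
      (((integrable_fst hf).mono_measure (halfMeasure_le f)).mul_const _), integral_mul_const, he]
    field_simp
    ring
  have hd : ∀ i, ∫ z, z.2 i ∂densityMeasure f' = 0 := fun i => by
    have h1 : ∫ z, z.2 i ∂densityMeasure f' = ∫ z, (z.2 i - z.1 * e i) ∂densityMeasure f := by
      rw [← hmapf, integral_map hA.measurable.aemeasurable (hmc i).aestronglyMeasurable]
      exact integral_congr_ae (ae_of_all _ fun z => hcoord i z)
    rw [h1, integral_sub (integrable_coord hf i) ((integrable_fst hf).mul_const _),
      integral_mul_const, hc i, hc0, zero_mul, sub_zero]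
  have hd2 : ∀ i, ∫ z, z.2 i ∂halfMeasure (fun z => f' (reflectFst z)) = 0 := fun i => by
    have h1 := integral_densityMeasure_eq_half_add hf' (u := fun z => z.2 i) (by fun_prop)
      (integrable_coord hf' i)
    rw [hd i, hd1 i, zero_add] at h1
    exact h1.symm
  have hintg : ∀ {h : (Fin n → ℝ) → ℝ}, PosExpDecay h → 0 < ∫ x, h x := fun {h} hh => by
    have := hh.integral_pos volume (S := univ)
      (isOpen_univ.measure_pos volume univ_nonempty).ne'
    rwa [Measure.restrict_univ] at this
  have hsum : ∀ {h : ℝ × (Fin n → ℝ) → ℝ}, PosExpDecay h → densityMeasure h univ =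
      halfMeasure h univ + halfMeasure (fun z => h (reflectFst z)) univ := fun {h} hh => by
    rw [densityMeasure_eq_half_add hh, Measure.add_apply,
      Measure.map_apply measurable_reflectFst MeasurableSet.univ, preimage_univ]
  have hp := hintg hf'.halfMarginal
  have hq := hintg hf'.reflectFst.halfMarginal
  have hpf := hf'.halfMeasure_univ
  have hqf := hf'.reflectFst.halfMeasure_univ
  set p := ∫ x, halfMarginal f' x
  set q := ∫ x, halfMarginal (fun z => f' (reflectFst z)) x
  have hmf' : densityMeasure f' univ = ENNReal.ofReal m := by
    rw [← hmf, ← hmapf, Measure.map_apply hA.measurable MeasurableSet.univ, preimage_univ]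
  have hpq : p + q = m := by
    have h1 := hsum hf'
    rw [hmf', hpf, hqf, ← ENNReal.ofReal_add hp.le hq.le,
      ENNReal.ofReal_eq_ofReal_iff hm.le (by positivity)] at h1
    exact h1.symm
  obtain ⟨c, hpg⟩ := exists_halfMeasure_shearFst_univ hg e hp (by linarith) hmg
  have hB := measurePreserving_shearFst e c
  have hg' := hg.shearFst e c
  set g' := fun z => g (shearFst e c z) with hg'def
  have hmapg : (densityMeasure g').map (shearFst e c) = densityMeasure g :=
    map_densityMeasure_comp hmg0 hB
  have hqg : halfMeasure (fun z => g' (reflectFst z)) univ = ENNReal.ofReal q := by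
    have h1 := hsum hg'
    have h2 : densityMeasure g' univ = ENNReal.ofReal m := by
      rw [← hmg, ← hmapg, Measure.map_apply hB.measurable MeasurableSet.univ, preimage_univ]
    rw [h2, hpg, ← hpq, ENNReal.ofReal_add hp.le hq.le] at h1
    exact ((ENNReal.add_right_inj ENNReal.ofReal_ne_top).1 h1).symm
  obtain ⟨ρ, hρ1, hρ2, hρ⟩ := exists_prod_coupling_of_half ih hf' hg' hp hq hpf hpg hqf hqg hd1 hd2
  have hAB : Measurable (Prod.map (shearSnd e) (shearFst e c)) :=
    hA.measurable.prodMap hB.measurable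
  have hpair : ∀ w, pairing (Prod.map (shearSnd e) (shearFst e c) w) = pairing w + c * w.1.1 :=
    fun w => by
      simp only [pairing, Prod.map, shearSnd, shearFst, Pi.add_apply, Pi.smul_apply, smul_eq_mul,
        add_mul, Finset.sum_add_distrib, mul_assoc, ← Finset.mul_sum]
      ring
  have i1 : Integrable pairing ρ := integrable_pairing
    (by rw [hρ1]; exact hf'.integrable_norm_sq_densityMeasure)
    (by rw [hρ2]; exact hg'.integrable_norm_sq_densityMeasure)
  have i2 : Integrable (fun z : ℝ × (Fin n → ℝ) => z.1) (ρ.map Prod.fst) := by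
    rw [hρ1]; exact integrable_fst hf'
  have i3 : Integrable (fun w : (ℝ × (Fin n → ℝ)) × (ℝ × (Fin n → ℝ)) => w.1.1) ρ :=
    i2.comp_measurable measurable_fst
  have z1 : ∫ w, w.1.1 ∂ρ = 0 := by
    have h1 : ∫ w, w.1.1 ∂ρ = ∫ z, z.1 ∂densityMeasure f' := by
      rw [← hρ1, integral_map (by fun_prop) i2.aestronglyMeasurable]
    rw [h1, ← hc0, ← hmapf, integral_map hA.measurable.aemeasurable
      measurable_fst.aestronglyMeasurable]
    rfl
  refine ⟨ρ.map (Prod.map (shearSnd e) (shearFst e c)), ?_, ?_, ?_⟩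
  · rw [Measure.map_map measurable_fst hAB, ← hmapf, ← hρ1,
      Measure.map_map hA.measurable measurable_fst]
    rfl
  · rw [Measure.map_map measurable_snd hAB, ← hmapg, ← hρ2,
      Measure.map_map hB.measurable measurable_snd]
    rfl
  · rw [integral_map hAB.aemeasurable measurable_pairing.aestronglyMeasurable]
    simp only [hpair]
    rw [integral_add i1 (i3.const_mul c), integral_const_mul, z1, mul_zero, add_zero]
    have l1 : ∫ x, Real.log (f x) ∂densityMeasure f = ∫ x, Real.log (f' x) ∂densityMeasure f' := by
      rw [← hmapf, integral_map hA.measurable.aemeasurable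
        (show Measurable fun x => Real.log (f x) by fun_prop).aestronglyMeasurable]
    have l2 : ∫ x, Real.log (g x) ∂densityMeasure g = ∫ x, Real.log (g' x) ∂densityMeasure g' := by
      rw [← hmapg, integral_map hB.measurable.aemeasurable
        (show Measurable fun x => Real.log (g x) by fun_prop).aestronglyMeasurable]
    rw [l1, l2, ← hpq]
    exact hρ

lemma entropicCoupling_zero : EntropicCoupling 0 := by
  intro f g hf hg m hm hmf hmg _
  have hval : ∀ {h : (Fin 0 → ℝ) → ℝ}, PosExpDecay h →
      densityMeasure h univ = ENNReal.ofReal m → ∀ x, h x = m := fun {h} hh hmh x => by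
    rw [hh.densityMeasure_univ, ENNReal.ofReal_eq_ofReal_iff
      (integral_nonneg fun x => (hh.pos x).le) hm.le] at hmh
    rw [← hmh, Subsingleton.elim x default]
    simp [volume_pi, Measure.pi_of_empty (x := default)]
  have hfm := hval hf hmf
  have hgm := hval hg hmg
  have hd : ∀ {h : (Fin 0 → ℝ) → ℝ}, (∀ x, h x = m) →
      densityMeasure h = (ENNReal.ofReal m) • (Measure.dirac default : Measure (Fin 0 → ℝ)) :=
    fun {h} hh => by
      simp only [densityMeasure, hh, withDensity_const, volume_pi,
        Measure.pi_of_empty (x := default)]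
  refine ⟨ENNReal.ofReal m • Measure.dirac default, ?_, ?_, ?_⟩
  · rw [hd hfm, Measure.map_smul, Measure.map_dirac' measurable_fst]; rfl
  · rw [hd hgm, Measure.map_smul, Measure.map_dirac' measurable_snd]; rfl
  · rw [hd hfm, hd hgm]
    simp only [hfm, hgm, integral_const, Finset.univ_eq_empty, Finset.sum_empty, smul_eq_mul]
    simp [Measure.real, ENNReal.toReal_ofReal hm.le]
    linarith

theorem entropicCoupling (n : ℕ) : EntropicCoupling n := by
  induction n with
  | zero => exact entropicCoupling_zero
  | succ n ih =>
    intro f g hf hg m hm hmf hmg hc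
    have hP := measurePreserving_finCons n
    have hmf0 := hf.cont.measurable
    have hmg0 := hg.cont.measurable
    have hmapf := map_densityMeasure_comp hmf0 hP
    have hmapg := map_densityMeasure_comp hmg0 hP
    have hcoord : ∀ i : Fin (n + 1), ∫ p, (Fin.cons p.1 p.2 : Fin (n + 1) → ℝ) i
        ∂densityMeasure (fun p : ℝ × (Fin n → ℝ) => f (Fin.cons p.1 p.2)) = 0 := fun i => by
      rw [← hc i, ← hmapf, integral_map hP.measurable.aemeasurable
        (show Measurable fun x : Fin (n + 1) → ℝ => x i from
          measurable_pi_apply i).aestronglyMeasurable]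
    obtain ⟨ρ, hρ1, hρ2, hρ⟩ := exists_prod_coupling ih hf.finCons hg.finCons hm
      (by rw [← hmf, ← hmapf, Measure.map_apply hP.measurable MeasurableSet.univ, preimage_univ])
      (by rw [← hmg, ← hmapg, Measure.map_apply hP.measurable MeasurableSet.univ, preimage_univ])
      (by simpa using hcoord 0) (fun i => by simpa using hcoord i.succ)
    have hPP := hP.measurable.prodMap hP.measurable
    refine ⟨ρ.map (Prod.map (fun p => Fin.cons p.1 p.2) (fun p => Fin.cons p.1 p.2)), ?_, ?_, ?_⟩
    · rw [Measure.map_map measurable_fst hPP, ← hmapf, ← hρ1,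
        Measure.map_map hP.measurable measurable_fst]
      rfl
    · rw [Measure.map_map measurable_snd hPP, ← hmapg, ← hρ2,
        Measure.map_map hP.measurable measurable_snd]
      rfl
    · rw [← hmapf, ← hmapg, integral_map hP.measurable.aemeasurable
          (show Measurable fun x => Real.log (f x) by fun_prop).aestronglyMeasurable,
        integral_map hP.measurable.aemeasurable
          (show Measurable fun x => Real.log (g x) by fun_prop).aestronglyMeasurable,
        integral_map hPP.aemeasurable (show Measurable
          fun p : (Fin (n + 1) → ℝ) × (Fin (n + 1) → ℝ) => ∑ i, p.1 i * p.2 i by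
            fun_prop).aestronglyMeasurable]
      simpa [Fin.sum_univ_succ, pairing] using hρ

end Induction

section Euclidean

variable {d : ℕ}

lemma measurePreserving_toLp (d : ℕ) :
    MeasurePreserving (WithLp.toLp 2 : (Fin d → ℝ) → EuclideanSpace ℝ (Fin d)) :=
  PiLp.volume_preserving_toLp (Fin d)

lemma PosExpDecay.toLp {f : EuclideanSpace ℝ (Fin d) → ℝ} (hf : PosExpDecay f) :
    PosExpDecay (fun x : Fin d → ℝ => f (WithLp.toLp 2 x)) :=
  hf.comp (φ := fun x : Fin d → ℝ => WithLp.toLp 2 x) (by fun_prop) one_pos (K' := 0) fun x => by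
    rw [one_mul, add_zero]
    exact (pi_norm_le_iff_of_nonneg (norm_nonneg _)).2 fun i =>
      PiLp.norm_apply_le (WithLp.toLp 2 x) i

lemma integral_toLp (f : EuclideanSpace ℝ (Fin d) → ℝ) :
    ∫ x : Fin d → ℝ, f (WithLp.toLp 2 x) = ∫ x, f x :=
  (measurePreserving_toLp d).integral_comp
    (MeasurableEquiv.toLp 2 (Fin d → ℝ)).measurableEmbedding f

theorem prekopa_leindler_euclidean {u v w : EuclideanSpace ℝ (Fin d) → ℝ} (hu : PosExpDecay u)
    (hv : PosExpDecay v) (hw : PosExpDecay w) {a b : ℝ} (ha : 0 < a) (hb : 0 < b)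
    (hab : a + b = 1) (h : ∀ x y, u x ^ a * v y ^ b ≤ w (a • x + b • y)) :
    (∫ x, u x) ^ a * (∫ x, v x) ^ b ≤ ∫ x, w x := by
  have := prekopa_leindler hu.toLp hv.toLp hw.toLp ha hb hab fun x y =>
    h (WithLp.toLp 2 x) (WithLp.toLp 2 y)
  rwa [integral_toLp, integral_toLp, integral_toLp] at this

/-- Minus the logarithm of the standard Gaussian density. -/
noncomputable def gaussPot (x : EuclideanSpace ℝ (Fin d)) : ℝ :=
  ‖x‖ ^ 2 / 2 + d / 2 * Real.log (2 * Real.pi)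

@[fun_prop]
lemma continuous_gaussPot : Continuous (gaussPot (d := d)) := by unfold gaussPot; fun_prop

lemma PosExpDecay.integrable_gaussPot {f : EuclideanSpace ℝ (Fin d) → ℝ} (hf : PosExpDecay f) :
    Integrable gaussPot (densityMeasure f) := by
  have := hf.isFiniteMeasure_densityMeasure
  exact (hf.integrable_norm_sq_densityMeasure.div_const 2).add (integrable_const _)

theorem exists_gaussian_coupling {p q : EuclideanSpace ℝ (Fin d) → ℝ} (hp : PosExpDecay p)
    (hq : PosExpDecay q) (hp1 : ∫ x, p x = 1) (hq1 : ∫ x, q x = 1) (heven : ∀ x, p (-x) = p x) :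
    ∃ ρ : Measure (EuclideanSpace ℝ (Fin d) × EuclideanSpace ℝ (Fin d)),
      ρ.map Prod.fst = densityMeasure p ∧ ρ.map Prod.snd = densityMeasure q ∧
      ∫ w, ‖w.1 - w.2‖ ^ 2 ∂ρ ≤
        2 * ∫ x, (Real.log (p x) + gaussPot x) ∂densityMeasure p +
          2 * ∫ x, (Real.log (q x) + gaussPot x) ∂densityMeasure q := by
  have hT := measurePreserving_toLp d
  have hmp := hp.cont.measurable
  have hmq := hq.cont.measurable
  have hmapp := map_densityMeasure_comp hmp hT
  have hmapq := map_densityMeasure_comp hmq hT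
  obtain ⟨π, h1, h2, h3⟩ := entropicCoupling d _ _ hp.toLp hq.toLp 1 one_pos
    (by rw [hp.toLp.densityMeasure_univ, integral_toLp, hp1])
    (by rw [hq.toLp.densityMeasure_univ, integral_toLp, hq1]) (fun i => by
      rw [hp.toLp.integral_densityMeasure]
      have h := integral_neg_eq_self (fun x : Fin d → ℝ => p (WithLp.toLp 2 x) * x i) volume
      simp only [WithLp.toLp_neg, heven, Pi.neg_apply, mul_neg, integral_neg] at h
      linarith)
  have hTT := hT.measurable.prodMap hT.measurable
  set ρ := π.map (Prod.map (WithLp.toLp 2 : (Fin d → ℝ) → EuclideanSpace ℝ (Fin d))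
    (WithLp.toLp 2 : (Fin d → ℝ) → EuclideanSpace ℝ (Fin d))) with hρ
  have hρ1 : ρ.map Prod.fst = densityMeasure p := by
    rw [hρ, Measure.map_map measurable_fst hTT, ← hmapp, ← h1,
      Measure.map_map hT.measurable measurable_fst]
    rfl
  have hρ2 : ρ.map Prod.snd = densityMeasure q := by
    rw [hρ, Measure.map_map measurable_snd hTT, ← hmapq, ← h2,
      Measure.map_map hT.measurable measurable_snd]
    rfl
  refine ⟨ρ, hρ1, hρ2, ?_⟩
  have hip : Integrable (fun x => ‖x‖ ^ 2) (ρ.map Prod.fst) := by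
    rw [hρ1]; exact hp.integrable_norm_sq_densityMeasure
  have hiq : Integrable (fun x => ‖x‖ ^ 2) (ρ.map Prod.snd) := by
    rw [hρ2]; exact hq.integrable_norm_sq_densityMeasure
  have hii : Integrable (fun w : EuclideanSpace ℝ (Fin d) × EuclideanSpace ℝ (Fin d) =>
      ⟪w.1, w.2⟫) ρ := integrable_of_map_sq (C := 1) (by fun_prop) hip hiq fun w => by
    have := abs_real_inner_le_norm w.1 w.2
    nlinarith [sq_nonneg (‖w.1‖ - ‖w.2‖), sq_nonneg ‖w.1‖, sq_nonneg ‖w.2‖]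
  have e1 : ∫ w, ‖w.1 - w.2‖ ^ 2 ∂ρ = ∫ x, ‖x‖ ^ 2 ∂densityMeasure p +
      ∫ x, ‖x‖ ^ 2 ∂densityMeasure q - 2 * ∫ w, ⟪w.1, w.2⟫ ∂ρ := by
    have j1 : Integrable (fun w : EuclideanSpace ℝ (Fin d) × EuclideanSpace ℝ (Fin d) =>
        ‖w.1‖ ^ 2) ρ := hip.comp_measurable measurable_fst
    have j2 : Integrable (fun w : EuclideanSpace ℝ (Fin d) × EuclideanSpace ℝ (Fin d) =>
        ‖w.2‖ ^ 2) ρ := hiq.comp_measurable measurable_snd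
    have j3 : Integrable (fun w : EuclideanSpace ℝ (Fin d) × EuclideanSpace ℝ (Fin d) =>
        ‖w.1‖ ^ 2 + ‖w.2‖ ^ 2) ρ := j1.add j2
    rw [← hρ1, ← hρ2, integral_map (by fun_prop) hip.aestronglyMeasurable,
      integral_map (by fun_prop) hiq.aestronglyMeasurable, ← integral_const_mul,
      ← integral_add j1 j2, ← integral_sub j3 (hii.const_mul 2)]
    refine integral_congr_ae (ae_of_all _ fun w => ?_)
    simp only [norm_sub_sq_real]
    ring
  have e2 : ∫ w, ⟪w.1, w.2⟫ ∂ρ = ∫ w, ∑ i, w.1 i * w.2 i ∂π := by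
    rw [hρ, integral_map hTT.aemeasurable
      (show Measurable fun w : EuclideanSpace ℝ (Fin d) × EuclideanSpace ℝ (Fin d) =>
        ⟪w.1, w.2⟫ by fun_prop).aestronglyMeasurable]
    refine integral_congr_ae (ae_of_all _ fun w => ?_)
    simp [PiLp.inner_apply, mul_comm]
  have e3 : ∀ {h : EuclideanSpace ℝ (Fin d) → ℝ}, PosExpDecay h → ∫ x, h x = 1 →
      2 * ∫ x, (Real.log (h x) + gaussPot x) ∂densityMeasure h =
        2 * ∫ x, Real.log (h (WithLp.toLp 2 x)) ∂densityMeasure (fun x => h (WithLp.toLp 2 x)) +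
          ∫ x, ‖x‖ ^ 2 ∂densityMeasure h + d * Real.log (2 * Real.pi) := fun {h} hh hh1 => by
    have hmh := hh.cont.measurable
    have hfin : IsProbabilityMeasure (densityMeasure h) :=
      ⟨by rw [hh.densityMeasure_univ, hh1, ENNReal.ofReal_one]⟩
    rw [integral_add hh.integrable_log_densityMeasure hh.integrable_gaussPot]
    simp only [gaussPot]
    rw [integral_add (hh.integrable_norm_sq_densityMeasure.div_const 2) (integrable_const _),
      integral_div, integral_const, probReal_univ, one_smul,
      ← map_densityMeasure_comp hmh hT, integral_map hT.measurable.aemeasurable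
        (show Measurable fun x => Real.log (h x) by fun_prop).aestronglyMeasurable]
    ring
  rw [e1, e2, e3 hp hp1, e3 hq hq1]
  rw [Real.log_one] at h3
  linarith

end Euclidean

section Potential

/-- `d`-dimensional Euclidean space. -/
abbrev Euc (d : ℕ) := EuclideanSpace ℝ (Fin d)

/-- A continuous function with at least quadratic growth. -/
structure QuadPot {E : Type*} [NormedAddCommGroup E] (Ψ : E → ℝ) : Prop where
  cont : Continuous Ψ
  growth : ∃ β C : ℝ, 0 < β ∧ ∀ y, β * ‖y‖ ^ 2 - C ≤ Ψ y

/-- A continuous even function which is minimal at the origin and has at most quadratic growth. -/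
structure EvenPot {E : Type*} [NormedAddCommGroup E] (h : E → ℝ) : Prop where
  cont : Continuous h
  even : ∀ x, h (-x) = h x
  zero_le : ∀ x, h 0 ≤ h x
  upper : ∃ C : ℝ, ∀ x, h x ≤ C * (1 + ‖x‖ ^ 2)

lemma QuadPot.posExpDecay {E : Type*} [NormedAddCommGroup E] {Ψ : E → ℝ} (h : QuadPot Ψ) :
    PosExpDecay (fun y => Real.exp (-Ψ y)) := by
  obtain ⟨β, C, hβ, hb⟩ := h.growth
  refine ⟨Real.continuous_exp.comp h.cont.neg, fun y => Real.exp_pos _, Real.exp (C + β), β, hβ,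
    fun y => ?_⟩
  rw [← Real.exp_add, Real.exp_le_exp]
  nlinarith [hb y, sq_nonneg (‖y‖ - 1), norm_nonneg y]

lemma QuadPot.add_evenPot {E : Type*} [NormedAddCommGroup E] {R b : E → ℝ} (hR : QuadPot R)
    (hb : EvenPot b) : QuadPot (fun y => b y + R y) := by
  obtain ⟨β, C, hβ, h⟩ := hR.growth
  exact ⟨hb.cont.add hR.cont, β, C - b 0, hβ, fun y => by linarith [h y, hb.zero_le y]⟩

lemma EvenPot.exists_abs_le {E : Type*} [NormedAddCommGroup E] {h : E → ℝ} (hh : EvenPot h) :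
    ∃ C : ℝ, ∀ x, |h x| ≤ C * (1 + ‖x‖ ^ 2) := by
  obtain ⟨C, hC⟩ := hh.upper
  refine ⟨|C| + |h 0|, fun x => abs_le.2 ⟨?_, ?_⟩⟩
  · nlinarith [neg_abs_le (h 0), hh.zero_le x, abs_nonneg C, abs_nonneg (h 0), sq_nonneg ‖x‖,
      mul_nonneg (abs_nonneg C) (sq_nonneg ‖x‖), mul_nonneg (abs_nonneg (h 0)) (sq_nonneg ‖x‖)]
  · nlinarith [hC x, le_abs_self C, abs_nonneg (h 0), sq_nonneg ‖x‖,
      mul_nonneg (abs_nonneg (h 0)) (sq_nonneg ‖x‖),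
      mul_le_mul_of_nonneg_right (le_abs_self C) (sq_nonneg ‖x‖)]

variable {d : ℕ} {Ψ : Euc d → ℝ} {s : ℝ}

lemma mul_inner_le (s : ℝ) {β : ℝ} (hβ : 0 < β) (x y : Euc d) :
    s * ⟪x, y⟫ ≤ s ^ 2 / (2 * β) * ‖x‖ ^ 2 + β / 2 * ‖y‖ ^ 2 := by
  have h1 : s * ⟪x, y⟫ ≤ |s| * (‖x‖ * ‖y‖) := by
    refine (le_abs_self _).trans ?_
    rw [abs_mul]
    gcongr
    exact abs_real_inner_le_norm x y
  have h2 : s ^ 2 / (2 * β) * ‖x‖ ^ 2 + β / 2 * ‖y‖ ^ 2 - |s| * (‖x‖ * ‖y‖) =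
      (|s| * ‖x‖ - β * ‖y‖) ^ 2 / (2 * β) := by
    rw [← sq_abs s]
    field_simp
    ring
  have h3 : 0 ≤ (|s| * ‖x‖ - β * ‖y‖) ^ 2 / (2 * β) := by positivity
  linarith

lemma QuadPot.tilt (h : QuadPot Ψ) (s : ℝ) (x : Euc d) :
    QuadPot (fun y => Ψ y - s * ⟪x, y⟫) := by
  obtain ⟨β, C, hβ, hb⟩ := h.growth
  have := h.cont
  refine ⟨by fun_prop, β / 2, C + s ^ 2 / (2 * β) * ‖x‖ ^ 2, by positivity, fun y => ?_⟩
  linarith [hb y, mul_inner_le s hβ x y]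

lemma QuadPot.tilt_posExpDecay (h : QuadPot Ψ) (s : ℝ) (x : Euc d) :
    PosExpDecay (fun y => Real.exp (s * ⟪x, y⟫ - Ψ y)) := by
  simpa only [neg_sub] using (h.tilt s x).posExpDecay

lemma QuadPot.exists_joint_posExpDecay (h : QuadPot Ψ) (s : ℝ) : ∃ M : ℝ,
    PosExpDecay (fun p : Euc d × Euc d => Real.exp (s * ⟪p.2, p.1⟫ - Ψ p.1 - M * ‖p.2‖ ^ 2)) := by
  obtain ⟨β, C, hβ, hb⟩ := h.growth
  have := h.cont
  refine ⟨s ^ 2 / (2 * β) + β / 2, ?_⟩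
  have hq : QuadPot (fun p : Euc d × Euc d =>
      -(s * ⟪p.2, p.1⟫ - Ψ p.1 - (s ^ 2 / (2 * β) + β / 2) * ‖p.2‖ ^ 2)) := by
    refine ⟨by fun_prop, β / 2, C, by positivity, fun p => ?_⟩
    have h1 : ‖p‖ ^ 2 ≤ ‖p.1‖ ^ 2 + ‖p.2‖ ^ 2 := by
      rw [Prod.norm_def]
      rcases max_cases ‖p.1‖ ‖p.2‖ with h | h <;> rw [h.1] <;> nlinarith [sq_nonneg ‖p.1‖,
        sq_nonneg ‖p.2‖]
    nlinarith [hb p.1, mul_inner_le s hβ p.2 p.1]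
  simpa only [neg_neg] using hq.posExpDecay

/-- The logarithmic Laplace transform of `exp (-Ψ)`. -/
noncomputable def logLap (s : ℝ) (Ψ : Euc d → ℝ) (x : Euc d) : ℝ :=
  Real.log (∫ y, Real.exp (s * ⟪x, y⟫ - Ψ y))

lemma PosExpDecay.integral_pos' {f : Euc d → ℝ} (hf : PosExpDecay f) : 0 < ∫ x, f x := by
  have := hf.integral_pos volume (S := univ) (isOpen_univ.measure_pos volume univ_nonempty).ne'
  rwa [Measure.restrict_univ] at this

lemma QuadPot.exp_logLap (h : QuadPot Ψ) (s : ℝ) (x : Euc d) :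
    Real.exp (logLap s Ψ x) = ∫ y, Real.exp (s * ⟪x, y⟫ - Ψ y) :=
  Real.exp_log (h.tilt_posExpDecay s x).integral_pos'

lemma QuadPot.continuous_logLap (h : QuadPot Ψ) (s : ℝ) : Continuous (logLap s Ψ) := by
  obtain ⟨M, hM⟩ := h.exists_joint_posExpDecay s
  have h1 := (hM.marginal volume (S := univ)
    (isOpen_univ.measure_pos volume univ_nonempty).ne')
  simp only [Measure.restrict_univ] at h1
  have h2 : ∀ x, ∫ t, Real.exp (s * ⟪x, t⟫ - Ψ t - M * ‖x‖ ^ 2) =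
      Real.exp (logLap s Ψ x - M * ‖x‖ ^ 2) := fun x => by
    rw [Real.exp_sub, h.exp_logLap, ← integral_div]
    simp only [Real.exp_sub]
  have h3 : ∀ x, logLap s Ψ x =
      Real.log (∫ t, Real.exp (s * ⟪x, t⟫ - Ψ t - M * ‖x‖ ^ 2)) + M * ‖x‖ ^ 2 := fun x => by
    rw [h2, Real.log_exp]; ring
  have h4 : Continuous fun x => Real.log (∫ t, Real.exp (s * ⟪x, t⟫ - Ψ t - M * ‖x‖ ^ 2)) +
      M * ‖x‖ ^ 2 := (h1.cont.log fun x => (h1.pos x).ne').add (by fun_prop)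
  exact h4.congr fun x => (h3 x).symm

lemma QuadPot.evenPot_logLap (h : QuadPot Ψ) (he : ∀ y, Ψ (-y) = Ψ y) (s : ℝ) :
    EvenPot (logLap s Ψ) := by
  have hneg : ∀ x, ∫ y, Real.exp (s * ⟪-x, y⟫ - Ψ y) = ∫ y, Real.exp (s * ⟪x, y⟫ - Ψ y) :=
    fun x => by
      rw [← integral_neg_eq_self (fun y => Real.exp (s * ⟪-x, y⟫ - Ψ y)) volume]
      simp only [inner_neg_neg, he]
  refine ⟨h.continuous_logLap s, fun x => by rw [logLap, hneg, logLap], fun x => ?_, ?_⟩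
  · refine Real.log_le_log (h.tilt_posExpDecay s 0).integral_pos' ?_
    have h1 : ∫ y, (Real.exp (s * ⟪x, y⟫ - Ψ y) + Real.exp (s * ⟪-x, y⟫ - Ψ y)) =
        2 * ∫ y, Real.exp (s * ⟪x, y⟫ - Ψ y) := by
      rw [integral_add ((h.tilt_posExpDecay s x).integrable volume)
        ((h.tilt_posExpDecay s (-x)).integrable volume), hneg]
      ring
    have h2 : ∫ y, 2 * Real.exp (s * ⟪0, y⟫ - Ψ y) ≤
        ∫ y, (Real.exp (s * ⟪x, y⟫ - Ψ y) + Real.exp (s * ⟪-x, y⟫ - Ψ y)) := by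
      refine integral_mono (((h.tilt_posExpDecay s 0).integrable volume).const_mul 2)
        (((h.tilt_posExpDecay s x).integrable volume).add
          ((h.tilt_posExpDecay s (-x)).integrable volume)) fun y => ?_
      simp only [inner_zero_left, inner_neg_left, mul_zero, zero_sub, mul_neg, Real.exp_sub,
        Real.exp_neg]
      have := Real.one_le_cosh (s * ⟪x, y⟫)
      rw [Real.cosh_eq, Real.exp_neg] at this
      have h3 := Real.exp_pos (Ψ y)
      rw [← add_div, ← div_eq_mul_inv 2 _]
      · gcongr
        linarith
    rw [integral_const_mul] at h2
    linarith
  · obtain ⟨β, C, hβ, hb⟩ := h.growth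
    have hQ : QuadPot (fun y : Euc d => β / 2 * ‖y‖ ^ 2 - C) :=
      ⟨by fun_prop, β / 2, C, by positivity, fun y => le_rfl⟩
    set D := ∫ y : Euc d, Real.exp (-(β / 2 * ‖y‖ ^ 2 - C))
    have hD : 0 < D := hQ.posExpDecay.integral_pos'
    refine ⟨s ^ 2 / (2 * β) + |Real.log D|, fun x => ?_⟩
    have h1 : ∫ y, Real.exp (s * ⟪x, y⟫ - Ψ y) ≤ Real.exp (s ^ 2 / (2 * β) * ‖x‖ ^ 2) * D := by
      rw [← integral_const_mul]
      refine integral_mono ((h.tilt_posExpDecay s x).integrable volume)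
        ((hQ.posExpDecay.integrable volume).const_mul _) fun y => ?_
      simp only [← Real.exp_add, Real.exp_le_exp]
      linarith [hb y, mul_inner_le s hβ x y]
    have h2 := Real.log_le_log (h.tilt_posExpDecay s x).integral_pos' h1
    rw [Real.log_mul (Real.exp_pos _).ne' hD.ne', Real.log_exp] at h2
    refine h2.trans ?_
    have h3 : 0 ≤ s ^ 2 / (2 * β) := by positivity
    nlinarith [le_abs_self (Real.log D), mul_nonneg (abs_nonneg (Real.log D)) (sq_nonneg ‖x‖)]

/-- `h - κ ‖·‖² / 2` is convex (`κ` may be negative). -/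
def ModConvex (κ : ℝ) (h : Euc d → ℝ) : Prop :=
  ∀ x y : Euc d, ∀ a b : ℝ, 0 < a → 0 < b → a + b = 1 →
    h (a • x + b • y) + a * b * (κ / 2 * ‖x - y‖ ^ 2) ≤ a * h x + b * h y

lemma ModConvex.add {κ κ' : ℝ} {h h' : Euc d → ℝ} (H : ModConvex κ h) (H' : ModConvex κ' h') :
    ModConvex (κ + κ') (fun x => h x + h' x) := fun x y a b ha hb hab => by
  have := H x y a b ha hb hab
  have := H' x y a b ha hb hab
  dsimp only
  linarith

lemma ModConvex.mono {κ κ' : ℝ} {h : Euc d → ℝ} (H : ModConvex κ h) (hκ : κ' ≤ κ) :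
    ModConvex κ' h := fun x y a b ha hb hab => by
  refine le_trans ?_ (H x y a b ha hb hab)
  gcongr

lemma norm_sq_convexCombo (x y : Euc d) {a b : ℝ} (hab : a + b = 1) :
    ‖a • x + b • y‖ ^ 2 = a * ‖x‖ ^ 2 + b * ‖y‖ ^ 2 - a * b * ‖x - y‖ ^ 2 := by
  rw [norm_add_sq_real, norm_sub_sq_real, norm_smul, norm_smul, mul_pow, mul_pow,
    Real.norm_eq_abs, Real.norm_eq_abs, sq_abs, sq_abs, real_inner_smul_left,
    real_inner_smul_right]
  obtain rfl : b = 1 - a := by linarith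
  ring

lemma modConvex_norm_sq (κ : ℝ) : ModConvex κ (fun x : Euc d => κ / 2 * ‖x‖ ^ 2) :=
  fun x y a b _ _ hab => by
    dsimp only
    rw [norm_sq_convexCombo x y hab]
    apply le_of_eq
    ring

lemma inner_convexCombo (x y x' y' : Euc d) {a b : ℝ} (hab : a + b = 1) :
    a * ⟪x, y⟫ + b * ⟪x', y'⟫ = ⟪a • x + b • x', a • y + b • y'⟫ + a * b * ⟪x - x', y - y'⟫ := by
  simp only [inner_add_left, inner_add_right, inner_sub_left, inner_sub_right,
    real_inner_smul_left, real_inner_smul_right]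
  obtain rfl : b = 1 - a := by linarith
  ring

/-- Log-Laplace transforms of strongly log-concave functions are semi-concave. -/
lemma ModConvex.neg_logLap {κ : ℝ} (hκ : 0 < κ) (hΨ : QuadPot Ψ) (H : ModConvex κ Ψ) (s : ℝ) :
    ModConvex (-(s ^ 2 / κ)) (fun x => -logLap s Ψ x) := fun x₀ x₁ a b ha hb hab => by
  have hu := hΨ.tilt_posExpDecay s x₀
  have hv := hΨ.tilt_posExpDecay s x₁
  set δ := a * b * (s ^ 2 / κ / 2 * ‖x₀ - x₁‖ ^ 2) with hδ
  have hΨ' : QuadPot (fun y => Ψ y - δ) := by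
    obtain ⟨β, C, hβ, hC⟩ := hΨ.growth
    exact ⟨hΨ.cont.sub continuous_const, β, C + δ, hβ, fun y => by linarith [hC y]⟩
  have hw := hΨ'.tilt_posExpDecay s (a • x₀ + b • x₁)
  have key := prekopa_leindler_euclidean hu hv hw ha hb hab fun y₀ y₁ => by
    rw [← Real.exp_mul, ← Real.exp_mul, ← Real.exp_add, Real.exp_le_exp]
    have h1 := H y₀ y₁ a b ha hb hab
    have h2 := inner_convexCombo x₀ y₀ x₁ y₁ hab
    have h3 := mul_inner_le s hκ (x₀ - x₁) (y₀ - y₁)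
    have h4 : a * b * (s * ⟪x₀ - x₁, y₀ - y₁⟫) ≤
        δ + a * b * (κ / 2 * ‖y₀ - y₁‖ ^ 2) := by
      rw [hδ, ← mul_add]
      have : s ^ 2 / κ / 2 = s ^ 2 / (2 * κ) := by field_simp
      rw [this]
      gcongr
    have h5 : s * (a * ⟪x₀, y₀⟫ + b * ⟪x₁, y₁⟫) = s * ⟪a • x₀ + b • x₁, a • y₀ + b • y₁⟫ +
      a * b * (s * ⟪x₀ - x₁, y₀ - y₁⟫) := by rw [h2]; ring
    linarith
  have h1 : ∫ y, Real.exp (s * ⟪a • x₀ + b • x₁, y⟫ - (Ψ y - δ)) =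
      Real.exp δ * Real.exp (logLap s Ψ (a • x₀ + b • x₁)) := by
    rw [hΨ.exp_logLap, ← integral_const_mul]
    congr 1
    ext y
    rw [← Real.exp_add]
    ring_nf
  rw [h1, ← hΨ.exp_logLap, ← hΨ.exp_logLap, ← Real.exp_mul, ← Real.exp_mul, ← Real.exp_add,
    ← Real.exp_add, Real.exp_le_exp] at key
  have h2 : a * b * (-(s ^ 2 / κ) / 2 * ‖x₀ - x₁‖ ^ 2) = -δ := by rw [hδ]; ring
  rw [h2]
  linarith

/-- Log-Laplace transforms of semi-log-convex functions are strongly convex. -/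
lemma ModConvex.logLap {c : ℝ} (hc : 0 < c) (hΨ : QuadPot Ψ)
    (H : ModConvex (-c) (fun x => -Ψ x)) (s : ℝ) : ModConvex (s ^ 2 / c) (logLap s Ψ) :=
  fun y₀ y₁ a b ha hb hab => by
  set yt := a • y₀ + b • y₁ with hyt
  set r := (s / c) • (y₀ - y₁) with hr
  set l₀ := SymTalagrand.logLap s Ψ y₀ with hl₀
  set l₁ := SymTalagrand.logLap s Ψ y₁ with hl₁
  set δ := a * b * (s ^ 2 / c / 2 * ‖y₀ - y₁‖ ^ 2) with hδ
  have i₀ := (hΨ.tilt_posExpDecay s y₀).integrable volume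
  have i₁ := (hΨ.tilt_posExpDecay s y₁).integrable volume
  have hpt : ∀ x, Real.exp (s * ⟪yt, x⟫ - Ψ x) ≤ Real.exp (a * l₀ + b * l₁ - δ) *
      (a * (Real.exp (s * ⟪y₀, x + b • r⟫ - Ψ (x + b • r)) * Real.exp (-l₀)) +
        b * (Real.exp (s * ⟪y₁, x + (-a) • r⟫ - Ψ (x + (-a) • r)) * Real.exp (-l₁))) := fun x => by
    have h1 := H (x + b • r) (x + (-a) • r) a b ha hb hab
    have hz : a • (x + b • r) + b • (x + (-a) • r) = x := by
      obtain rfl : b = 1 - a := by linarith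
      module
    have hdiff : x + b • r - (x + (-a) • r) = r := by
      obtain rfl : b = 1 - a := by linarith
      module
    rw [hz, hdiff] at h1
    have hrn : ‖r‖ ^ 2 = (s / c) ^ 2 * ‖y₀ - y₁‖ ^ 2 := by
      rw [hr, norm_smul, mul_pow, Real.norm_eq_abs, sq_abs]
    have h2 : a * ⟪y₀, x + b • r⟫ + b * ⟪y₁, x + (-a) • r⟫ =
        ⟪yt, x⟫ + a * b * (s / c) * ‖y₀ - y₁‖ ^ 2 := by
      rw [inner_convexCombo _ _ _ _ hab, hz, hdiff, hr, real_inner_smul_right,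
        real_inner_self_eq_norm_sq]
      ring
    obtain ⟨-, hconv⟩ := convexOn_exp
    have h3 := hconv (mem_univ (s * ⟪y₀, x + b • r⟫ - Ψ (x + b • r) - l₀))
      (mem_univ (s * ⟪y₁, x + (-a) • r⟫ - Ψ (x + (-a) • r) - l₁)) ha.le hb.le hab
    simp only [smul_eq_mul] at h3
    simp only [← Real.exp_add]
    simp only [sub_eq_add_neg] at h3 ⊢
    refine le_trans ?_ (mul_le_mul_of_nonneg_left h3 (Real.exp_nonneg _))
    rw [← Real.exp_add, Real.exp_le_exp]
    have h4 : s * ⟪yt, x⟫ = a * (s * ⟪y₀, x + b • r⟫) + b * (s * ⟪y₁, x + (-a) • r⟫) - 2 * δ := by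
      have : s * (a * ⟪y₀, x + b • r⟫ + b * ⟪y₁, x + (-a) • r⟫) =
        s * ⟪yt, x⟫ + 2 * δ := by rw [h2, hδ]; ring
      linarith
    have h5 : a * b * (-c / 2 * ‖r‖ ^ 2) = -δ := by
      rw [hrn, hδ]
      field_simp
    rw [h5] at h1
    linarith
  have hshift : ∀ (y v : Euc d), ∫ x, Real.exp (s * ⟪y, x + v⟫ - Ψ (x + v)) =
      Real.exp (SymTalagrand.logLap s Ψ y) := fun y v => by
    rw [hΨ.exp_logLap, ← integral_add_right_eq_self (fun x => Real.exp (s * ⟪y, x⟫ - Ψ x)) v]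
  have j₀ := (i₀.comp_add_right (b • r)).mul_const (Real.exp (-l₀)) |>.const_mul a
  have j₁ := (i₁.comp_add_right ((-a) • r)).mul_const (Real.exp (-l₁)) |>.const_mul b
  have hI := integral_mono ((hΨ.tilt_posExpDecay s yt).integrable volume)
    ((j₀.add j₁).const_mul (Real.exp (a * l₀ + b * l₁ - δ))) hpt
  rw [← hΨ.exp_logLap, integral_const_mul] at hI
  have h6 := integral_add j₀ j₁
  rw [integral_const_mul, integral_const_mul, integral_mul_const, integral_mul_const, hshift,
    hshift, ← hl₀, ← hl₁, ← Real.exp_add, ← Real.exp_add, add_neg_cancel, add_neg_cancel,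
    Real.exp_zero, mul_one, mul_one, hab] at h6
  simp only [Pi.add_apply] at hI
  rw [h6, mul_one, Real.exp_le_exp] at hI
  linarith

end Potential

section Sinkhorn

variable {d : ℕ}

lemma quadPot_gaussPot : QuadPot (gaussPot (d := d)) :=
  ⟨continuous_gaussPot, 1 / 2, |d / 2 * Real.log (2 * Real.pi)|, by norm_num, fun y => by
    rw [gaussPot]; linarith [neg_abs_le (d / 2 * Real.log (2 * Real.pi))]⟩

lemma gaussPot_neg (x : Euc d) : gaussPot (-x) = gaussPot x := by simp [gaussPot]

lemma modConvex_neg_gaussPot : ModConvex (-1) (fun x : Euc d => -gaussPot x) :=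
  fun x y a b _ _ hab => by
    simp only [gaussPot]
    rw [norm_sq_convexCombo x y hab]
    obtain rfl : b = 1 - a := by linarith
    apply le_of_eq
    ring

lemma integral_exp_neg_gaussPot : ∫ x : Euc d, Real.exp (-gaussPot x) = 1 := by
  have h1 := GaussianFourier.integral_rexp_neg_mul_sq_norm (V := Euc d) (b := 1 / 2) (by norm_num)
  have h2 : ∀ x : Euc d, Real.exp (-gaussPot x) =
      Real.exp (-(1 / 2) * ‖x‖ ^ 2) * Real.exp (-(d / 2 * Real.log (2 * Real.pi))) := fun x => by
    rw [← Real.exp_add, gaussPot]; ring_nf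
  simp only [h2]
  rw [integral_mul_const, h1, finrank_euclideanSpace, Fintype.card_fin,
    Real.rpow_def_of_pos (by positivity), ← Real.exp_add,
    show Real.pi / (1 / 2) = 2 * Real.pi by ring]
  rw [← Real.exp_zero]
  congr 1
  ring

lemma QuadPot.ofReal_exp_logLap_sub {Ψ : Euc d → ℝ} (h : QuadPot Ψ) (s : ℝ) (x : Euc d) (c : ℝ) :
    ENNReal.ofReal (Real.exp (logLap s Ψ x - c)) =
      ∫⁻ y, ENNReal.ofReal (Real.exp (s * ⟪x, y⟫ - Ψ y - c)) := by
  rw [← ofReal_integral_eq_lintegral_ofReal _ (ae_of_all _ fun y => (Real.exp_pos _).le)]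
  · simp only [Real.exp_sub _ c]
    rw [integral_div, h.exp_logLap]
  · simp only [Real.exp_sub _ c]
    exact ((h.tilt_posExpDecay s x).integrable volume).div_const _

lemma lintegral_exp_logLap_swap {Ψ Φ : Euc d → ℝ} (hΨ : QuadPot Ψ) (hΦ : QuadPot Φ) (s : ℝ) :
    ∫⁻ x, ENNReal.ofReal (Real.exp (logLap s Ψ x - Φ x)) =
      ∫⁻ y, ENNReal.ofReal (Real.exp (logLap s Φ y - Ψ y)) := by
  have h1 := hΨ.cont.measurable
  have h2 := hΦ.cont.measurable
  simp only [hΨ.ofReal_exp_logLap_sub, hΦ.ofReal_exp_logLap_sub]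
  rw [lintegral_lintegral_swap (by fun_prop)]
  refine lintegral_congr fun y => lintegral_congr fun x => ?_
  rw [real_inner_comm]
  ring_nf

lemma integral_gauss_nonpos {h : Euc d → ℝ} (hc : Continuous h) {C : ℝ}
    (hC : ∀ x, |h x| ≤ C * (1 + ‖x‖ ^ 2))
    (h1 : ∫⁻ x, ENNReal.ofReal (Real.exp (h x - gaussPot x)) ≤ 1) :
    ∫ x, h x * Real.exp (-gaussPot x) ≤ 0 := by
  have hg := quadPot_gaussPot (d := d)
  have i1 : Integrable fun x => h x * Real.exp (-gaussPot x) :=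
    hg.posExpDecay.integrable_mul_of_le volume hc.measurable hC
  have i2 := hg.posExpDecay.integrable volume
  have i3 : Integrable fun x => Real.exp (h x - gaussPot x) := by
    refine ⟨by fun_prop, ?_⟩
    rw [hasFiniteIntegral_iff_ofReal (ae_of_all _ fun x => (Real.exp_pos _).le)]
    exact h1.trans_lt ENNReal.one_lt_top
  have i4 : ∫ x, Real.exp (h x - gaussPot x) ≤ 1 := by
    rw [integral_eq_lintegral_of_nonneg_ae (ae_of_all _ fun x => (Real.exp_pos _).le)
      i3.aestronglyMeasurable]
    exact ENNReal.toReal_le_of_le_ofReal zero_le_one (by simpa using h1)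
  have i5 : ∫ x, h x * Real.exp (-gaussPot x) ≤
      ∫ x, (Real.exp (h x - gaussPot x) - Real.exp (-gaussPot x)) := by
    refine integral_mono i1 (i3.sub i2) fun x => ?_
    dsimp only
    rw [sub_eq_add_neg (h x), Real.exp_add]
    nlinarith [Real.add_one_le_exp (h x), Real.exp_pos (-gaussPot x)]
  rw [integral_sub i3 i2, integral_exp_neg_gaussPot] at i5
  linarith

/-- One half of the Sinkhorn iteration: the potential on the Gaussian side. -/
noncomputable def sinkStep (s : ℝ) (V b : Euc d → ℝ) : Euc d → ℝ := logLap s fun y => b y + V y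

/-- The Sinkhorn iterates, on the side of `V`, started from a quadratic potential. -/
noncomputable def sinkhorn (s κ : ℝ) (V : Euc d → ℝ) : ℕ → Euc d → ℝ
  | 0 => fun y => κ / 2 * ‖y‖ ^ 2
  | k + 1 => sinkStep s gaussPot (sinkStep s V (sinkhorn s κ V k))

variable {V : Euc d → ℝ} {α s κ : ℝ}

lemma EvenPot.evenPot_sinkStep {b : Euc d → ℝ} (hb : EvenPot b) (hV : QuadPot V)
    (he : ∀ y, V (-y) = V y) (s : ℝ) : EvenPot (sinkStep s V b) :=
  (hV.add_evenPot hb).evenPot_logLap (fun y => by rw [hb.even, he]) s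

lemma evenPot_sinkhorn (hV : QuadPot V) (he : ∀ y, V (-y) = V y) (hκ : 0 ≤ κ) (k : ℕ) :
    EvenPot (sinkhorn s κ V k) := by
  induction k with
  | zero =>
    refine ⟨by unfold sinkhorn; fun_prop, fun x => by simp [sinkhorn], fun x => ?_, κ / 2,
      fun x => ?_⟩
    · simp only [sinkhorn, norm_zero]
      have : 0 ≤ κ / 2 * ‖x‖ ^ 2 := by positivity
      linarith
    · simp only [sinkhorn]
      linarith
  | succ k ih =>
    exact (ih.evenPot_sinkStep hV he s).evenPot_sinkStep quadPot_gaussPot gaussPot_neg s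

lemma modConvex_sinkhorn (hV : QuadPot V) (he : ∀ y, V (-y) = V y) (hα : 0 < α)
    (hconv : ModConvex α V) (hs : 0 < s) (k : ℕ) :
    ModConvex (s * √α) (fun y => sinkhorn s (s * √α) V k y + V y) := by
  have hκ : 0 < s * √α := by positivity
  induction k with
  | zero =>
    exact ((modConvex_norm_sq (s * √α)).add hconv).mono (by linarith)
  | succ k ih =>
    have hb := evenPot_sinkhorn (s := s) hV he hκ.le k
    have ha := hb.evenPot_sinkStep hV he s
    have h1 := (ih.neg_logLap hκ (hV.add_evenPot hb) s).add (modConvex_neg_gaussPot (d := d))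
    have h2 : ModConvex (-(s ^ 2 / (s * √α) + 1))
        (fun x => -(sinkStep s V (sinkhorn s (s * √α) V k) x + gaussPot x)) := by
      convert h1 using 1
      · ring
      · ext x; rw [neg_add]; rfl
    have h3 := (h2.logLap (by positivity) (quadPot_gaussPot.add_evenPot ha) s).add hconv
    refine h3.mono ?_
    have h4 : √α * √α = α := Real.mul_self_sqrt hα.le
    have h5 : 0 < √α := Real.sqrt_pos.2 hα
    have h6 : s ^ 2 / (s ^ 2 / (s * √α) + 1) = s ^ 2 * √α / (s + √α) := by
      field_simp
    rw [h6, ← sub_le_iff_le_add, le_div_iff₀ (by positivity)]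
    nlinarith [mul_pos hs h5, mul_pos hα h5]

lemma integral_sinkStep_antitone (hV : QuadPot V) (he : ∀ y, V (-y) = V y)
    (hV1 : ∫ y, Real.exp (-V y) = 1) (hκ : 0 ≤ κ) (k : ℕ) :
    ∫ x, sinkStep s V (sinkhorn s κ V (k + 1)) x * Real.exp (-gaussPot x) ≤
      ∫ x, sinkStep s V (sinkhorn s κ V k) x * Real.exp (-gaussPot x) := by
  have hb := evenPot_sinkhorn (s := s) hV he hκ k
  have hb' := evenPot_sinkhorn (s := s) hV he hκ (k + 1)
  have ha := hb.evenPot_sinkStep hV he s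
  have ha' := hb'.evenPot_sinkStep hV he s
  obtain ⟨C, hC⟩ := ha.exists_abs_le
  obtain ⟨C', hC'⟩ := ha'.exists_abs_le
  have hp := (quadPot_gaussPot (d := d)).posExpDecay
  have h1 := integral_gauss_nonpos (h := fun x => sinkStep s V (sinkhorn s κ V (k + 1)) x -
    sinkStep s V (sinkhorn s κ V k) x) (ha'.cont.sub ha.cont) (C := C' + C) (fun x => by
    refine (abs_sub _ _).trans ?_
    rw [add_mul]
    exact add_le_add (hC' x) (hC x)) (by
    have h2 := lintegral_exp_logLap_swap (hV.add_evenPot hb') (quadPot_gaussPot.add_evenPot ha) s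
    have h3 : ∀ x, sinkStep s V (sinkhorn s κ V (k + 1)) x - sinkStep s V (sinkhorn s κ V k) x -
      gaussPot x = logLap s (fun y => sinkhorn s κ V (k + 1) y + V y) x -
        (sinkStep s V (sinkhorn s κ V k) x + gaussPot x) := fun x => sub_sub _ _ _
    simp only [h3]
    rw [h2]
    have h4 : ∀ y, logLap s (fun x => sinkStep s V (sinkhorn s κ V k) x + gaussPot x) y -
      (sinkhorn s κ V (k + 1) y + V y) = -V y := fun y => by
        change sinkhorn s κ V (k + 1) y - _ = _
        ring
    simp only [h4]
    rw [← ofReal_integral_eq_lintegral_ofReal (hV.posExpDecay.integrable volume)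
      (ae_of_all _ fun y => (Real.exp_pos _).le), hV1, ENNReal.ofReal_one])
  simp only [sub_mul] at h1
  rw [integral_sub (hp.integrable_mul_of_le volume ha'.cont.measurable hC')
    (hp.integrable_mul_of_le volume ha.cont.measurable hC)] at h1
  linarith

lemma neg_integral_le_sinkStep_zero {a : Euc d → ℝ} (ha : EvenPot a) :
    - ∫ x, a x * Real.exp (-gaussPot x) ≤ sinkStep s gaussPot a 0 := by
  obtain ⟨C, hC⟩ := ha.exists_abs_le
  have hp := (quadPot_gaussPot (d := d)).posExpDecay
  have hq := quadPot_gaussPot.add_evenPot ha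
  set c := sinkStep s gaussPot a 0 with hc
  have h1 := integral_gauss_nonpos (h := fun x => -a x - c) (by have := ha.cont; fun_prop)
    (C := C + |c|) (fun x => by
      refine (abs_sub _ _).trans ?_
      rw [abs_neg]
      nlinarith [hC x, mul_nonneg (abs_nonneg c) (sq_nonneg ‖x‖)]) (by
    have h2 := hq.ofReal_exp_logLap_sub s 0 c
    rw [show logLap s (fun y => a y + gaussPot y) 0 = c from rfl, sub_self, Real.exp_zero,
      ENNReal.ofReal_one] at h2
    refine (Eq.trans (lintegral_congr fun x => ?_) h2.symm).le
    rw [inner_zero_left]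
    ring_nf)
  simp only [sub_mul, neg_mul] at h1
  have h3 : Integrable fun x => -(a x * Real.exp (-gaussPot x)) :=
    (hp.integrable_mul_of_le volume ha.cont.measurable hC).neg
  rw [integral_sub h3
    ((hp.integrable volume).const_mul c), integral_neg, integral_const_mul,
    integral_exp_neg_gaussPot] at h1
  linarith

lemma EvenPot.integrable {b : Euc d → ℝ} (hb : EvenPot b) {m : Measure (Euc d)}
    [IsFiniteMeasure m] (hm : Integrable (fun y => ‖y‖ ^ 2) m) : Integrable b m := by
  obtain ⟨C, hC⟩ := hb.exists_abs_le
  exact (((integrable_const 1).add hm).const_mul C).mono' hb.cont.aestronglyMeasurable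
    (ae_of_all _ hC)

theorem exists_sinkhorn_potentials (hV : QuadPot V) (he : ∀ y, V (-y) = V y)
    (hV1 : ∫ y, Real.exp (-V y) = 1) (hα : 0 < α) (hconv : ModConvex α V) (hs : 0 < s)
    (m : Measure (Euc d)) [IsFiniteMeasure m] (hm : Integrable (fun y => ‖y‖ ^ 2) m)
    {ε : ℝ} (hε : 0 < ε) :
    ∃ b : Euc d → ℝ, EvenPot b ∧ ModConvex (s * √α) (fun y => b y + V y) ∧
      ∫ y, (b y - sinkStep s gaussPot (sinkStep s V b) y) ∂m ≤ ε := by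
  have hκ : 0 < s * √α := by positivity
  set b := sinkhorn s (s * √α) V with hb
  have hE : ∀ k, EvenPot (b k) := fun k => evenPot_sinkhorn hV he hκ.le k
  have hI : ∀ k, Integrable (b k) m := fun k => (hE k).integrable hm
  by_contra! hcon
  have hgap : ∀ k, ∫ y, b (k + 1) y ∂m + ε ≤ ∫ y, b k y ∂m := fun k => by
    have h1 := hcon (b k) (hE k) (modConvex_sinkhorn hV he hα hconv hs k)
    have h2 : ∫ y, (b k y - b (k + 1) y) ∂m = ∫ y, b k y ∂m - ∫ y, b (k + 1) y ∂m :=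
      integral_sub (hI k) (hI (k + 1))
    change ε < ∫ y, (b k y - b (k + 1) y) ∂m at h1
    linarith
  have hsum : ∀ k : ℕ, ∫ y, b k y ∂m + k * ε ≤ ∫ y, b 0 y ∂m := fun k => by
    induction k with
    | zero => simp
    | succ k ih =>
      have := hgap k
      push_cast
      linarith
  set C := ∫ x, sinkStep s V (b 0) x * Real.exp (-gaussPot x)
  have hCk : ∀ k, ∫ x, sinkStep s V (b k) x * Real.exp (-gaussPot x) ≤ C := fun k => by
    induction k with
    | zero => exact le_rfl
    | succ k ih => exact (integral_sinkStep_antitone hV he hV1 hκ.le k).trans ih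
  have hlow : ∀ k, -C * m.real univ ≤ ∫ y, b (k + 1) y ∂m := fun k => by
    have h1 : ∀ y, -C ≤ b (k + 1) y := fun y => by
      have h2 := neg_integral_le_sinkStep_zero (s := s) ((hE k).evenPot_sinkStep hV he s)
      have h3 := (hE (k + 1)).zero_le y
      have h4 := hCk k
      change _ ≤ b (k + 1) 0 at h2
      linarith
    have h5 := integral_mono (integrable_const (-C)) (hI (k + 1)) h1
    rwa [integral_const, smul_eq_mul, mul_comm] at h5
  obtain ⟨k, hk⟩ := exists_nat_gt ((∫ y, b 0 y ∂m + C * m.real univ) / ε)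
  rw [div_lt_iff₀ hε] at hk
  have h1 := hsum (k + 1)
  have h2 := hlow k
  push_cast at h1
  linarith

end Sinkhorn

section Lift

variable {d : ℕ} {s R : ℝ} {a : Euc d → ℝ} {μ : Measure (Euc d)}

lemma PosExpDecay.mul_of_le {E : Type*} [NormedAddCommGroup E] {f g : E → ℝ} (hf : PosExpDecay f)
    (hg : Continuous g) (hpos : ∀ x, 0 < g x) {C : ℝ} (hC : ∀ x, g x ≤ C) :
    PosExpDecay (fun x => f x * g x) := by
  obtain ⟨D, c, hD, hc, h⟩ := hf.exists_bound
  refine ⟨hf.cont.mul hg, fun x => mul_pos (hf.pos x) (hpos x), D * C, c, hc, fun x => ?_⟩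
  calc f x * g x ≤ D * Real.exp (-c * ‖x‖) * C :=
        mul_le_mul (h x) (hC x) (hpos x).le (by positivity)
    _ = D * C * Real.exp (-c * ‖x‖) := by ring

/-- The conditional density of the Gaussian variable given the other one, under the entropic plan
associated with the potential `a`. -/
noncomputable def liftKer (s : ℝ) (a : Euc d → ℝ) (x y : Euc d) : ℝ :=
  Real.exp (s * ⟪y, x⟫ - (a x + gaussPot x) - sinkStep s gaussPot a y)

/-- The lift of `μ` to a measure on pairs, through the kernel `liftKer`. -/
noncomputable def liftMeasure (s : ℝ) (a : Euc d → ℝ) (μ : Measure (Euc d)) :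
    Measure (Euc d × Euc d) :=
  (volume.prod μ).withDensity fun p => ENNReal.ofReal (liftKer s a p.1 p.2)

/-- The density of the first marginal of `liftMeasure`. -/
noncomputable def liftDensity (s : ℝ) (a : Euc d → ℝ) (μ : Measure (Euc d)) (x : Euc d) : ℝ :=
  ∫ y, liftKer s a x y ∂μ

lemma EvenPot.sinkStep_gaussPot (ha : EvenPot a) (s : ℝ) : EvenPot (sinkStep s gaussPot a) :=
  ha.evenPot_sinkStep quadPot_gaussPot gaussPot_neg s

lemma liftKer_pos (s : ℝ) (a : Euc d → ℝ) (x y : Euc d) : 0 < liftKer s a x y := Real.exp_pos _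

lemma EvenPot.continuous_liftKer (ha : EvenPot a) (s : ℝ) :
    Continuous fun p : Euc d × Euc d => liftKer s a p.1 p.2 := by
  have h1 := ha.cont
  have h2 := (ha.sinkStep_gaussPot s).cont
  unfold liftKer
  fun_prop

lemma EvenPot.continuous_liftKer_left (ha : EvenPot a) (s : ℝ) (y : Euc d) :
    Continuous fun x => liftKer s a x y := by
  have h1 := ha.cont
  unfold liftKer
  fun_prop

lemma EvenPot.continuous_liftKer_right (ha : EvenPot a) (s : ℝ) (x : Euc d) :
    Continuous (liftKer s a x) := by
  have h2 := (ha.sinkStep_gaussPot s).cont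
  unfold liftKer
  fun_prop

lemma EvenPot.lintegral_liftKer (ha : EvenPot a) (s : ℝ) (y : Euc d) :
    ∫⁻ x, ENNReal.ofReal (liftKer s a x y) = 1 := by
  have := (quadPot_gaussPot.add_evenPot ha).ofReal_exp_logLap_sub s y (sinkStep s gaussPot a y)
  rw [sinkStep, sub_self, Real.exp_zero, ENNReal.ofReal_one] at this
  exact this.symm

lemma EvenPot.lintegral_liftMeasure [SFinite μ] (ha : EvenPot a) (s : ℝ)
    {h : Euc d × Euc d → ℝ≥0∞} (hh : Measurable h) :
    ∫⁻ p, h p ∂liftMeasure s a μ =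
      ∫⁻ y, (∫⁻ x, ENNReal.ofReal (liftKer s a x y) * h (x, y)) ∂μ := by
  have hk := (ha.continuous_liftKer s).measurable
  rw [liftMeasure, lintegral_withDensity_eq_lintegral_mul _ (by fun_prop) hh,
    lintegral_prod_symm _ (by fun_prop)]
  rfl

lemma EvenPot.map_snd_liftMeasure [SFinite μ] (ha : EvenPot a) (s : ℝ) :
    (liftMeasure s a μ).map Prod.snd = μ := by
  have hk := (ha.continuous_liftKer s).measurable
  refine Measure.ext_of_lintegral _ fun h hh => ?_
  rw [lintegral_map hh measurable_snd, ha.lintegral_liftMeasure s (by fun_prop)]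
  refine lintegral_congr fun y => ?_
  have hky : Measurable fun x => liftKer s a x y := (ha.continuous_liftKer_left s y).measurable
  dsimp only
  rw [lintegral_mul_const _ (by fun_prop), ha.lintegral_liftKer, one_mul]

lemma EvenPot.isProbabilityMeasure_liftMeasure [IsProbabilityMeasure μ] (ha : EvenPot a)
    (s : ℝ) : IsProbabilityMeasure (liftMeasure s a μ) := by
  have h := ha.map_snd_liftMeasure (μ := μ) s
  constructor
  rw [← measure_univ (μ := μ), ← h, Measure.map_apply measurable_snd MeasurableSet.univ,
    preimage_univ, h]

lemma EvenPot.liftKer_le (ha : EvenPot a) (hs : 0 ≤ s) {x y : Euc d} (hy : ‖y‖ ≤ R) :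
    Real.exp (s * ⟪y, x⟫ - s * R * ‖x‖ - sinkStep s gaussPot a y) ≤
      Real.exp (-sinkStep s gaussPot a 0) := by
  rw [Real.exp_le_exp]
  have h1 := (ha.sinkStep_gaussPot s).zero_le y
  have h2 : s * ⟪y, x⟫ ≤ s * R * ‖x‖ := by
    rw [mul_assoc]
    gcongr
    exact (real_inner_le_norm y x).trans (by gcongr)
  linarith

lemma EvenPot.integrable_liftKer_aux [IsProbabilityMeasure μ] (ha : EvenPot a) (hs : 0 ≤ s)
    (hR : ∀ᵐ y ∂μ, ‖y‖ ≤ R) (x : Euc d) :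
    Integrable (fun y => Real.exp (s * ⟪y, x⟫ - s * R * ‖x‖ - sinkStep s gaussPot a y)) μ := by
  have h2 := (ha.sinkStep_gaussPot s).cont
  refine Integrable.mono' (integrable_const (Real.exp (-sinkStep s gaussPot a 0)))
    (by fun_prop) (hR.mono fun y hy => ?_)
  rw [Real.norm_eq_abs, Real.abs_exp]
  exact ha.liftKer_le hs hy

lemma liftKer_eq_mul (s R : ℝ) (a : Euc d → ℝ) (x y : Euc d) : liftKer s a x y =
    Real.exp (-(a x + gaussPot x - s * R * ‖x‖)) *
      Real.exp (s * ⟪y, x⟫ - s * R * ‖x‖ - sinkStep s gaussPot a y) := by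
  rw [liftKer, ← Real.exp_add]
  ring_nf

lemma EvenPot.integrable_liftKer [IsProbabilityMeasure μ] (ha : EvenPot a) (hs : 0 ≤ s)
    (hR : ∀ᵐ y ∂μ, ‖y‖ ≤ R) (x : Euc d) : Integrable (liftKer s a x) μ := by
  have := (ha.integrable_liftKer_aux hs hR x).const_mul
    (Real.exp (-(a x + gaussPot x - s * R * ‖x‖)))
  exact this.congr (ae_of_all _ fun y => (liftKer_eq_mul s R a x y).symm)

lemma EvenPot.posExpDecay_liftDensity [IsProbabilityMeasure μ] (ha : EvenPot a) (hs : 0 ≤ s)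
    (hR : ∀ᵐ y ∂μ, ‖y‖ ≤ R) : PosExpDecay (liftDensity s a μ) := by
  have hac := ha.cont
  have h2 := (ha.sinkStep_gaussPot s).cont
  have hq : QuadPot (fun x => a x + gaussPot x - s * R * ‖x‖) := by
    refine ⟨by fun_prop, 1 / 4, (s * R) ^ 2 - a 0 - d / 2 * Real.log (2 * Real.pi),
      by norm_num, fun y => ?_⟩
    rw [gaussPot]
    nlinarith [ha.zero_le y, sq_nonneg (s * R - ‖y‖ / 2)]
  have hi := ha.integrable_liftKer_aux hs hR
  set G := fun x => ∫ y, Real.exp (s * ⟪y, x⟫ - s * R * ‖x‖ - sinkStep s gaussPot a y) ∂μ with hG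
  have hGc : Continuous G := by
    refine continuous_of_dominated (bound := fun _ => Real.exp (-sinkStep s gaussPot a 0))
      (fun x => (hi x).aestronglyMeasurable) (fun x => hR.mono fun y hy => ?_)
      (integrable_const _) (ae_of_all _ fun y => by fun_prop)
    rw [Real.norm_eq_abs, Real.abs_exp]
    exact ha.liftKer_le hs hy
  have hGp : ∀ x, 0 < G x := fun x => integral_exp_pos (hi x)
  have hGle : ∀ x, G x ≤ Real.exp (-sinkStep s gaussPot a 0) := fun x => by
    have := integral_mono_ae (hi x) (integrable_const (Real.exp (-sinkStep s gaussPot a 0)))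
      (hR.mono fun y hy => ha.liftKer_le hs hy)
    rwa [integral_const, probReal_univ, one_smul] at this
  have h3 : liftDensity s a μ =
      fun x => Real.exp (-(a x + gaussPot x - s * R * ‖x‖)) * G x := by
    ext x
    rw [liftDensity, hG, ← integral_const_mul]
    simp only [liftKer_eq_mul s R a x]
  rw [h3]
  exact hq.posExpDecay.mul_of_le hGc hGp hGle

lemma EvenPot.map_fst_liftMeasure [IsProbabilityMeasure μ] (ha : EvenPot a) (hs : 0 ≤ s)
    (hR : ∀ᵐ y ∂μ, ‖y‖ ≤ R) :
    (liftMeasure s a μ).map Prod.fst = densityMeasure (liftDensity s a μ) := by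
  have hk := (ha.continuous_liftKer s).measurable
  have hp := (ha.posExpDecay_liftDensity hs hR).cont.measurable
  refine Measure.ext_of_lintegral _ fun h hh => ?_
  rw [lintegral_map hh measurable_fst, liftMeasure,
    lintegral_withDensity_eq_lintegral_mul _ (by fun_prop) (by fun_prop),
    lintegral_prod _ (by fun_prop), lintegral_densityMeasure hp hh]
  refine lintegral_congr fun x => ?_
  simp only [Pi.mul_apply]
  have hkx : Measurable (liftKer s a x) := (ha.continuous_liftKer_right s x).measurable
  rw [lintegral_mul_const _ (by fun_prop), mul_comm, liftDensity,
    ofReal_integral_eq_lintegral_ofReal (ha.integrable_liftKer hs hR x)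
      (ae_of_all _ fun y => (liftKer_pos s a x y).le)]

lemma EvenPot.integral_liftDensity [IsProbabilityMeasure μ] (ha : EvenPot a) (hs : 0 ≤ s)
    (hR : ∀ᵐ y ∂μ, ‖y‖ ≤ R) : ∫ x, liftDensity s a μ x = 1 := by
  have hp := ha.posExpDecay_liftDensity hs hR
  have := ha.isProbabilityMeasure_liftMeasure (μ := μ) s
  have h1 := hp.densityMeasure_univ
  rw [← ha.map_fst_liftMeasure hs hR, Measure.map_apply measurable_fst MeasurableSet.univ,
    preimage_univ, measure_univ, eq_comm, ENNReal.ofReal_eq_one] at h1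
  exact h1

lemma EvenPot.liftDensity_neg (ha : EvenPot a) (hμ : μ.map (fun x => -x) = μ) (x : Euc d) :
    liftDensity s a μ (-x) = liftDensity s a μ x := by
  have hk := (ha.continuous_liftKer s).measurable
  have hkx : Measurable (liftKer s a (-x)) := (ha.continuous_liftKer_right s (-x)).measurable
  rw [liftDensity, ← hμ, integral_map measurable_neg.aemeasurable hkx.aestronglyMeasurable, hμ,
    liftDensity]
  refine integral_congr_ae (ae_of_all _ fun y => ?_)
  simp only [liftKer, inner_neg_neg, ha.even, gaussPot_neg, (ha.sinkStep_gaussPot s).even]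

/-- The Gibbs variational inequality for the lifted measure. -/
lemma EvenPot.integral_liftMeasure_le [IsProbabilityMeasure μ] (ha : EvenPot a) {V b f : Euc d → ℝ}
    (hV : Continuous V) (hb : EvenPot b) (hf : Measurable f) (hf0 : ∀ y, 0 ≤ f y)
    (hμ : μ = volume.withDensity fun y => ENNReal.ofReal (f y * Real.exp (-V y)))
    (hlog : Integrable (fun y => Real.log (f y)) μ) (hμ2 : Integrable (fun y => ‖y‖ ^ 2) μ)
    {Φ : Euc d × Euc d → ℝ} (hΦ : Measurable Φ) (hΦi : Integrable Φ (liftMeasure s a μ))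
    {Z : ℝ} (hZ0 : 0 ≤ Z)
    (hZ : ∫⁻ x, ∫⁻ y, ENNReal.ofReal (Real.exp (Φ (x, y) + (s * ⟪x, y⟫ - (b y + V y) -
      (a x + gaussPot x)))) ≤ ENNReal.ofReal Z) :
    ∫ p, Φ p ∂liftMeasure s a μ ≤ ∫ y, Real.log (f y) ∂μ +
      ∫ y, (b y - sinkStep s gaussPot a y) ∂μ + Z - 1 := by
  have := ha.isProbabilityMeasure_liftMeasure (μ := μ) s
  have hb' := ha.sinkStep_gaussPot s
  set b' := sinkStep s gaussPot a with hb'def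
  have hVm := hV.measurable
  have hac := ha.cont
  have hbc := hb.cont
  have hb'c := hb'.cont
  have hk := (ha.continuous_liftKer s).measurable
  have hsnd := ha.map_snd_liftMeasure (μ := μ) s
  have hfpos : ∀ᵐ y ∂μ, 0 < f y := by
    have h1 : ∀ᵐ y ∂μ, ENNReal.ofReal (f y * Real.exp (-V y)) ≠ 0 := by
      rw [hμ, ae_withDensity_iff (by fun_prop)]
      exact ae_of_all _ fun y hy => hy
    filter_upwards [h1] with y hy
    rcases (hf0 y).eq_or_lt with h | h
    · simp [← h] at hy
    · exact h
  have hfpos' : ∀ᵐ p ∂liftMeasure s a μ, 0 < f p.2 := by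
    have h1 : ∀ᵐ y ∂((liftMeasure s a μ).map Prod.snd), 0 < f y := by rwa [hsnd]
    exact ae_of_ae_map measurable_snd.aemeasurable h1
  set W : Euc d × Euc d → ℝ := fun p => Real.exp (Φ p - (b p.2 - b' p.2)) / f p.2 with hW
  have hWm : Measurable W := by fun_prop
  have hWl : ∫⁻ p, ENNReal.ofReal (W p) ∂liftMeasure s a μ ≤ ENNReal.ofReal Z := by
    refine le_trans ?_ hZ
    have hk' : Measurable fun p : Euc d × Euc d => liftKer s a p.2 p.1 :=
      ((ha.continuous_liftKer s).comp continuous_swap).measurable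
    rw [ha.lintegral_liftMeasure s (by fun_prop), hμ,
      lintegral_withDensity_eq_lintegral_mul _ (by fun_prop)
        (Measurable.lintegral_prod_right' (f := fun p : Euc d × Euc d =>
          ENNReal.ofReal (liftKer s a p.2 p.1) * ENNReal.ofReal (W (p.2, p.1))) (by fun_prop)),
      lintegral_lintegral_swap (by fun_prop)]
    refine lintegral_mono fun y => ?_
    rw [Pi.mul_apply, ← lintegral_const_mul _ (by
      have : Measurable fun x => liftKer s a x y := (ha.continuous_liftKer_left s y).measurable
      fun_prop)]
    refine lintegral_mono fun x => ?_
    rw [← ENNReal.ofReal_mul (liftKer_pos s a x y).le,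
      ← ENNReal.ofReal_mul (mul_nonneg (hf0 y) (Real.exp_pos _).le)]
    refine ENNReal.ofReal_le_ofReal ?_
    rcases (hf0 y).eq_or_lt with h | h
    · rw [← h, zero_mul, zero_mul]; exact (Real.exp_pos _).le
    · apply le_of_eq
      have h1 : f y * Real.exp (-V y) * (liftKer s a x y * W (x, y)) = Real.exp (-V y) *
          (liftKer s a x y * Real.exp (Φ (x, y) - (b y - b' y))) := by
        simp only [hW]
        field_simp
      rw [h1, liftKer, ← hb'def, ← Real.exp_add, ← Real.exp_add, real_inner_comm]
      ring_nf
  have hWi : Integrable W (liftMeasure s a μ) := by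
    refine ⟨hWm.aestronglyMeasurable, ?_⟩
    rw [hasFiniteIntegral_iff_ofReal (ae_of_all _ fun p =>
      div_nonneg (Real.exp_pos _).le (hf0 _))]
    exact hWl.trans_lt ENNReal.ofReal_lt_top
  have hWZ : ∫ p, W p ∂liftMeasure s a μ ≤ Z := by
    rw [integral_eq_lintegral_of_nonneg_ae (ae_of_all _ fun p =>
      div_nonneg (Real.exp_pos _).le (hf0 _)) hWm.aestronglyMeasurable]
    exact ENNReal.toReal_le_of_le_ofReal hZ0 hWl
  have ib : Integrable (fun y => b y - b' y) μ := (hb.integrable hμ2).sub (hb'.integrable hμ2)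
  have hlog' : Integrable (fun y => Real.log (f y)) ((liftMeasure s a μ).map Prod.snd) := by
    rwa [hsnd]
  have ib' : Integrable (fun y => b y - b' y) ((liftMeasure s a μ).map Prod.snd) := by
    rwa [hsnd]
  have j1 : Integrable (fun p => Real.log (f p.2)) (liftMeasure s a μ) :=
    hlog'.comp_measurable measurable_snd
  have j2 : Integrable (fun p => b p.2 - b' p.2) (liftMeasure s a μ) :=
    ib'.comp_measurable measurable_snd
  have e1 : ∫ y, Real.log (f y) ∂μ = ∫ p, Real.log (f p.2) ∂liftMeasure s a μ := by
    conv_lhs => rw [← hsnd]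
    rw [integral_map measurable_snd.aemeasurable hlog'.aestronglyMeasurable]
  have e2 : ∫ y, (b y - b' y) ∂μ = ∫ p, (b p.2 - b' p.2) ∂liftMeasure s a μ := by
    conv_lhs => rw [← hsnd]
    rw [integral_map measurable_snd.aemeasurable ib'.aestronglyMeasurable]
  have j3 : Integrable (fun p => Real.log (f p.2) + (b p.2 - b' p.2)) (liftMeasure s a μ) :=
    j1.add j2
  have j4 : Integrable (fun p => Real.log (f p.2) + (b p.2 - b' p.2) + W p)
    (liftMeasure s a μ) := j3.add hWi
  have hmono : ∫ p, Φ p ∂liftMeasure s a μ ≤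
      ∫ p, (Real.log (f p.2) + (b p.2 - b' p.2) + W p - 1) ∂liftMeasure s a μ := by
    refine integral_mono_ae hΦi (j4.sub (integrable_const 1)) (hfpos'.mono fun p hp => ?_)
    have h1 := Real.log_le_sub_one_of_pos (div_pos (Real.exp_pos (Φ p - (b p.2 - b' p.2))) hp)
    rw [Real.log_div (Real.exp_pos _).ne' hp.ne', Real.log_exp] at h1
    simp only [hW]
    linarith
  rw [integral_sub j4 (integrable_const 1), integral_add j3 hWi, integral_add j1 j2,
    integral_const, probReal_univ, one_smul, ← e1, ← e2] at hmono
  linarith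

end Lift

section Gluing

open ProbabilityTheory

variable {X Y : Type*} [MeasurableSpace X] [MeasurableSpace Y]
  [StandardBorelSpace Y] [Nonempty Y]

/-- Gluing two measures along a coupling of their first marginals. -/
lemma exists_gluing {m n : Measure (X × Y)} [IsFiniteMeasure m] [IsFiniteMeasure n]
    {ρ : Measure (X × X)} [IsFiniteMeasure ρ] (h1 : ρ.map Prod.fst = m.map Prod.fst)
    (h2 : ρ.map Prod.snd = n.map Prod.fst) :
    ∃ Γ : Measure ((X × X) × (Y × Y)), Γ.map Prod.fst = ρ ∧
      Γ.map (fun z => (z.1.1, z.2.1)) = m ∧ Γ.map (fun z => (z.1.2, z.2.2)) = n := by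
  set K := (m.condKernel.comap Prod.fst measurable_fst : Kernel (X × X) Y) ×ₖ
    (n.condKernel.comap Prod.snd measurable_snd : Kernel (X × X) Y) with hK
  refine ⟨ρ ⊗ₘ K, Measure.fst_compProd ρ K, Measure.ext_of_lintegral _ fun h hh => ?_,
    Measure.ext_of_lintegral _ fun h hh => ?_⟩
  · rw [lintegral_map hh (by fun_prop), Measure.lintegral_compProd (by fun_prop)]
    have e : ∀ a : X × X, ∫⁻ b, h (a.1, b.1) ∂K a = ∫⁻ y, h (a.1, y) ∂m.condKernel a.1 := by
      intro a
      rw [hK, Kernel.lintegral_prod _ _ _ (by fun_prop)]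
      simp [Kernel.comap_apply]
    simp only [e]
    have hm : Measurable fun x => ∫⁻ y, h (x, y) ∂m.condKernel x := hh.lintegral_kernel_prod_right'
    rw [← lintegral_map (f := fun x => ∫⁻ y, h (x, y) ∂m.condKernel x) hm measurable_fst, h1]
    exact Measure.lintegral_condKernel hh
  · rw [lintegral_map hh (by fun_prop), Measure.lintegral_compProd (by fun_prop)]
    have e : ∀ a : X × X, ∫⁻ b, h (a.2, b.2) ∂K a = ∫⁻ y, h (a.2, y) ∂n.condKernel a.2 := by
      intro a
      rw [hK, Kernel.lintegral_prod _ _ _ (by fun_prop)]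
      simp [Kernel.comap_apply]
    simp only [e]
    have hm : Measurable fun x => ∫⁻ y, h (x, y) ∂n.condKernel x := hh.lintegral_kernel_prod_right'
    rw [← lintegral_map (f := fun x => ∫⁻ y, h (x, y) ∂n.condKernel x) hm measurable_snd, h2]
    exact Measure.lintegral_condKernel hh

end Gluing

section Argmin

variable {d : ℕ} {s κ : ℝ} {Ψ : Euc d → ℝ}

lemma ModConvex.tilt (h : ModConvex κ Ψ) (s : ℝ) (x : Euc d) :
    ModConvex κ (fun y => Ψ y - s * ⟪x, y⟫) := by
  intro y z a b ha hb hab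
  have := h y z a b ha hb hab
  simp only [inner_add_right, real_inner_smul_right]
  linarith

lemma QuadPot.exists_forall_le (h : QuadPot Ψ) : ∃ m, ∀ y, Ψ m ≤ Ψ y := by
  refine h.cont.exists_forall_le ?_
  obtain ⟨β, C, hβ, hb⟩ := h.growth
  refine tendsto_atTop_mono hb ?_
  refine tendsto_atTop_add_const_right _ _ (Tendsto.const_mul_atTop hβ ?_)
  exact (tendsto_pow_atTop two_ne_zero).comp (tendsto_norm_cocompact_atTop (E := Euc d))

lemma ModConvex.le_sub_of_forall_le (h : ModConvex κ Ψ) {m : Euc d} (hm : ∀ y, Ψ m ≤ Ψ y)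
    (y : Euc d) : κ / 2 * ‖m - y‖ ^ 2 ≤ Ψ y - Ψ m := by
  have h1 : Tendsto (fun a : ℝ => a * (κ / 2 * ‖m - y‖ ^ 2)) (𝓝[<] 1)
      (𝓝 (1 * (κ / 2 * ‖m - y‖ ^ 2))) := by
    refine Tendsto.mul_const _ ?_
    exact tendsto_nhdsWithin_of_tendsto_nhds tendsto_id
  rw [one_mul] at h1
  refine le_of_tendsto h1 ?_
  filter_upwards [Ioo_mem_nhdsLT (show (0 : ℝ) < 1 by norm_num)] with a ha
  have h2 := h m y a (1 - a) ha.1 (by linarith [ha.2]) (by ring)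
  have h3 := hm (a • m + (1 - a) • y)
  have h4 : (1 - a) * (a * (κ / 2 * ‖m - y‖ ^ 2)) ≤ (1 - a) * (Ψ y - Ψ m) := by
    nlinarith
  exact le_of_mul_le_mul_left h4 (by linarith [ha.2])

lemma exists_argmin (hΨ : QuadPot Ψ) (hconv : ModConvex κ Ψ) (hκ : 0 < κ) (hs : 0 ≤ s) :
    ∃ T : Euc d → Euc d, (∀ x x', ‖T x - T x'‖ ≤ s / κ * ‖x - x'‖) ∧
      ∀ x y, Ψ (T x) - s * ⟪x, T x⟫ ≤ Ψ y - s * ⟪x, y⟫ := by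
  choose T hT using fun x => (hΨ.tilt s x).exists_forall_le
  refine ⟨T, fun x x' => ?_, hT⟩
  have h1 := (hconv.tilt s x).le_sub_of_forall_le (hT x) (T x')
  have h2 := (hconv.tilt s x').le_sub_of_forall_le (hT x') (T x)
  rw [norm_sub_rev] at h2
  have h3 : κ * ‖T x - T x'‖ ^ 2 ≤ s * ⟪x - x', T x - T x'⟫ := by
    simp only [inner_sub_left, inner_sub_right]
    linarith
  have h4 : κ * ‖T x - T x'‖ ^ 2 ≤ s * (‖x - x'‖ * ‖T x - T x'‖) :=
    h3.trans (mul_le_mul_of_nonneg_left (real_inner_le_norm _ _) hs)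
  rcases (norm_nonneg (T x - T x')).eq_or_lt with h0 | h0
  · rw [← h0]; positivity
  · rw [div_mul_eq_mul_div, le_div_iff₀ hκ]
    have : (‖T x - T x'‖ * κ) * ‖T x - T x'‖ ≤ (s * ‖x - x'‖) * ‖T x - T x'‖ := by nlinarith
    exact le_of_mul_le_mul_right this h0

lemma lintegral_comp_half_smul {g : Euc d → ℝ≥0∞} (hg : Measurable g) (m : Euc d) :
    ∫⁻ y, g ((1 / 2 : ℝ) • m + (1 / 2 : ℝ) • y) = ENNReal.ofReal (2 ^ d) * ∫⁻ y, g y := by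
  have h1 : ∫⁻ y, g ((1 / 2 : ℝ) • (y + m)) = ∫⁻ y, g ((1 / 2 : ℝ) • y) :=
    lintegral_add_right_eq_self (fun y => g ((1 / 2 : ℝ) • y)) m
  have h2 := Measure.map_addHaar_smul (volume : Measure (Euc d)) (r := 1 / 2) (by norm_num)
  rw [finrank_euclideanSpace, Fintype.card_fin] at h2
  calc ∫⁻ y, g ((1 / 2 : ℝ) • m + (1 / 2 : ℝ) • y) = ∫⁻ y, g ((1 / 2 : ℝ) • (y + m)) := by
        simp only [smul_add, add_comm]
    _ = ∫⁻ y, g ((1 / 2 : ℝ) • y) := h1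
    _ = ∫⁻ y, g y ∂(volume.map ((1 / 2 : ℝ) • ·)) := (lintegral_map hg (by fun_prop)).symm
    _ = ENNReal.ofReal (2 ^ d) * ∫⁻ y, g y := by
        rw [h2, lintegral_smul_measure, smul_eq_mul]
        congr 2
        rw [abs_of_pos (by positivity)]
        simp

lemma lintegral_exp_sq_dist_argmin_le (hΨ : QuadPot Ψ) (hconv : ModConvex κ Ψ) {x m : Euc d}
    (hm : ∀ y, Ψ m - s * ⟪x, m⟫ ≤ Ψ y - s * ⟪x, y⟫) (c : ℝ) :
    ∫⁻ y, ENNReal.ofReal (Real.exp (κ / 8 * ‖y - m‖ ^ 2 + (s * ⟪x, y⟫ - Ψ y - c))) ≤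
      ENNReal.ofReal (2 ^ d) * ENNReal.ofReal (Real.exp (logLap s Ψ x - c)) := by
  have hc := hΨ.cont
  rw [hΨ.ofReal_exp_logLap_sub, ← lintegral_comp_half_smul (by fun_prop) m]
  refine lintegral_mono fun y => ENNReal.ofReal_le_ofReal (Real.exp_le_exp.2 ?_)
  have h1 := hconv.tilt s x m y (1 / 2) (1 / 2) (by norm_num) (by norm_num) (by norm_num)
  have h2 := hm y
  rw [norm_sub_rev] at h1
  dsimp only at h1
  linarith

end Argmin

section LiftedCoupling

variable {d : ℕ} {s R κ α : ℝ} {V b f g : Euc d → ℝ} {μ ν : Measure (Euc d)}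

/-- `f` is a density of `μ` relative to `exp (-V)`, with finite relative entropy. -/
structure HasRelDensity (V f : Euc d → ℝ) (μ : Measure (Euc d)) : Prop where
  measurable : Measurable f
  nonneg : ∀ y, 0 ≤ f y
  eq : μ = volume.withDensity fun y => ENNReal.ofReal (f y * Real.exp (-V y))
  integrable_log : Integrable (fun y => Real.log (f y)) μ

lemma integrable_norm_sq_of_ae_le [IsFiniteMeasure μ] (hR : ∀ᵐ y ∂μ, ‖y‖ ≤ R) :
    Integrable (fun y => ‖y‖ ^ 2) μ := by
  refine Integrable.mono' (integrable_const (R ^ 2)) (by fun_prop) (hR.mono fun y hy => ?_)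
  rw [Real.norm_of_nonneg (by positivity)]
  gcongr

lemma lift_entropy_le [IsProbabilityMeasure μ] (hV : QuadPot V) (he : ∀ y, V (-y) = V y)
    (hb : EvenPot b) (hs : 0 ≤ s) (hf : HasRelDensity V f μ) (hR : ∀ᵐ y ∂μ, ‖y‖ ≤ R) :
    ∫ x, (Real.log (liftDensity s (sinkStep s V b) μ x) + gaussPot x)
        ∂densityMeasure (liftDensity s (sinkStep s V b) μ) ≤
      ∫ y, Real.log (f y) ∂μ + ∫ y, (b y - sinkStep s gaussPot (sinkStep s V b) y) ∂μ := by
  have ha := hb.evenPot_sinkStep hV he s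
  have hΨ := hV.add_evenPot hb
  have hp := ha.posExpDecay_liftDensity hs hR
  have hp1 := ha.integral_liftDensity hs hR
  have hfst := ha.map_fst_liftMeasure hs hR
  set a := sinkStep s V b with hadef
  set p := liftDensity s a μ with hpdef
  have hpc := hp.cont
  have hi : Integrable (fun x => Real.log (p x) + gaussPot x)
      ((liftMeasure s a μ).map Prod.fst) := by
    rw [hfst]
    exact hp.integrable_log_densityMeasure.add hp.integrable_gaussPot
  have hm : Measurable fun x => Real.log (p x) + gaussPot x := by fun_prop
  have key := ha.integral_liftMeasure_le (s := s) hV.cont hb hf.measurable hf.nonneg hf.eq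
    hf.integrable_log (integrable_norm_sq_of_ae_le hR)
    (Φ := fun w => Real.log (p w.1) + gaussPot w.1) (hm.comp measurable_fst)
    (hi.comp_measurable measurable_fst) (Z := 1) zero_le_one (by
      rw [← hp1, ofReal_integral_eq_lintegral_ofReal (hp.integrable volume)
        (ae_of_all _ fun x => (hp.pos x).le)]
      refine lintegral_mono fun x => le_of_eq ?_
      have h1 := hΨ.ofReal_exp_logLap_sub s x (a x - Real.log (p x))
      rw [show logLap s (fun y => b y + V y) x = a x from rfl, _root_.sub_sub_cancel,
        Real.exp_log (hp.pos x)] at h1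
      rw [h1]
      refine lintegral_congr fun y => ?_
      dsimp only
      ring_nf)
  rw [← hfst, integral_map measurable_fst.aemeasurable hi.aestronglyMeasurable]
  linarith

lemma lift_sq_dist_le [IsProbabilityMeasure μ] (hV : QuadPot V) (he : ∀ y, V (-y) = V y)
    (hb : EvenPot b) (hs : 0 ≤ s) (hf : HasRelDensity V f μ) (hR : ∀ᵐ y ∂μ, ‖y‖ ≤ R)
    (hconv : ModConvex κ (fun y => b y + V y)) {T : Euc d → Euc d} {L : ℝ} (hL : 0 ≤ L)
    (hTL : ∀ x x', ‖T x - T x'‖ ≤ L * ‖x - x'‖)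
    (hT : ∀ x y, b (T x) + V (T x) - s * ⟪x, T x⟫ ≤ b y + V y - s * ⟪x, y⟫) :
    Integrable (fun w => ‖w.2 - T w.1‖ ^ 2) (liftMeasure s (sinkStep s V b) μ) ∧
    κ / 8 * ∫ w, ‖w.2 - T w.1‖ ^ 2 ∂liftMeasure s (sinkStep s V b) μ ≤
      ∫ y, Real.log (f y) ∂μ + ∫ y, (b y - sinkStep s gaussPot (sinkStep s V b) y) ∂μ + 2 ^ d := by
  have ha := hb.evenPot_sinkStep hV he s
  have hΨ := hV.add_evenPot hb
  have hp := ha.posExpDecay_liftDensity hs hR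
  have hfst := ha.map_fst_liftMeasure hs hR
  have hsnd := ha.map_snd_liftMeasure (μ := μ) s
  set a := sinkStep s V b with hadef
  have hTc : Continuous T := by
    refine (LipschitzWith.of_dist_le_mul (K := ⟨L, hL⟩) fun x x' => ?_).continuous
    rw [dist_eq_norm, dist_eq_norm]
    exact hTL x x'
  have hm : Measurable fun w : Euc d × Euc d => ‖w.2 - T w.1‖ ^ 2 := by fun_prop
  have hi : Integrable (fun w => ‖w.2 - T w.1‖ ^ 2) (liftMeasure s a μ) := by
    have := ha.isProbabilityMeasure_liftMeasure (μ := μ) s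
    have i1 : Integrable (fun w : Euc d × Euc d => ‖w.1‖ ^ 2) (liftMeasure s a μ) := by
      have h := hp.integrable_norm_sq_densityMeasure
      rw [← hfst] at h
      exact h.comp_measurable measurable_fst
    have i2 : Integrable (fun w : Euc d × Euc d => ‖w.2‖ ^ 2) (liftMeasure s a μ) := by
      have h := integrable_norm_sq_of_ae_le hR
      rw [← hsnd] at h
      exact h.comp_measurable measurable_snd
    refine Integrable.mono' (((i1.const_mul (L ^ 2)).add i2).add
      (integrable_const (‖T 0‖ ^ 2)) |>.const_mul 3) hm.aestronglyMeasurable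
      (ae_of_all _ fun w => ?_)
    rw [Real.norm_of_nonneg (by positivity)]
    have h1 := hTL w.1 0
    rw [sub_zero] at h1
    have h2 : ‖w.2 - T w.1‖ ≤ ‖w.2‖ + L * ‖w.1‖ + ‖T 0‖ := by
      calc ‖w.2 - T w.1‖ ≤ ‖w.2‖ + ‖T w.1‖ := norm_sub_le _ _
        _ ≤ ‖w.2‖ + (‖T w.1 - T 0‖ + ‖T 0‖) := by
            gcongr; exact norm_le_norm_sub_add _ _
        _ ≤ _ := by linarith
    simp only [Pi.add_apply]
    have h3 := pow_le_pow_left₀ (norm_nonneg _) h2 2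
    nlinarith [sq_nonneg (‖w.2‖ - L * ‖w.1‖), sq_nonneg (‖w.2‖ - ‖T 0‖),
      sq_nonneg (L * ‖w.1‖ - ‖T 0‖)]
  refine ⟨hi, ?_⟩
  have key := ha.integral_liftMeasure_le (s := s) hV.cont hb hf.measurable hf.nonneg hf.eq
    hf.integrable_log (integrable_norm_sq_of_ae_le hR)
    (Φ := fun w => κ / 8 * ‖w.2 - T w.1‖ ^ 2) (hm.const_mul _)
    (hi.const_mul _) (Z := 2 ^ d) (by positivity) (by
      calc _ ≤ ∫⁻ x, ENNReal.ofReal (2 ^ d) * ENNReal.ofReal (Real.exp (-gaussPot x)) := by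
            refine lintegral_mono fun x => ?_
            have h1 := lintegral_exp_sq_dist_argmin_le hΨ hconv (hT x) (a x + gaussPot x)
            rwa [show logLap s (fun y => b y + V y) x = a x from rfl,
              _root_.sub_add_cancel_left] at h1
        _ = ENNReal.ofReal (2 ^ d) := by
            have hg := (quadPot_gaussPot (d := d)).posExpDecay
            rw [lintegral_const_mul _ (by fun_prop), ← ofReal_integral_eq_lintegral_ofReal
              (hg.integrable volume) (ae_of_all _ fun x => (Real.exp_pos _).le),
              integral_exp_neg_gaussPot, ENNReal.ofReal_one, mul_one])
  rw [integral_const_mul] at key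
  linarith

lemma norm_sub_sq_le_of_lipschitz {T : Euc d → Euc d} (hα : 0 < α)
    (hTL : ∀ x x', ‖T x - T x'‖ ≤ (√α)⁻¹ * ‖x - x'‖) {η : ℝ} (hη : 0 < η) (x x' y y' : Euc d) :
    ‖y - y'‖ ^ 2 ≤ (1 + η) / α * ‖x - x'‖ ^ 2 +
      (1 + η⁻¹) * 2 * (‖y - T x‖ ^ 2 + ‖y' - T x'‖ ^ 2) := by
  set A := ‖y - T x‖
  set B := ‖y' - T x'‖
  set D := (√α)⁻¹ * ‖x - x'‖ with hD
  have h1 : ‖y - y'‖ ≤ D + (A + B) := by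
    have e : y - y' = (T x - T x') + ((y - T x) - (y' - T x')) := by abel
    rw [e]
    exact (norm_add_le _ _).trans (add_le_add (hTL x x') (norm_sub_le _ _))
  have h2 : D ^ 2 = ‖x - x'‖ ^ 2 / α := by
    rw [hD, mul_pow, inv_pow, Real.sq_sqrt hα.le]; ring
  have h3 := pow_le_pow_left₀ (norm_nonneg _) h1 2
  have h4 : 2 * D * (A + B) ≤ η * D ^ 2 + η⁻¹ * (A + B) ^ 2 := by
    have h5 : η * D ^ 2 + η⁻¹ * (A + B) ^ 2 - 2 * D * (A + B) = η⁻¹ * (η * D - (A + B)) ^ 2 := by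
      field_simp
      ring
    have h6 : 0 ≤ η⁻¹ * (η * D - (A + B)) ^ 2 := by positivity
    linarith
  have h7 : (A + B) ^ 2 ≤ 2 * (A ^ 2 + B ^ 2) := by nlinarith [sq_nonneg (A - B)]
  calc ‖y - y'‖ ^ 2 ≤ (1 + η) * D ^ 2 + (1 + η⁻¹) * (A + B) ^ 2 := by nlinarith
    _ ≤ (1 + η) * D ^ 2 + (1 + η⁻¹) * (2 * (A ^ 2 + B ^ 2)) := by gcongr
    _ = _ := by rw [h2]; ring

lemma exists_approx_coupling [IsProbabilityMeasure μ] [IsProbabilityMeasure ν] (hV : QuadPot V)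
    (he : ∀ y, V (-y) = V y) (hV1 : ∫ y, Real.exp (-V y) = 1) (hα : 0 < α)
    (hconv : ModConvex α V) (hf : HasRelDensity V f μ) (hg : HasRelDensity V g ν)
    (hμR : ∀ᵐ y ∂μ, ‖y‖ ≤ R) (hνR : ∀ᵐ y ∂ν, ‖y‖ ≤ R) (hμ : μ.map (fun x => -x) = μ)
    {s ε η : ℝ} (hs : 0 < s) (hε : 0 < ε) (hη : 0 < η) :
    ∃ π : Measure (Euc d × Euc d), π.map Prod.fst = μ ∧ π.map Prod.snd = ν ∧
      ∫⁻ w, ENNReal.ofReal (‖w.1 - w.2‖ ^ 2) ∂π ≤ ENNReal.ofReal ((1 + η) / α *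
          (2 * (∫ y, Real.log (f y) ∂μ + ∫ y, Real.log (g y) ∂ν + ε)) +
        (1 + η⁻¹) * 2 * (8 / (s * √α) * (∫ y, Real.log (f y) ∂μ + ∫ y, Real.log (g y) ∂ν + ε +
          2 * 2 ^ d))) := by
  have hμ2 := integrable_norm_sq_of_ae_le hμR
  have hν2 := integrable_norm_sq_of_ae_le hνR
  obtain ⟨b, hb, hbV, hbε⟩ := exists_sinkhorn_potentials hV he hV1 hα hconv hs (μ + ν)
    (hμ2.add_measure hν2) hε
  have ha := hb.evenPot_sinkStep hV he s
  have hα' : 0 < √α := Real.sqrt_pos.2 hα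
  have hκ : 0 < s * √α := by positivity
  obtain ⟨T, hTL, hT⟩ := exists_argmin (hV.add_evenPot hb) hbV hκ hs.le
  rw [show s / (s * √α) = (√α)⁻¹ by field_simp] at hTL
  have m1 := lift_entropy_le hV he hb hs.le hf hμR
  have n1 := lift_entropy_le hV he hb hs.le hg hνR
  obtain ⟨im, m2⟩ := lift_sq_dist_le hV he hb hs.le hf hμR hbV (by positivity) hTL hT
  obtain ⟨jn, n2⟩ := lift_sq_dist_le hV he hb hs.le hg hνR hbV (by positivity) hTL hT
  set a := sinkStep s V b with hadef
  have hb' := ha.sinkStep_gaussPot s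
  have bμ : Integrable (fun y => b y - sinkStep s gaussPot a y) μ :=
    (hb.integrable hμ2).sub (hb'.integrable hμ2)
  have bν : Integrable (fun y => b y - sinkStep s gaussPot a y) ν :=
    (hb.integrable hν2).sub (hb'.integrable hν2)
  rw [integral_add_measure bμ bν] at hbε
  have hp := ha.posExpDecay_liftDensity hs.le hμR
  have hq := ha.posExpDecay_liftDensity hs.le hνR
  obtain ⟨ρ, hρ1, hρ2, hρ⟩ := exists_gaussian_coupling hp hq (ha.integral_liftDensity hs.le hμR)
    (ha.integral_liftDensity hs.le hνR) (ha.liftDensity_neg hμ)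
  have pm := ha.isProbabilityMeasure_liftMeasure (μ := μ) s
  have pn := ha.isProbabilityMeasure_liftMeasure (μ := ν) s
  have ir : Integrable (fun w : Euc d × Euc d => ‖w.1 - w.2‖ ^ 2) ρ := by
    refine integrable_of_map_sq (C := 2) (by fun_prop)
      (by rw [hρ1]; exact hp.integrable_norm_sq_densityMeasure)
      (by rw [hρ2]; exact hq.integrable_norm_sq_densityMeasure) fun w => ?_
    rw [abs_of_nonneg (by positivity)]
    have := pow_le_pow_left₀ (norm_nonneg _) (norm_sub_le w.1 w.2) 2
    nlinarith [sq_nonneg (‖w.1‖ - ‖w.2‖)]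
  rw [← ha.map_fst_liftMeasure hs.le hμR] at hρ1
  rw [← ha.map_fst_liftMeasure hs.le hνR] at hρ2
  have hρp : IsProbabilityMeasure ρ := by
    constructor
    rw [← preimage_univ (f := Prod.fst), ← Measure.map_apply measurable_fst MeasurableSet.univ,
      hρ1, Measure.map_apply measurable_fst MeasurableSet.univ, preimage_univ, measure_univ]
  obtain ⟨Γ, hΓ, hΓm, hΓn⟩ := exists_gluing hρ1 hρ2
  have i1 : Integrable (fun z => ‖z.1.1 - z.1.2‖ ^ 2) Γ :=
    Integrable.comp_measurable (g := fun w : Euc d × Euc d => ‖w.1 - w.2‖ ^ 2)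
      (by rwa [hΓ]) measurable_fst
  have i2 : Integrable (fun z => ‖z.2.1 - T z.1.1‖ ^ 2) Γ :=
    Integrable.comp_measurable (f := fun z : (Euc d × Euc d) × (Euc d × Euc d) => (z.1.1, z.2.1))
      (g := fun w : Euc d × Euc d => ‖w.2 - T w.1‖ ^ 2) (by rwa [hΓm]) (by fun_prop)
  have i3 : Integrable (fun z => ‖z.2.2 - T z.1.2‖ ^ 2) Γ :=
    Integrable.comp_measurable (f := fun z : (Euc d × Euc d) × (Euc d × Euc d) => (z.1.2, z.2.2))
      (g := fun w : Euc d × Euc d => ‖w.2 - T w.1‖ ^ 2) (by rwa [hΓn]) (by fun_prop)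
  have e1 : ∫ w, ‖w.1 - w.2‖ ^ 2 ∂ρ = ∫ z, ‖z.1.1 - z.1.2‖ ^ 2 ∂Γ := by
    rw [← hΓ, integral_map (by fun_prop) (by rw [hΓ]; exact ir.aestronglyMeasurable)]
  have e2 : ∫ w, ‖w.2 - T w.1‖ ^ 2 ∂liftMeasure s a μ = ∫ z, ‖z.2.1 - T z.1.1‖ ^ 2 ∂Γ := by
    rw [← hΓm, integral_map (by fun_prop) (by rw [hΓm]; exact im.aestronglyMeasurable)]
  have e3 : ∫ w, ‖w.2 - T w.1‖ ^ 2 ∂liftMeasure s a ν = ∫ z, ‖z.2.2 - T z.1.2‖ ^ 2 ∂Γ := by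
    rw [← hΓn, integral_map (by fun_prop) (by rw [hΓn]; exact jn.aestronglyMeasurable)]
  refine ⟨Γ.map Prod.snd, ?_, ?_, ?_⟩
  · rw [Measure.map_map measurable_fst measurable_snd, ← ha.map_snd_liftMeasure (μ := μ) s, ← hΓm,
      Measure.map_map measurable_snd (by fun_prop)]
    rfl
  · rw [Measure.map_map measurable_snd measurable_snd, ← ha.map_snd_liftMeasure (μ := ν) s, ← hΓn,
      Measure.map_map measurable_snd (by fun_prop)]
    rfl
  · rw [lintegral_map (by fun_prop) measurable_snd]
    set F : (Euc d × Euc d) × (Euc d × Euc d) → ℝ := fun z => (1 + η) / α * ‖z.1.1 - z.1.2‖ ^ 2 +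
      (1 + η⁻¹) * 2 * (‖z.2.1 - T z.1.1‖ ^ 2 + ‖z.2.2 - T z.1.2‖ ^ 2) with hF
    have i23 : Integrable (fun z => ‖z.2.1 - T z.1.1‖ ^ 2 + ‖z.2.2 - T z.1.2‖ ^ 2) Γ := i2.add i3
    have iF : Integrable F Γ := (i1.const_mul _).add (i23.const_mul _)
    calc ∫⁻ z, ENNReal.ofReal (‖z.2.1 - z.2.2‖ ^ 2) ∂Γ ≤ ∫⁻ z, ENNReal.ofReal (F z) ∂Γ :=
          lintegral_mono fun z => ENNReal.ofReal_le_ofReal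
            (norm_sub_sq_le_of_lipschitz hα hTL hη _ _ _ _)
      _ = ENNReal.ofReal (∫ z, F z ∂Γ) :=
          (ofReal_integral_eq_lintegral_ofReal iF (ae_of_all _ fun z => by positivity)).symm
      _ ≤ _ := by
          refine ENNReal.ofReal_le_ofReal ?_
          rw [hF, integral_add (i1.const_mul _) (i23.const_mul _), integral_const_mul,
            integral_const_mul, integral_add i2 i3, ← e1, ← e2, ← e3]
          have k1 : ∫ w, ‖w.2 - T w.1‖ ^ 2 ∂liftMeasure s a μ +
              ∫ w, ‖w.2 - T w.1‖ ^ 2 ∂liftMeasure s a ν ≤ 8 / (s * √α) *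
                (∫ y, Real.log (f y) ∂μ + ∫ y, Real.log (g y) ∂ν + ε + 2 * 2 ^ d) := by
            rw [div_mul_eq_mul_div, le_div_iff₀ hκ]
            linarith
          gcongr
          linarith

end LiftedCoupling

section Wasserstein

variable {E : Type*} [MeasurableSpace E] [NormedAddCommGroup E]

lemma W2sq_add_le [OpensMeasurableSpace E] (m₁ n₁ m₂ n₂ : Measure E) :
    W2sq (m₁ + m₂) (n₁ + n₂) ≤ W2sq m₁ n₁ + W2sq m₂ n₂ := by
  simp only [W2sq, ENNReal.iInf_add, ENNReal.add_iInf]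
  refine le_iInf₂ fun π₂ h₂ => le_iInf₂ fun π₁ h₁ => ?_
  refine iInf₂_le_of_le (π₁ + π₂) ⟨?_, ?_⟩ (lintegral_add_measure _ _ _).le
  · rw [Measure.map_add _ _ measurable_fst, h₁.1, h₂.1]
  · rw [Measure.map_add _ _ measurable_snd, h₁.2, h₂.2]

lemma W2sq_smul_le (m n : Measure E) {c : ℝ≥0∞} (h0 : c ≠ 0) (h1 : c ≠ ∞) :
    W2sq (c • m) (c • n) ≤ c * W2sq m n := by
  simp only [W2sq, ENNReal.mul_iInf_of_ne h0 h1]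
  refine le_iInf₂ fun π h => ?_
  refine iInf₂_le_of_le (c • π) ⟨?_, ?_⟩ ?_
  · rw [Measure.map_smul, h.1]
  · rw [Measure.map_smul, h.2]
  · rw [lintegral_smul_measure, smul_eq_mul]

lemma W2sq_le_moments [OpensMeasurableSpace E] (m n : Measure E) [IsFiniteMeasure m]
    [IsFiniteMeasure n] (h : m univ = n univ) :
    W2sq m n ≤ 2 * (∫⁻ x, (‖x‖₊ : ℝ≥0∞) ^ 2 ∂m + ∫⁻ x, (‖x‖₊ : ℝ≥0∞) ^ 2 ∂n) := by
  by_cases h0 : m univ = 0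
  · have hm : m = 0 := Measure.measure_univ_eq_zero.1 h0
    have hn : n = 0 := Measure.measure_univ_eq_zero.1 (h ▸ h0)
    refine (iInf₂_le (0 : Measure (E × E)) ⟨by simp [hm], by simp [hn]⟩).trans ?_
    simp
  have ht : m univ ≠ ∞ := measure_ne_top _ _
  have h1 : IsCoupling ((m univ)⁻¹ • m.prod n) m n := by
    constructor
    · rw [Measure.map_smul, Measure.map_fst_prod, ← h, smul_smul,
        ENNReal.inv_mul_cancel h0 ht, one_smul]
    · rw [Measure.map_smul, Measure.map_snd_prod, smul_smul,
        ENNReal.inv_mul_cancel h0 ht, one_smul]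
  have hmeas : Measurable fun x : E => (‖x‖₊ : ℝ≥0∞) ^ 2 := by fun_prop
  refine (iInf₂_le ((m univ)⁻¹ • m.prod n) h1).trans ?_
  calc ∫⁻ p, (‖p.1 - p.2‖₊ : ℝ≥0∞) ^ 2 ∂((m univ)⁻¹ • m.prod n)
      ≤ ∫⁻ p, 2 * ((‖p.1‖₊ : ℝ≥0∞) ^ 2 + (‖p.2‖₊ : ℝ≥0∞) ^ 2) ∂((m univ)⁻¹ • m.prod n) := by
        refine lintegral_mono fun p => ?_
        have h2 := pow_le_pow_left₀ (norm_nonneg _) (norm_sub_le p.1 p.2) 2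
        have h3 : ‖p.1 - p.2‖ ^ 2 ≤ 2 * (‖p.1‖ ^ 2 + ‖p.2‖ ^ 2) := by
          nlinarith [sq_nonneg (‖p.1‖ - ‖p.2‖)]
        have h4 : ‖p.1 - p.2‖₊ ^ 2 ≤ 2 * (‖p.1‖₊ ^ 2 + ‖p.2‖₊ ^ 2) := h3
        have h5 := ENNReal.coe_le_coe.2 h4
        push_cast at h5
        exact h5
    _ = 2 * (∫⁻ x, (‖x‖₊ : ℝ≥0∞) ^ 2 ∂m + ∫⁻ x, (‖x‖₊ : ℝ≥0∞) ^ 2 ∂n) := by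
        rw [lintegral_const_mul _ (by fun_prop), lintegral_add_left (by fun_prop)]
        congr 2
        · conv_rhs => rw [← h1.1, lintegral_map hmeas measurable_fst]
        · conv_rhs => rw [← h1.2, lintegral_map hmeas measurable_snd]

end Wasserstein

section Potential

variable {d : ℕ} {α R : ℝ} {V f g : Euc d → ℝ} {μ ν : Measure (Euc d)}

theorem W2sq_le_of_bounded [IsProbabilityMeasure μ] [IsProbabilityMeasure ν] (hV : QuadPot V)
    (he : ∀ y, V (-y) = V y) (hV1 : ∫ y, Real.exp (-V y) = 1) (hα : 0 < α)
    (hconv : ModConvex α V) (hf : HasRelDensity V f μ) (hg : HasRelDensity V g ν)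
    (hμR : ∀ᵐ y ∂μ, ‖y‖ ≤ R) (hνR : ∀ᵐ y ∂ν, ‖y‖ ≤ R) (hμ : μ.map (fun x => -x) = μ) :
    W2sq μ ν ≤ ENNReal.ofReal
      (2 / α * (∫ y, Real.log (f y) ∂μ + ∫ y, Real.log (g y) ∂ν)) := by
  set S := ∫ y, Real.log (f y) ∂μ + ∫ y, Real.log (g y) ∂ν
  have hα' : 0 < √α := Real.sqrt_pos.2 hα
  set G : ℝ → ℝ := fun t => (1 + t) / α * (2 * (S + t)) +
    (t ^ 2 + t) * 16 / √α * (S + t + 2 * 2 ^ d) with hG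
  have hGc : Continuous G := by fun_prop
  have hlim : Tendsto (fun t => ENNReal.ofReal (G t)) (𝓝[>] 0) (𝓝 (ENNReal.ofReal (G 0))) :=
    ((ENNReal.continuous_ofReal.comp hGc).tendsto 0).mono_left nhdsWithin_le_nhds
  rw [show G 0 = 2 / α * S by simp only [hG]; ring] at hlim
  refine ge_of_tendsto hlim ?_
  filter_upwards [self_mem_nhdsWithin] with t ht
  have ht : 0 < t := ht
  obtain ⟨π, h1, h2, h3⟩ := exists_approx_coupling hV he hV1 hα hconv hf hg hμR hνR hμ
    (s := (t ^ 2)⁻¹) (by positivity) ht ht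
  refine (iInf₂_le π ⟨h1, h2⟩).trans ((le_of_eq ?_).trans (h3.trans (le_of_eq ?_)))
  · refine lintegral_congr fun p => ?_
    rw [ENNReal.ofReal_pow (norm_nonneg _), ofReal_norm, enorm_eq_nnnorm]
  · congr 1
    simp only [hG]
    congr 1
    field_simp
    ring

lemma modConvex_of_hess (hV : ContDiff ℝ 2 V)
    (hHess : ∀ x v, α * ‖v‖ ^ 2 ≤ iteratedFDeriv ℝ 2 V x ![v, v]) : ModConvex α V := by
  intro x y a b ha hb hab
  set v := y - x with hv
  have hd1 : ∀ t : ℝ, HasDerivAt (fun t : ℝ => x + t • v) v t := fun t => by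
    simpa using ((hasDerivAt_id t).smul_const v).const_add x
  have hV1 : Differentiable ℝ V := hV.differentiable (by norm_num)
  have hV2 : Differentiable ℝ (fderiv ℝ V) :=
    (hV.fderiv_right (m := 1) (by norm_num)).differentiable (by norm_num)
  set φ : ℝ → ℝ := fun t => V (x + t • v) - α / 2 * ‖v‖ ^ 2 * t ^ 2 with hφ
  have hφ1 : ∀ t, HasDerivAt φ (fderiv ℝ V (x + t • v) v - α * ‖v‖ ^ 2 * t) t := fun t => by
    have h1 : HasDerivAt (fun t : ℝ => V (x + t • v)) (fderiv ℝ V (x + t • v) v) t :=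
      (hV1 (x + t • v)).hasFDerivAt.comp_hasDerivAt t (hd1 t)
    have h2 := (hasDerivAt_pow 2 t).const_mul (α / 2 * ‖v‖ ^ 2)
    refine (h1.sub h2).congr_deriv ?_
    norm_num
    ring
  have hφ2 : ∀ t, HasDerivAt (fun t : ℝ => fderiv ℝ V (x + t • v) v - α * ‖v‖ ^ 2 * t)
      (fderiv ℝ (fderiv ℝ V) (x + t • v) v v - α * ‖v‖ ^ 2) t := fun t => by
    have h1 : HasDerivAt (fun t : ℝ => fderiv ℝ V (x + t • v))
        (fderiv ℝ (fderiv ℝ V) (x + t • v) v) t :=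
      (hV2 (x + t • v)).hasFDerivAt.comp_hasDerivAt t (hd1 t)
    have h2 : HasDerivAt (fun t : ℝ => fderiv ℝ V (x + t • v) v)
        (fderiv ℝ (fderiv ℝ V) (x + t • v) v v) t :=
      (ContinuousLinearMap.apply ℝ ℝ v).hasFDerivAt.comp_hasDerivAt t h1
    have h3 := (hasDerivAt_id t).const_mul (α * ‖v‖ ^ 2)
    refine (h2.sub h3).congr_deriv ?_
    rw [mul_one]
  have hderiv : deriv φ = fun t => fderiv ℝ V (x + t • v) v - α * ‖v‖ ^ 2 * t :=
    funext fun t => (hφ1 t).deriv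
  have hconv : ConvexOn ℝ univ φ := by
    refine convexOn_univ_of_deriv2_nonneg (fun t => (hφ1 t).differentiableAt) ?_ fun t => ?_
    · rw [hderiv]
      exact fun t => (hφ2 t).differentiableAt
    · rw [Function.iterate_succ, Function.iterate_one, Function.comp_apply, hderiv, (hφ2 t).deriv]
      have := hHess (x + t • v) v
      rw [iteratedFDeriv_two_apply] at this
      simpa using this
  have h := hconv.2 (mem_univ 0) (mem_univ 1) ha.le hb.le hab
  have e1 : a • x + b • y = x + b • v := by
    rw [hv, smul_sub, show a = 1 - b by linarith, sub_smul, one_smul]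
    abel
  simp only [hφ, smul_eq_mul, mul_zero, zero_add, mul_one, zero_smul, add_zero, one_smul] at h
  rw [show x + v = y by rw [hv]; abel] at h
  rw [e1, norm_sub_rev, ← hv]
  obtain rfl : a = 1 - b := by linarith
  nlinarith

lemma even_of_symm {θ : Measure (Euc d)} (hV : Continuous V)
    (hθ : θ = volume.withDensity fun x => ENNReal.ofReal (Real.exp (-V x)))
    [IsProbabilityMeasure θ] (hθsymm : θ.map (fun x => -x) = θ) (x : Euc d) : V (-x) = V x := by
  have h1 : volume.withDensity (fun x => ENNReal.ofReal (Real.exp (-V (-x)))) =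
      volume.withDensity (fun x => ENNReal.ofReal (Real.exp (-V x))) := by
    rw [← hθ, ← hθsymm]
    refine Measure.ext_of_lintegral _ fun h hh => ?_
    rw [lintegral_map hh measurable_neg, hθ,
      lintegral_withDensity_eq_lintegral_mul _ (by fun_prop) hh,
      lintegral_withDensity_eq_lintegral_mul _ (by fun_prop) (by fun_prop),
      ← lintegral_neg_eq_self]
    simp
  rw [withDensity_eq_iff_of_sigmaFinite (by fun_prop) (by fun_prop)] at h1
  have h2 := congrFun (Continuous.ae_eq_iff_eq _ (ENNReal.continuous_ofReal.comp (by fun_prop))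
      (ENNReal.continuous_ofReal.comp (by fun_prop)) |>.1 h1) x
  simp only [Function.comp_apply] at h2
  rw [ENNReal.ofReal_eq_ofReal_iff (Real.exp_pos _).le (Real.exp_pos _).le, Real.exp_eq_exp] at h2
  linarith

lemma ModConvex.quadPot (hα : 0 < α) (hV : Continuous V) (he : ∀ y, V (-y) = V y)
    (hconv : ModConvex α V) : QuadPot V := by
  refine ⟨hV, α / 2, -V 0, by positivity, fun y => ?_⟩
  have h := hconv y (-y) (1 / 2) (1 / 2) (by norm_num) (by norm_num) (by norm_num)
  rw [smul_neg, add_neg_cancel, sub_neg_eq_add, ← two_smul ℝ y, norm_smul, he,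
    Real.norm_of_nonneg zero_le_two] at h
  nlinarith

lemma integral_exp_neg_eq_one {θ : Measure (Euc d)} (hV : Continuous V)
    (hθ : θ = volume.withDensity fun x => ENNReal.ofReal (Real.exp (-V x)))
    [IsProbabilityMeasure θ] : ∫ x, Real.exp (-V x) = 1 := by
  have h := measure_univ (μ := θ)
  rw [hθ, withDensity_apply _ MeasurableSet.univ, setLIntegral_univ] at h
  rw [integral_eq_lintegral_of_nonneg_ae (ae_of_all _ fun x => (Real.exp_pos _).le) (by fun_prop),
    h, ENNReal.toReal_one]

lemma hasRelDensity_rnDeriv {θ : Measure (Euc d)} (hV : Continuous V)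
    (hθ : θ = volume.withDensity fun x => ENNReal.ofReal (Real.exp (-V x)))
    [IsProbabilityMeasure θ] [IsProbabilityMeasure μ] (hac : μ ≪ θ)
    (hlog : Integrable (fun x => Real.log (μ.rnDeriv θ x).toReal) μ) :
    HasRelDensity V (fun x => (μ.rnDeriv θ x).toReal) μ := by
  have hm := Measure.measurable_rnDeriv μ θ
  refine ⟨by fun_prop, fun _ => ENNReal.toReal_nonneg, ?_, hlog⟩
  have h1 : θ.withDensity (fun x => ENNReal.ofReal (μ.rnDeriv θ x).toReal) = μ := by
    have := Measure.haveLebesgueDecomposition_of_sigmaFinite μ θ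
    refine (withDensity_congr_ae ?_).trans (Measure.withDensity_rnDeriv_eq μ θ hac)
    filter_upwards [Measure.rnDeriv_lt_top μ θ] with x hx
    rw [ENNReal.ofReal_toReal hx.ne]
  have h2 : ∀ x, ENNReal.ofReal ((μ.rnDeriv θ x).toReal * Real.exp (-V x)) =
      ENNReal.ofReal (Real.exp (-V x)) * ENNReal.ofReal (μ.rnDeriv θ x).toReal := fun x => by
    rw [mul_comm, ENNReal.ofReal_mul (Real.exp_pos _).le]
  simp only [h2]
  refine h1.symm.trans ?_
  generalize hq : (fun x => ENNReal.ofReal (μ.rnDeriv θ x).toReal) = q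
  have hqm : Measurable q := by rw [← hq]; fun_prop
  rw [hθ, ← withDensity_mul _ (by fun_prop) hqm, ← hq, hθ]
  rfl

end Potential

section Truncation

variable {d : ℕ} {α : ℝ} {V f g : Euc d → ℝ} {μ ν : Measure (Euc d)}

lemma HasRelDensity.ae_pos (hf : HasRelDensity V f μ) (hV : Continuous V) :
    ∀ᵐ y ∂μ, 0 < f y := by
  have hfm := hf.measurable
  have h1 : ∀ᵐ y ∂μ, ENNReal.ofReal (f y * Real.exp (-V y)) ≠ 0 := by
    rw [hf.eq, ae_withDensity_iff (by fun_prop)]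
    exact ae_of_all _ fun y hy => hy
  filter_upwards [h1] with y hy
  rcases (hf.nonneg y).eq_or_lt with h | h
  · simp [← h] at hy
  · exact h

lemma integral_cond (μ : Measure (Euc d)) (B : Set (Euc d)) (u : Euc d → ℝ) :
    ∫ y, u y ∂(ProbabilityTheory.cond μ B) = (μ.real B)⁻¹ * ∫ y in B, u y ∂μ := by
  rw [ProbabilityTheory.cond, integral_smul_measure, ENNReal.toReal_inv, smul_eq_mul]
  rfl

lemma HasRelDensity.ae_log_cond [IsFiniteMeasure μ] (hf : HasRelDensity V f μ)
    (hV : Continuous V) {B : Set (Euc d)} (hB : MeasurableSet B) (hμB : μ B ≠ 0) :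
    ∀ᵐ y ∂(ProbabilityTheory.cond μ B),
      Real.log ((μ.real B)⁻¹ * B.indicator f y) = Real.log (f y) - Real.log (μ.real B) := by
  have h0 : μ.real B ≠ 0 := (measureReal_ne_zero_iff (measure_ne_top _ _)).2 hμB
  have h1 : ∀ᵐ y ∂(ProbabilityTheory.cond μ B), 0 < f y :=
    ProbabilityTheory.cond_absolutelyContinuous.ae_le (hf.ae_pos hV)
  filter_upwards [h1, ProbabilityTheory.ae_cond_mem hB] with y hy hyB
  rw [indicator_of_mem hyB, Real.log_mul (inv_ne_zero h0) hy.ne', Real.log_inv]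
  ring

lemma HasRelDensity.cond [IsFiniteMeasure μ] (hf : HasRelDensity V f μ) (hV : Continuous V)
    {B : Set (Euc d)} (hB : MeasurableSet B) (hμB : μ B ≠ 0) :
    HasRelDensity V (fun y => (μ.real B)⁻¹ * B.indicator f y) (ProbabilityTheory.cond μ B) := by
  have hfm := hf.measurable
  have hp : IsProbabilityMeasure (ProbabilityTheory.cond μ B) :=
    ProbabilityTheory.cond_isProbabilityMeasure hμB
  refine ⟨(hfm.indicator hB).const_mul _, fun y => mul_nonneg (by positivity)
    (indicator_nonneg (fun y _ => hf.nonneg y) y), ?_, ?_⟩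
  · have h1 : ∀ y, ENNReal.ofReal ((μ.real B)⁻¹ * B.indicator f y * Real.exp (-V y)) =
        (μ B)⁻¹ * B.indicator (fun y => ENNReal.ofReal (f y * Real.exp (-V y))) y := fun y => by
      have h2 : (μ B)⁻¹ = ENNReal.ofReal (μ.real B)⁻¹ := by
        rw [measureReal_def, ← ENNReal.toReal_inv, ENNReal.ofReal_toReal (ENNReal.inv_ne_top.2 hμB)]
      by_cases hy : y ∈ B
      · rw [indicator_of_mem hy, indicator_of_mem hy, mul_assoc,
          ENNReal.ofReal_mul (by positivity), h2]
      · simp [hy]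
    simp only [h1]
    have h3 : Measurable fun y => ENNReal.ofReal (f y * Real.exp (-V y)) := by fun_prop
    have h4 := withDensity_smul (μ := (volume : Measure (Euc d))) (μ B)⁻¹ (h3.indicator hB)
    rw [withDensity_indicator hB, ← restrict_withDensity hB, ← hf.eq] at h4
    exact h4.symm
  · have h1 : Integrable (fun y => Real.log (f y)) (ProbabilityTheory.cond μ B) :=
      hf.integrable_log.restrict.smul_measure (ENNReal.inv_ne_top.2 hμB)
    have h2 : Integrable (fun y => Real.log (f y) - Real.log (μ.real B))
      (ProbabilityTheory.cond μ B) := h1.sub (integrable_const _)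
    exact h2.congr ((hf.ae_log_cond hV hB hμB).mono fun y hy => hy.symm)

lemma HasRelDensity.integral_log_cond [IsFiniteMeasure μ] (hf : HasRelDensity V f μ)
    (hV : Continuous V) {B : Set (Euc d)} (hB : MeasurableSet B) (hμB : μ B ≠ 0) :
    ∫ y, Real.log ((μ.real B)⁻¹ * B.indicator f y) ∂(ProbabilityTheory.cond μ B) =
      (μ.real B)⁻¹ * ∫ y in B, Real.log (f y) ∂μ - Real.log (μ.real B) := by
  have hp : IsProbabilityMeasure (ProbabilityTheory.cond μ B) :=
    ProbabilityTheory.cond_isProbabilityMeasure hμB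
  have h1 : Integrable (fun y => Real.log (f y)) (ProbabilityTheory.cond μ B) :=
    hf.integrable_log.restrict.smul_measure (ENNReal.inv_ne_top.2 hμB)
  rw [integral_congr_ae (hf.ae_log_cond hV hB hμB), integral_sub h1 (integrable_const _),
    integral_const, probReal_univ, one_smul, integral_cond]

lemma cond_map_neg (hμ : μ.map (fun x => -x) = μ) {B : Set (Euc d)} (hB : MeasurableSet B)
    (hBn : (fun x => -x) ⁻¹' B = B) :
    (ProbabilityTheory.cond μ B).map (fun x => -x) = ProbabilityTheory.cond μ B := by
  have h1 := Measure.restrict_map (μ := μ) (measurable_neg (G := Euc d)) hB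
  rw [show (Neg.neg : Euc d → Euc d) = fun x => -x from rfl, hμ, hBn] at h1
  rw [ProbabilityTheory.cond, Measure.map_smul, ← h1]

/-- Splitting off a multiple of a conditioned measure. -/
lemma exists_eq_smul_cond_add [IsFiniteMeasure μ] {B : Set (Euc d)} (hB : MeasurableSet B)
    {p : ℝ≥0∞} (hp : p ≤ μ B) :
    ∃ r : Measure (Euc d), μ = p • ProbabilityTheory.cond μ B + r ∧
      ∀ h : Euc d → ℝ≥0∞, ∫⁻ x, h x ∂r ≤
        (1 - p / μ B) * ∫⁻ x, h x ∂μ + ∫⁻ x in Bᶜ, h x ∂μ := by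
  refine ⟨(1 - p / μ B) • μ.restrict B + μ.restrict Bᶜ, ?_, fun h => ?_⟩
  · rw [ProbabilityTheory.cond, smul_smul, ← add_assoc, ← add_smul, ← div_eq_mul_inv,
      add_tsub_cancel_of_le (ENNReal.div_le_of_le_mul (by rwa [one_mul])), one_smul,
      Measure.restrict_add_restrict_compl hB]
  · rw [lintegral_add_measure, lintegral_smul_measure, smul_eq_mul]
    gcongr
    exact Measure.restrict_le_self

lemma W2sq_le_cond [IsProbabilityMeasure μ] [IsProbabilityMeasure ν] {B : Set (Euc d)}
    (hB : MeasurableSet B) (hμB : μ B ≠ 0) (hνB : ν B ≠ 0) :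
    W2sq μ ν ≤ W2sq (ProbabilityTheory.cond μ B) (ProbabilityTheory.cond ν B) +
      2 * (((1 - min (μ B) (ν B) / μ B) * ∫⁻ x, (‖x‖₊ : ℝ≥0∞) ^ 2 ∂μ +
          ∫⁻ x in Bᶜ, (‖x‖₊ : ℝ≥0∞) ^ 2 ∂μ) +
        ((1 - min (μ B) (ν B) / ν B) * ∫⁻ x, (‖x‖₊ : ℝ≥0∞) ^ 2 ∂ν +
          ∫⁻ x in Bᶜ, (‖x‖₊ : ℝ≥0∞) ^ 2 ∂ν)) := by
  set p := min (μ B) (ν B) with hp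
  have hp0 : p ≠ 0 := by
    rw [hp]
    exact (lt_min (pos_iff_ne_zero.2 hμB) (pos_iff_ne_zero.2 hνB)).ne'
  have hp1 : p ≤ 1 := (min_le_left _ _).trans prob_le_one
  have hpt : p ≠ ∞ := (hp1.trans_lt ENNReal.one_lt_top).ne
  obtain ⟨r, hr, hr'⟩ := exists_eq_smul_cond_add hB (min_le_left _ _ : p ≤ μ B)
  obtain ⟨t, ht, ht'⟩ := exists_eq_smul_cond_add hB (min_le_right _ _ : p ≤ ν B)
  have c1 : IsProbabilityMeasure (ProbabilityTheory.cond μ B) :=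
    ProbabilityTheory.cond_isProbabilityMeasure hμB
  have c2 : IsProbabilityMeasure (ProbabilityTheory.cond ν B) :=
    ProbabilityTheory.cond_isProbabilityMeasure hνB
  have f1 : IsFiniteMeasure r := isFiniteMeasure_of_le μ (by
    conv_rhs => rw [hr]
    exact Measure.le_add_left le_rfl)
  have f2 : IsFiniteMeasure t := isFiniteMeasure_of_le ν (by
    conv_rhs => rw [ht]
    exact Measure.le_add_left le_rfl)
  have m1 : p + r univ = 1 := by
    have := congrArg (fun m : Measure (Euc d) => m univ) hr
    simpa using this.symm
  have m2 : p + t univ = 1 := by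
    have := congrArg (fun m : Measure (Euc d) => m univ) ht
    simpa using this.symm
  have hrt : r univ = t univ := (ENNReal.add_right_inj hpt).1 (m1.trans m2.symm)
  calc W2sq μ ν =
        W2sq (p • ProbabilityTheory.cond μ B + r) (p • ProbabilityTheory.cond ν B + t) := by
        rw [← hr, ← ht]
    _ ≤ W2sq (p • ProbabilityTheory.cond μ B) (p • ProbabilityTheory.cond ν B) + W2sq r t :=
        W2sq_add_le _ _ _ _
    _ ≤ p * W2sq (ProbabilityTheory.cond μ B) (ProbabilityTheory.cond ν B) +
        2 * (∫⁻ x, (‖x‖₊ : ℝ≥0∞) ^ 2 ∂r + ∫⁻ x, (‖x‖₊ : ℝ≥0∞) ^ 2 ∂t) :=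
        add_le_add (W2sq_smul_le _ _ hp0 hpt) (W2sq_le_moments _ _ hrt)
    _ ≤ _ := by
        gcongr
        · exact mul_le_of_le_one_left' hp1
        · exact hr' _
        · exact ht' _

lemma tendsto_measure_closedBall (μ : Measure (Euc d)) [IsProbabilityMeasure μ] :
    Tendsto (fun n : ℕ => μ (Metric.closedBall 0 n)) atTop (𝓝 1) := by
  have h := tendsto_measure_iUnion_atTop (μ := μ)
    (s := fun n : ℕ => Metric.closedBall (0 : Euc d) n)
    (fun m n hmn => Metric.closedBall_subset_closedBall (by exact_mod_cast hmn))
  rwa [Metric.iUnion_closedBall_nat, measure_univ] at h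

lemma tendsto_remainder [IsProbabilityMeasure μ] (hμ2 : Integrable (fun x => ‖x‖ ^ 2) μ)
    {p : ℕ → ℝ≥0∞} (hp : Tendsto p atTop (𝓝 1)) :
    Tendsto (fun n : ℕ => (1 - p n / μ (Metric.closedBall 0 n)) *
        ∫⁻ x, (‖x‖₊ : ℝ≥0∞) ^ 2 ∂μ +
      ∫⁻ x in (Metric.closedBall 0 n)ᶜ, (‖x‖₊ : ℝ≥0∞) ^ 2 ∂μ) atTop (𝓝 0) := by
  have hfin : ∫⁻ x, (‖x‖₊ : ℝ≥0∞) ^ 2 ∂μ ≠ ∞ := by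
    have h := hμ2.lintegral_lt_top
    have e : ∀ x : Euc d, ENNReal.ofReal (‖x‖ ^ 2) = (‖x‖₊ : ℝ≥0∞) ^ 2 := fun x => by
      rw [ENNReal.ofReal_pow (norm_nonneg _), ofReal_norm, enorm_eq_nnnorm]
    simp only [e] at h
    exact h.ne
  have h1 := tendsto_measure_closedBall μ
  have h2 : Tendsto (fun n : ℕ => 1 - p n / μ (Metric.closedBall 0 n)) atTop (𝓝 0) := by
    have h3 := ENNReal.Tendsto.div hp (Or.inl one_ne_zero) h1 (Or.inl ENNReal.one_ne_top)
    have h4 := ENNReal.Tendsto.sub (tendsto_const_nhds (x := (1 : ℝ≥0∞))) h3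
      (Or.inl ENNReal.one_ne_top)
    simpa using h4
  have h3 : Tendsto (fun n : ℕ => μ (Metric.closedBall 0 n)ᶜ) atTop (𝓝 0) := by
    have h4 := ENNReal.Tendsto.sub (tendsto_const_nhds (x := (1 : ℝ≥0∞))) h1
      (Or.inl ENNReal.one_ne_top)
    simp only [prob_compl_eq_one_sub Metric.isClosed_closedBall.measurableSet]
    simpa using h4
  have h4 := tendsto_setLIntegral_zero hfin h3
  have h5 := ENNReal.Tendsto.mul_const h2 (Or.inr hfin)
  simpa using h5.add h4

lemma HasRelDensity.tendsto_entropy [IsProbabilityMeasure μ] (hf : HasRelDensity V f μ) :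
    Tendsto (fun n : ℕ => (μ.real (Metric.closedBall 0 n))⁻¹ *
        ∫ y in Metric.closedBall 0 n, Real.log (f y) ∂μ - Real.log (μ.real (Metric.closedBall 0 n)))
      atTop (𝓝 (∫ y, Real.log (f y) ∂μ)) := by
  have h1 : Tendsto (fun n : ℕ => μ.real (Metric.closedBall 0 n)) atTop (𝓝 1) :=
    (ENNReal.tendsto_toReal ENNReal.one_ne_top).comp (tendsto_measure_closedBall μ)
  have h2 := tendsto_setIntegral_of_monotone (μ := μ) (f := fun y => Real.log (f y))
    (s := fun n : ℕ => Metric.closedBall (0 : Euc d) n)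
    (fun n => Metric.isClosed_closedBall.measurableSet)
    (fun m n hmn => Metric.closedBall_subset_closedBall (by exact_mod_cast hmn))
    hf.integrable_log.integrableOn
  rw [Metric.iUnion_closedBall_nat, setIntegral_univ] at h2
  have h3 := ((h1.inv₀ one_ne_zero).mul h2).sub (h1.log one_ne_zero)
  simpa using h3

theorem W2sq_le_of_hasRelDensity [IsProbabilityMeasure μ] [IsProbabilityMeasure ν] (hV : QuadPot V)
    (he : ∀ y, V (-y) = V y) (hV1 : ∫ y, Real.exp (-V y) = 1) (hα : 0 < α)
    (hconv : ModConvex α V) (hf : HasRelDensity V f μ) (hg : HasRelDensity V g ν)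
    (hμ2 : Integrable (fun x => ‖x‖ ^ 2) μ) (hν2 : Integrable (fun x => ‖x‖ ^ 2) ν)
    (hμ : μ.map (fun x => -x) = μ) :
    W2sq μ ν ≤ ENNReal.ofReal
      (2 / α * (∫ y, Real.log (f y) ∂μ + ∫ y, Real.log (g y) ∂ν)) := by
  have t1 := tendsto_measure_closedBall μ
  have t2 := tendsto_measure_closedBall ν
  have tp : Tendsto (fun n : ℕ => min (μ (Metric.closedBall 0 n)) (ν (Metric.closedBall 0 n)))
      atTop (𝓝 1) := by simpa using t1.min t2
  have te := ENNReal.tendsto_ofReal ((hf.tendsto_entropy.add hg.tendsto_entropy).const_mul (2 / α))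
  have tr := ENNReal.Tendsto.const_mul (a := 2)
    ((tendsto_remainder hμ2 tp).add (tendsto_remainder hν2 tp)) (Or.inr ENNReal.ofNat_ne_top)
  have tt := te.add tr
  rw [add_zero, mul_zero, add_zero] at tt
  refine ge_of_tendsto tt ?_
  filter_upwards [t1.eventually_ne one_ne_zero, t2.eventually_ne one_ne_zero] with n hμn hνn
  have hB : MeasurableSet (Metric.closedBall (0 : Euc d) n) :=
    Metric.isClosed_closedBall.measurableSet
  refine (W2sq_le_cond hB hμn hνn).trans (add_le_add_left ?_ _)
  have c1 : IsProbabilityMeasure (ProbabilityTheory.cond μ (Metric.closedBall 0 n)) :=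
    ProbabilityTheory.cond_isProbabilityMeasure hμn
  have c2 : IsProbabilityMeasure (ProbabilityTheory.cond ν (Metric.closedBall 0 n)) :=
    ProbabilityTheory.cond_isProbabilityMeasure hνn
  rw [← hf.integral_log_cond hV.cont hB hμn, ← hg.integral_log_cond hV.cont hB hνn]
  refine W2sq_le_of_bounded (R := n) hV he hV1 hα hconv (hf.cond hV.cont hB hμn)
    (hg.cond hV.cont hB hνn) ?_ ?_ (cond_map_neg hμ hB ?_)
  · filter_upwards [ProbabilityTheory.ae_cond_mem hB] with y hy
    rwa [mem_closedBall_zero_iff] at hy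
  · filter_upwards [ProbabilityTheory.ae_cond_mem hB] with y hy
    rwa [mem_closedBall_zero_iff] at hy
  · ext y
    simp

end Truncation

end SymTalagrand

/-- **Symmetrized Talagrand inequality for uniformly log-concave symmetric measures**
(Theorem 1.5): if `θ = e^{-V} dx` is a symmetric probability measure with `V` smooth and
`Hess V ≥ α Id` for some `α > 0`, then for every symmetric probability measure `μ` and every
probability measure `ν` (with finite second moments),
`W₂(μ,ν)² ≤ (2/α)(Ent_θ(μ) + Ent_θ(ν))`. -/
theorem symmetrized_talagrand_log_concave (d : ℕ) (hd : 1 ≤ d) (α : ℝ) (hα : 0 < α)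
    (V : EuclideanSpace ℝ (Fin d) → ℝ) (hV : ContDiff ℝ (⊤ : ℕ∞) V)
    (hHess : ∀ x v, α * ‖v‖ ^ 2 ≤ iteratedFDeriv ℝ 2 V x ![v, v])
    (θ : Measure (EuclideanSpace ℝ (Fin d)))
    (hθ : θ = volume.withDensity fun x => ENNReal.ofReal (Real.exp (-V x)))
    [IsProbabilityMeasure θ] (hθsymm : θ.map (fun x => -x) = θ)
    (μ ν : Measure (EuclideanSpace ℝ (Fin d)))
    [IsProbabilityMeasure μ] [IsProbabilityMeasure ν]
    (hμsymm : μ.map (fun x => -x) = μ)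
    (hμ2 : Integrable (fun x => ‖x‖ ^ 2) μ) (hν2 : Integrable (fun x => ‖x‖ ^ 2) ν) :
    W2sq μ ν ≤ ENNReal.ofReal (2 / α) * (relEnt μ θ + relEnt ν θ) := by
  have h2 : 0 < 2 / α := by positivity
  have h2' : ENNReal.ofReal (2 / α) ≠ 0 := (ENNReal.ofReal_pos.2 h2).ne'
  unfold relEnt
  split_ifs with h1 h3 h3
  · have hc := hV.continuous
    have hconv := SymTalagrand.modConvex_of_hess (contDiff_infty.1 hV 2) hHess
    have he := SymTalagrand.even_of_symm hc hθ hθsymm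
    have key := SymTalagrand.W2sq_le_of_hasRelDensity (hconv.quadPot hα hc he) he
      (SymTalagrand.integral_exp_neg_eq_one hc hθ) hα hconv
      (SymTalagrand.hasRelDensity_rnDeriv hc hθ h1.1 h1.2)
      (SymTalagrand.hasRelDensity_rnDeriv hc hθ h3.1 h3.2) hμ2 hν2 hμsymm
    refine key.trans ?_
    rw [ENNReal.ofReal_mul h2.le]
    gcongr
    exact ENNReal.ofReal_add_le
  · simp [ENNReal.mul_top h2']
  · simp [ENNReal.mul_top h2']
  · simp [ENNReal.mul_top h2']
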